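/- Let (R,𝔪) be an analytically unramified Cohen–Macaulay local ring of dimension 2 and let I, J be 𝔪-primary ideals. Then ē₂(IJ) ≥ max{ ē₂(I), ē₂(J) }. -/

import Mathlib

/-!
Write `X = Iᵏ` and `Y = Jᵏ` for a suitable `k` (this changes no `ē₂`) and study the two-variable
function `F(r, s) = λ(R / closure(X^r Y^s))`. By hypothesis it is eventually polynomial on both axes
and on the diagonal, and the constant terms there are `ē₂(I)`, `ē₂(J)` and `ē₂(IJ)`.

*Upper bounds.* For suitable `k` there are joint reductions of `(X, X)`, `(Y, Y)` and `(X, Y)`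
(`exists_jr`: graded prime avoidance in the Rees algebra, whose fiber cone has no chain of three
relevant primes by `no_chain`). Since `R` is Cohen–Macaulay they are regular pairs
(`regPair_of_big`), and the Koszul identity `koszul`, together with the cancellation property
`JR.cancel` of integral closures, bounds the second differences of `F` from above by their colengths
`A`, `B`, `C` (`upper`).

*Lower bound on the diagonal.* For ordinary powers the inequality goes the other way
(`diag_lower`): the second difference of `λ(R / X^n Y^n)` is eventually at least `A + B + 2 * C`.
Analytic unramifiedness gives `closure((XY)^(n + n0)) ⊆ (XY)^n` for a fixed `n0`
(`RegPair.intCl_le`), so the leading coefficient of `F` on the diagonal is at least `A + B + 2 * C`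
as well (`diag_growth`).

*Conclusion.* The two bounds make twice the defect of `F` from a quadratic polynomial a function
with nonnegative second differences, constant far out on the axes and linear far out on the diagonal;
convexity then gives `ē₂(I) ≤ ē₂(IJ)` (`zlemma`), and the other inequality follows by symmetry.

*The uniform comparison* `RegPair.intCl_le` is a case of a theorem of Rees. Here it is proved for an
ideal `Q = (a, b)` generated by a regular pair through the filtration `FI Q n` of elements of
asymptotic `Q`-adic order at least `n`, which contains the integral closures of the powers of any
ideal having `Q` as a reduction. Its graded pieces have linearly bounded lengths (`FI_growth`); by
`ge_succ` and the abstract statement `TFilt.stable` about filtrations of linear growth, it is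
generated by `Q` in large degrees up to deeper terms (`FI_gen`). Because the completion of `R` is
reduced, the deeper terms are eventually contained in any power of the maximal ideal (`FI_le_pow`),
whence `FI Q (n + n0) ⊆ Q ^ n`.
-/


/-! ### Basic notions: integral closure of ideals, analytic unramifiedness,
lengths, regular sequences, Cohen-Macaulayness, primary ideals -/

/-- `x` is integral over the ideal `I`: it satisfies an equation
`x^n + a₁ x^(n-1) + ⋯ + aₙ = 0` with `aᵢ ∈ Iⁱ`. -/
def IsIntegralOverIdeal {R : Type*} [CommRing R] (I : Ideal R) (x : R) : Prop :=
  ∃ n : ℕ, 0 < n ∧ ∃ c : ℕ → R, (∀ i, c i ∈ I ^ i) ∧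
    x ^ n + ∑ i ∈ Finset.range n, c (i + 1) * x ^ (n - (i + 1)) = 0

/-- The integral closure `\overline{I}` of an ideal `I` (the set of elements integral
over `I` is an ideal, so it coincides with the ideal it spans). -/
noncomputable def intCl {R : Type*} [CommRing R] (I : Ideal R) : Ideal R :=
  Ideal.span {x | IsIntegralOverIdeal I x}

/-- A local ring is analytically unramified if its `𝔪`-adic completion is reduced. -/
def AnalyticallyUnramified (R : Type*) [CommRing R] [IsLocalRing R] : Prop :=
  IsReduced (AdicCompletion (IsLocalRing.maximalIdeal R) R)

/-- The length `λ(M)` of a module, as the Krull dimension of its lattice of submodules. -/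
noncomputable def moduleLength (R M : Type*) [Ring R] [AddCommGroup M] [Module R M] :
    WithBot ℕ∞ :=
  Order.krullDim (Submodule R M)

/-- `f` is a regular sequence on the module `M`. -/
def IsRegularSeq {R : Type*} (M : Type*) [CommRing R] [AddCommGroup M] [Module R M]
    {n : ℕ} (f : Fin n → R) : Prop :=
  (∀ i : Fin n, ∀ z : M,
      f i • z ∈ Ideal.span (f '' {j | j < i}) • (⊤ : Submodule R M) →
      z ∈ Ideal.span (f '' {j | j < i}) • (⊤ : Submodule R M)) ∧
  Ideal.span (Set.range f) • (⊤ : Submodule R M) ≠ ⊤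

/-- A local ring is Cohen-Macaulay if there is a regular sequence of length
`dim` inside the maximal ideal. -/
def IsCMLocalRing (A : Type*) [CommRing A] [IsLocalRing A] : Prop :=
  ∃ (n : ℕ) (f : Fin n → A), (∀ i, f i ∈ IsLocalRing.maximalIdeal A) ∧
    IsRegularSeq A f ∧ (n : WithBot ℕ∞) = ringKrullDim A

/-- A commutative ring is Cohen-Macaulay if all its localizations at primes are. -/
def IsCMRing (A : Type*) [CommRing A] : Prop :=
  ∀ (P : Ideal A) (_ : P.IsPrime), IsCMLocalRing (Localization.AtPrime P)

/-- An ideal of a local ring is `𝔪`-primary if its radical is the maximal ideal. -/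
def IsMPrimary {R : Type*} [CommRing R] [IsLocalRing R] (I : Ideal R) : Prop :=
  I.radical = IsLocalRing.maximalIdeal R

/-- `I^r J^s` for `r s : ℤ`, with the convention that nonpositive powers give the
unit ideal. -/
noncomputable def IJ {R : Type*} [CommRing R] (I J : Ideal R) (r s : ℤ) : Ideal R :=
  I ^ r.toNat * J ^ s.toNat

/-- `\overline{I^r J^s}` for `r s : ℤ`. -/
noncomputable def IJbar {R : Type*} [CommRing R] (I J : Ideal R) (r s : ℤ) : Ideal R :=
  intCl (IJ I J r s)

/-- A good joint reduction `(a,b)` of the filtration `{\overline{I^r J^s}}`: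
a joint reduction such that moreover `(a) ∩ \overline{I^r J^s} = a ⬝ \overline{I^{r-1} J^s}`
for all `s` and all `r > 0`, and symmetrically for `b`. -/
def IsGoodJointReduction {R : Type*} [CommRing R] (I J : Ideal R) (a b : R) : Prop :=
  a ∈ I ∧ b ∈ J ∧
  (∃ N : ℤ, ∀ r s : ℤ, N ≤ r → N ≤ s →
      IJbar I J r s =
        Ideal.span {a} * IJbar I J (r - 1) s ⊔ Ideal.span {b} * IJbar I J r (s - 1)) ∧
  (∀ r s : ℤ, 0 < r →
      Ideal.span {a} ⊓ IJbar I J r s = Ideal.span {a} * IJbar I J (r - 1) s) ∧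
  (∀ r s : ℤ, 0 < s →
      Ideal.span {b} ⊓ IJbar I J r s = Ideal.span {b} * IJbar I J r (s - 1))

/-! ### Integer functions with bounded second differences -/

namespace E2

theorem quad_growth (x y z : ℤ) (N : ℕ) (h : ∀ n : ℕ, N ≤ n → x * (n:ℤ)^2 ≤ y * n + z) : x ≤ 0 := by
  by_contra hx
  push Not at hx
  have hM : (0:ℤ) ≤ (|y| + |z| + 1) := by positivity
  set n : ℕ := N + (|y| + |z| + 1).toNat with hn
  have hn' : (n:ℤ) = N + (|y| + |z| + 1) := by simp only [hn]; push_cast; rw [Int.toNat_of_nonneg hM]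
  have h1 := h n (by omega)
  have h2 : (n:ℤ)^2 ≤ x * (n:ℤ)^2 := by nlinarith [sq_nonneg (n:ℤ)]
  have hy := le_abs_self y
  have hz := le_abs_self z
  have h3 : (n:ℤ) ≥ |y| + |z| + 1 := by have : (0:ℤ) ≤ N := by positivity
                                        linarith
  have hyn := abs_nonneg y
  have hzn := abs_nonneg z
  nlinarith

/-- The numerical core. Let `F` have second differences at most `A`, `B`, `C` in the directions
`rr`, `ss`, `rs`, be eventually a quadratic polynomial on each axis and on the diagonal, and let the
leading coefficient `E` on the diagonal be at least `A + B + 2 * C`. Then all leading coefficients are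
extremal, the defect of `F` from a quadratic polynomial is a convex function, and convexity forces the
constant term `cI` on the first axis to be at most the constant term `c` on the diagonal. -/
theorem zlemma (F : ℕ → ℕ → ℤ) (A B C A' B' E α β ε cI cJ c : ℤ) (N : ℕ)
    (h1 : ∀ r s, F (r+2) s + F r s ≤ 2 * F (r+1) s + A)
    (h2 : ∀ r s, F r (s+2) + F r s ≤ 2 * F r (s+1) + B)
    (h3 : ∀ r s, F (r+1) (s+1) + F r s ≤ F (r+1) s + F r (s+1) + C)
    (hA : ∀ n : ℕ, N ≤ n → 2 * F n 0 = A' * n^2 + α * n + 2 * cI)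
    (hB : ∀ n : ℕ, N ≤ n → 2 * F 0 n = B' * n^2 + β * n + 2 * cJ)
    (hE : ∀ n : ℕ, N ≤ n → 2 * F n n = E * n^2 + ε * n + 2 * c)
    (hEge : A + B + 2 * C ≤ E) : cI ≤ c := by
  have hA' : A' ≤ A := by
    have a0 := hA N le_rfl
    have a1 := hA (N+1) (by omega)
    have a2 := hA (N+2) (by omega)
    have := h1 N 0
    push_cast at *
    linarith
  have hB' : B' ≤ B := by
    have a0 := hB N le_rfl
    have a1 := hB (N+1) (by omega)
    have a2 := hB (N+2) (by omega)
    have := h2 0 N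
    push_cast at *
    linarith
  have hstep : ∀ s r : ℕ, F (r+1) s + F r 0 ≤ F (r+1) 0 + F r s + C * s := by
    intro s r
    induction s with
    | zero => simp [add_comm]
    | succ s ih => have := h3 r s; push_cast; linarith
  have hrect : ∀ r s : ℕ, F r s + F 0 0 ≤ F r 0 + F 0 s + C * (r * s) := by
    intro r s
    induction r with
    | zero => simp; linarith
    | succ r ih => have := hstep s r; push_cast; linarith
  have hE' : E ≤ A' + B' + 2 * C := by
    have := quad_growth (E - (A' + B' + 2*C)) (α + β - ε) (2*cI+2*cJ-2*c - 2 * F 0 0) N (by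
      intro n hn
      have := hrect n n
      have a := hA n hn
      have b := hB n hn
      have e := hE n hn
      nlinarith)
    linarith
  obtain rfl : A' = A := by linarith
  obtain rfl : B' = B := by linarith
  obtain rfl : E = A' + B' + 2 * C := by linarith
  clear hE' hEge hA' hB' hrect hstep
  -- `D` is twice the defect of `F` from a quadratic polynomial: it has nonnegative second
  -- differences, is eventually constant on the axes and eventually linear on the diagonal.
  obtain ⟨D, hD⟩ : ∃ D : ℕ → ℕ → ℤ, ∀ r s : ℕ, D r s = A' * r^2 + 2 * C * r * s + B' * s^2 + α * r + β * s
      + 2 * c - 2 * F r s := ⟨_, fun _ _ => rfl⟩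
  have d1 : ∀ r s, 0 ≤ D (r+2) s + D r s - 2 * D (r+1) s := by
    intro r s; have := h1 r s; simp only [hD]; push_cast; linarith
  have d2 : ∀ r s, 0 ≤ D r (s+2) + D r s - 2 * D r (s+1) := by
    intro r s; have := h2 r s; simp only [hD]; push_cast; linarith
  have d3 : ∀ r s, 0 ≤ D (r+1) (s+1) + D r s - D (r+1) s - D r (s+1) := by
    intro r s; have := h3 r s; simp only [hD]; push_cast; linarith
  have DA : ∀ n, N ≤ n → D n 0 = 2 * (c - cI) := by
    intro n hn; have := hA n hn; simp only [hD]; push_cast; linarith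
  have DB : ∀ n, N ≤ n → D 0 n = 2 * (c - cJ) := by
    intro n hn; have := hB n hn; simp only [hD]; push_cast; linarith
  have DE : ∀ n : ℕ, N ≤ n → D n n = (α + β - ε) * n := by
    intro n hn; have := hE n hn; simp only [hD]; linarith
  clear hD h1 h2 h3 hA hB hE
  set γ := α + β - ε
  -- both first differences of `D` are monotone in both variables
  have mss : ∀ r, Monotone (fun s => D r (s+1) - D r s) := fun r =>
    monotone_nat_of_le_succ fun s => by have := d2 r s; linarith
  have msr : ∀ s, Monotone (fun r => D r (s+1) - D r s) := fun s =>
    monotone_nat_of_le_succ fun r => by have := d3 r s; linarith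
  have mrr : ∀ s, Monotone (fun r => D (r+1) s - D r s) := fun s =>
    monotone_nat_of_le_succ fun r => by have := d1 r s; linarith
  have mrs : ∀ r, Monotone (fun s => D (r+1) s - D r s) := fun r =>
    monotone_nat_of_le_succ fun s => by have := d3 r s; linarith
  have pos1 : ∀ r s, N ≤ s → 0 ≤ D r (s+1) - D r s := by
    intro r s hs
    have := msr s (Nat.zero_le r)
    simp only [DB s hs, DB (s+1) (by omega)] at this
    linarith
  have pos2 : ∀ r s, N ≤ r → 0 ≤ D (r+1) s - D r s := by
    intro r s hr
    have := mrs r (Nat.zero_le s)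
    simp only [DA r hr, DA (r+1) (by omega)] at this
    linarith
  have hdiag : ∀ n, N ≤ n → γ = (D n (n+1) - D n n) + (D (n+1) (n+1) - D n (n+1)) := by
    intro n hn
    have a := DE n hn
    have b := DE (n+1) (by omega)
    push_cast at b
    linarith
  have hγ : 0 ≤ γ := by
    have := hdiag N le_rfl
    have := pos1 N N le_rfl
    have := pos2 N (N+1) le_rfl
    linarith
  -- Otherwise the last step from `(n, n + 1)` to `(n + 1, n + 1)` is at most `γ - 1` for all large `n`,
  -- and so is every step along that row; then `γ * (n + 1) ≤ D 0 (n + 1) + (n + 1) * (γ - 1)`,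
  -- which is absurd for large `n` because `D 0 (n + 1)` is constant.
  have key : ∀ n, N ≤ n → D n (n+1) - D n n ≤ 0 := by
    intro n0 hn0
    by_contra hcon
    push Not at hcon
    have h : ∀ n, n0 ≤ n → (n:ℤ) + 1 ≤ 2 * (c - cJ) := by
      intro n hn
      have e1 := msr n hn
      have e2 := mss n0 hn
      simp only at e1 e2
      have e3 := hdiag n (by omega)
      have e4 : D (n+1) (n+1) - D n (n+1) ≤ γ - 1 := by linarith
      have e5 : ∀ r, r ≤ n + 1 → D r (n+1) ≤ D 0 (n+1) + r * (γ - 1) := by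
        intro r hr
        induction r with
        | zero => simp
        | succ r ih =>
          have := ih (by omega)
          have := mrr (n+1) (show r ≤ n by omega)
          simp only at this
          push_cast
          linarith
      have e6 := e5 (n+1) le_rfl
      rw [DE (n+1) (by omega), DB (n+1) (by omega)] at e6
      push_cast at e6
      linarith
    have := h (n0 + (2 * (c - cJ)).toNat) (by omega)
    push_cast at this
    have := Int.self_le_toNat (2 * (c - cJ))
    have : (0:ℤ) ≤ n0 := by positivity
    linarith
  have hle : ∀ s, s ≤ N → D N s ≤ D N 0 := by
    intro s hs
    induction s with
    | zero => exact le_rfl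
    | succ s ih =>
      have := ih (by omega)
      have := mss N (show s ≤ N by omega)
      simp only at this
      have := key N le_rfl
      linarith
  have := hle N le_rfl
  rw [DE N le_rfl, DA N le_rfl] at this
  have : 0 ≤ γ * N := by positivity
  linarith

end E2

/-! ### Relative lengths, ideals of finite colength, and regular pairs -/

namespace E2
open Submodule

section len
variable {R : Type*} [CommRing R] {M M₂ : Type*} [AddCommGroup M] [Module R M]
  [AddCommGroup M₂] [Module R M₂]

/-- The length of `L / K` for submodules `K ≤ L` (of `L / (K ∩ L)` in general). -/
noncomputable def rl (K L : Submodule R M) : ℕ∞ := Module.length R (L ⧸ K.submoduleOf L)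

theorem rl_le_of_map {K L : Submodule R M} {K' L' : Submodule R M₂} (f : M →ₗ[R] M₂)
    (h1 : ∀ x ∈ L, f x ∈ L') (h2 : ∀ x ∈ K, f x ∈ K') (h3 : ∀ x ∈ L, f x ∈ K' → x ∈ K) :
    rl K L ≤ rl K' L' := by
  refine Module.length_le_of_injective
    (Submodule.mapQ (K.submoduleOf L) (K'.submoduleOf L') (f.restrict h1) ?_) ?_
  · rintro ⟨x, hx⟩ hxK
    exact h2 x hxK
  · rw [← LinearMap.ker_eq_bot]
    rw [Submodule.ker_mapQ]
    rw [eq_bot_iff]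
    rintro _ ⟨⟨x, hx⟩, hxK, rfl⟩
    simp only [Submodule.mem_bot]
    rw [Submodule.mkQ_apply, Submodule.Quotient.mk_eq_zero]
    exact h3 x hx hxK

theorem rl_ge_of_map {K L : Submodule R M} {K' L' : Submodule R M₂} (f : M →ₗ[R] M₂)
    (h1 : ∀ x ∈ L, f x ∈ L') (h2 : ∀ x ∈ K, f x ∈ K')
    (h3 : ∀ y ∈ L', ∃ x ∈ L, y - f x ∈ K') :
    rl K' L' ≤ rl K L := by
  refine Module.length_le_of_surjective
    (Submodule.mapQ (K.submoduleOf L) (K'.submoduleOf L') (f.restrict h1) ?_) ?_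
  · rintro ⟨x, hx⟩ hxK
    exact h2 x hxK
  · intro y
    obtain ⟨⟨y, hy⟩, rfl⟩ := Submodule.Quotient.mk_surjective _ y
    obtain ⟨x, hx, hxy⟩ := h3 y hy
    refine ⟨Submodule.Quotient.mk ⟨x, hx⟩, ?_⟩
    rw [Submodule.mapQ_apply, eq_comm, Submodule.Quotient.eq]
    exact hxy

theorem rl_add {K L N : Submodule R M} (hKL : K ≤ L) (hLN : L ≤ N) :
    rl K N = rl K L + rl L N := by
  refine Module.length_eq_add_of_exact
    (Submodule.mapQ (K.submoduleOf L) (K.submoduleOf N) (Submodule.inclusion hLN) ?_)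
    (Submodule.mapQ (K.submoduleOf N) (L.submoduleOf N) LinearMap.id ?_) ?_ ?_ ?_
  · rintro ⟨x, hx⟩ hxK
    exact hxK
  · rintro ⟨x, hx⟩ hxK
    exact hKL hxK
  · rw [← LinearMap.ker_eq_bot, Submodule.ker_mapQ, eq_bot_iff]
    rintro _ ⟨⟨x, hx⟩, hxK, rfl⟩
    rw [Submodule.mem_bot, Submodule.mkQ_apply, Submodule.Quotient.mk_eq_zero]
    exact hxK
  · intro y
    obtain ⟨y, rfl⟩ := Submodule.Quotient.mk_surjective _ y
    exact ⟨Submodule.Quotient.mk y, by simp⟩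
  · intro y
    obtain ⟨⟨y, hy⟩, rfl⟩ := Submodule.Quotient.mk_surjective _ y
    rw [Submodule.mapQ_apply, Submodule.Quotient.mk_eq_zero]
    constructor
    · intro h
      exact ⟨Submodule.Quotient.mk ⟨y, h⟩, rfl⟩
    · rintro ⟨x, hx⟩
      obtain ⟨⟨x, hx'⟩, rfl⟩ := Submodule.Quotient.mk_surjective _ x
      rw [Submodule.mapQ_apply, Submodule.Quotient.eq] at hx
      have h1 : x - y ∈ K := hx
      have h2 := L.sub_mem hx' (hKL h1)
      have h3 : x - (x - y) = y := by abel
      rw [h3] at h2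
      exact h2

theorem rl_top (K : Submodule R M) : rl K ⊤ = Module.length R (M ⧸ K) := by
  refine LinearEquiv.length_eq (Submodule.Quotient.equiv _ _ Submodule.topEquiv ?_)
  ext x
  simp [Submodule.submoduleOf]

theorem rl_bot (L : Submodule R M) : rl ⊥ L = Module.length R L := by
  refine LinearEquiv.length_eq (Submodule.quotEquivOfEqBot _ ?_)
  ext x
  simp [Submodule.submoduleOf]

theorem rl_eq_zero_iff {K L : Submodule R M} : rl K L = 0 ↔ L ≤ K := by
  rw [rl, Module.length_eq_zero_iff, Submodule.Quotient.subsingleton_iff,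
    Submodule.submoduleOf_eq_top]

theorem rl_self (K : Submodule R M) : rl K K = 0 := rl_eq_zero_iff.2 le_rfl

theorem rl_mono_right {K L L' : Submodule R M} (hLL : L ≤ L') : rl K L ≤ rl K L' :=
  rl_le_of_map LinearMap.id (fun x hx => hLL hx) (fun x hx => hx) (fun x _ hx => hx)

theorem rl_anti_left {K K' L : Submodule R M} (hKK : K ≤ K') : rl K' L ≤ rl K L :=
  rl_ge_of_map LinearMap.id (fun x hx => hx) (fun x hx => hKK hx)
    (fun y hy => ⟨y, hy, by simp⟩)

theorem rl_sup (K L : Submodule R M) : rl (K ⊓ L) L = rl K (K ⊔ L) := by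
  apply le_antisymm
  · exact rl_le_of_map LinearMap.id (fun x hx => (le_sup_right : L ≤ K ⊔ L) hx) (fun x hx => hx.1)
      (fun x hx hx' => ⟨hx', hx⟩)
  · refine rl_ge_of_map LinearMap.id (fun x hx => (le_sup_right : L ≤ K ⊔ L) hx) (fun x hx => hx.1) ?_
    intro y hy
    obtain ⟨k, hk, l, hl, rfl⟩ := Submodule.mem_sup.1 hy
    exact ⟨l, hl, by simpa using hk⟩

/-- The colength `λ(R/K)` of an ideal. -/
noncomputable def len (K : Ideal R) : ℕ∞ := Module.length R (R ⧸ K)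

theorem len_eq_rl (K : Ideal R) : len K = rl K ⊤ := (rl_top K).symm

theorem len_anti {K L : Ideal R} (h : K ≤ L) : len L ≤ len K := by
  rw [len_eq_rl, len_eq_rl]; exact rl_anti_left h

theorem len_add {K L : Ideal R} (h : K ≤ L) : len K = rl K L + len L := by
  rw [len_eq_rl, len_eq_rl]; exact rl_add h le_top

end len

section big
variable {R : Type*} [CommRing R] [IsLocalRing R]
open IsLocalRing

/-- `K` contains a power of the maximal ideal. -/
def Big (K : Ideal R) : Prop := ∃ n : ℕ, maximalIdeal R ^ n ≤ K

theorem Big.mono {K L : Ideal R} (hK : Big K) (h : K ≤ L) : Big L :=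
  hK.imp fun _ hn => hn.trans h

theorem Big.mul {K L : Ideal R} (hK : Big K) (hL : Big L) : Big (K * L) := by
  obtain ⟨n, hn⟩ := hK
  obtain ⟨m, hm⟩ := hL
  exact ⟨n + m, by rw [pow_add]; exact Ideal.mul_mono hn hm⟩

theorem Big.inf {K L : Ideal R} (hK : Big K) (hL : Big L) : Big (K ⊓ L) :=
  (hK.mul hL).mono Ideal.mul_le_inf

theorem big_top : Big (⊤ : Ideal R) := ⟨0, le_top⟩

theorem Big.pow {K : Ideal R} (hK : Big K) (n : ℕ) : Big (K ^ n) := by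
  induction n with
  | zero => simpa using big_top
  | succ n ih => rw [pow_succ]; exact ih.mul hK

theorem Big.pow_le [IsNoetherianRing R] {K L : Ideal R} (hK : Big K) (hL : L ≤ maximalIdeal R) :
    ∃ n : ℕ, L ^ n ≤ K := by
  obtain ⟨n, hn⟩ := hK
  exact ⟨n, (Ideal.pow_right_mono hL n).trans hn⟩

theorem big_of_radical [IsNoetherianRing R] {K : Ideal R} (h : maximalIdeal R ≤ K.radical) : Big K := by
  obtain ⟨n, hn⟩ := K.exists_radical_pow_le_of_fg (IsNoetherian.noetherian _)
  exact ⟨n, (Ideal.pow_right_mono h n).trans hn⟩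

theorem Big.artinian [IsNoetherianRing R] {K : Ideal R} (hK : Big K) : IsArtinianRing (R ⧸ K) := by
  obtain ⟨n, hn⟩ := hK
  rw [isArtinianRing_iff_krullDimLE_zero]
  refine Ring.krullDimLE_zero_iff.2 fun P hP => ?_
  have hP' : (P.comap (Ideal.Quotient.mk K)).IsPrime := Ideal.comap_isPrime _ _
  have h1 : maximalIdeal R ≤ P.comap (Ideal.Quotient.mk K) := by
    apply hP'.le_of_pow_le (n := n)
    refine hn.trans ?_
    intro x hx
    rw [Ideal.mem_comap, Ideal.Quotient.eq_zero_iff_mem.2 hx]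
    exact P.zero_mem
  have h2 : P.comap (Ideal.Quotient.mk K) = maximalIdeal R :=
    le_antisymm (le_maximalIdeal hP'.ne_top) h1
  have : (P.comap (Ideal.Quotient.mk K)).IsMaximal := h2 ▸ maximalIdeal.isMaximal R
  rw [← Ideal.map_comap_of_surjective _ (Ideal.Quotient.mk_surjective (I := K)) P]
  exact Ideal.IsMaximal.map_of_surjective_of_ker_le Ideal.Quotient.mk_surjective (by
    rw [Ideal.mk_ker]; intro x hx
    rw [Ideal.mem_comap, Ideal.Quotient.eq_zero_iff_mem.2 hx]
    exact P.zero_mem)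

theorem Big.isArtinian [IsNoetherianRing R] {K : Ideal R} (hK : Big K) : IsArtinian R (R ⧸ K) := by
  have := hK.artinian
  exact (isArtinian_of_surjective_algebraMap (R := R ⧸ K) (S := R) (M := R ⧸ K)
    Ideal.Quotient.mk_surjective)

theorem Big.len_ne_top [IsNoetherianRing R] {K : Ideal R} (hK : Big K) : len K ≠ ⊤ := by
  have := hK.isArtinian
  exact Module.length_ne_top

end big

section regpair
variable {R : Type*} [CommRing R]

/-- `a, b` are nonzerodivisors and all syzygies of `(a, b)` are multiples of `(b, -a)`. -/
structure RegPair (a b : R) : Prop where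
  syz : ∀ x y : R, a * x + b * y = 0 → ∃ z, x = b * z ∧ y = -(a * z)
  nzl : ∀ x, a * x = 0 → x = 0
  nzr : ∀ x, b * x = 0 → x = 0

theorem RegPair.symm {a b : R} (h : RegPair a b) : RegPair b a where
  syz x y hxy := by
    obtain ⟨z, hz1, hz2⟩ := h.syz y x (by linear_combination hxy)
    exact ⟨-z, by rw [hz2]; ring, by rw [hz1]; ring⟩
  nzl := h.nzr
  nzr := h.nzl

/-- Length identity of the Koszul complex: `0 → R/Ks → R/K1 ⊕ R/K2 → (a, b)/(a K1 + b K2) → 0`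
is exact, with maps `z ↦ (b z, -a z)` and `(x, y) ↦ a x + b y`. -/
theorem koszul {a b : R} (h : RegPair a b) (K1 K2 Ks : Ideal R)
    (hKs : ∀ z, z ∈ Ks ↔ b * z ∈ K1 ∧ a * z ∈ K2) :
    len (Ideal.span {a} * K1 ⊔ Ideal.span {b} * K2) + len Ks =
      len K1 + len K2 + len (Ideal.span {a, b}) := by
  set W := Ideal.span {a} * K1 ⊔ Ideal.span {b} * K2 with hW
  have memW : ∀ x, x ∈ W ↔ ∃ k1 ∈ K1, ∃ k2 ∈ K2, a * k1 + b * k2 = x := by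
    intro x
    rw [hW, Submodule.mem_sup]
    simp only [Ideal.mem_span_singleton_mul]
    constructor
    · rintro ⟨_, ⟨k1, hk1, rfl⟩, _, ⟨k2, hk2, rfl⟩, rfl⟩
      exact ⟨k1, hk1, k2, hk2, rfl⟩
    · rintro ⟨k1, hk1, k2, hk2, rfl⟩
      exact ⟨_, ⟨k1, hk1, rfl⟩, _, ⟨k2, hk2, rfl⟩, rfl⟩
  -- the linear map `(x, y) ↦ a x + b y`
  let g : R × R →ₗ[R] R := (LinearMap.lsmul R R a).coprod (LinearMap.lsmul R R b)
  let f : R →ₗ[R] R × R := (LinearMap.lsmul R R b).prod (-(LinearMap.lsmul R R a))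
  let P : Submodule R (R × R) := Submodule.prod (R := R) (M := R) (M' := R) K1 K2
  let S : Submodule R (R × R) := P ⊔ LinearMap.range f
  have hPlen : rl P ⊤ = len K1 + len K2 := by
    rw [rl_top, len, len, ← Module.length_prod]
    let q : (R × R) →ₗ[R] (R ⧸ K1) × (R ⧸ K2) := (Submodule.mkQ K1).prodMap (Submodule.mkQ K2)
    have hq : Function.Surjective q :=
      Function.Surjective.prodMap (Submodule.mkQ_surjective _) (Submodule.mkQ_surjective _)
    have hker : P = LinearMap.ker q := by
      ext ⟨x, y⟩
      rw [LinearMap.mem_ker, Submodule.mem_prod]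
      simp only [q, LinearMap.prodMap_apply, Prod.mk_eq_zero]
      rw [Submodule.mkQ_apply, Submodule.mkQ_apply, Submodule.Quotient.mk_eq_zero,
        Submodule.Quotient.mk_eq_zero]
    exact LinearEquiv.length_eq ((Submodule.quotEquivOfEq _ _ hker).trans
      (q.quotKerEquivOfSurjective hq))
  have e1 : rl P ⊤ = rl P S + rl S ⊤ := rl_add le_sup_left le_top
  have e2 : rl P S = len Ks := by
    rw [len_eq_rl]
    apply le_antisymm
    · refine rl_ge_of_map f (fun x _ => (le_sup_right : _ ≤ S) ⟨x, rfl⟩) ?_ ?_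
      · intro x hx
        obtain ⟨h1, h2⟩ := (hKs x).1 hx
        exact ⟨h1, by simpa [f] using h2⟩
      · intro y hy
        obtain ⟨p, hp, _, ⟨x, rfl⟩, rfl⟩ := Submodule.mem_sup.1 hy
        exact ⟨x, trivial, by simpa using hp⟩
    · refine rl_le_of_map f (fun x _ => (le_sup_right : _ ≤ S) ⟨x, rfl⟩) ?_ ?_
      · intro x hx
        obtain ⟨h1, h2⟩ := (hKs x).1 hx
        exact ⟨h1, by simpa [f] using h2⟩
      · rintro x - ⟨h1, h2⟩
        exact (hKs x).2 ⟨h1, by simpa [f] using h2⟩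
  have hgS : ∀ x ∈ S, g x ∈ W := by
    intro x hx
    obtain ⟨⟨p, q⟩, ⟨hp, hq⟩, _, ⟨x, rfl⟩, rfl⟩ := Submodule.mem_sup.1 hx
    refine (memW _).2 ⟨p, hp, q, hq, ?_⟩
    simp [g, f]; ring
  have hgab : ∀ x, g x ∈ Ideal.span {a, b} := by
    rintro ⟨x, y⟩
    rw [Ideal.mem_span_pair]
    exact ⟨x, y, by simp [g]; ring⟩
  have hWab : W ≤ Ideal.span {a, b} := by
    intro x hx
    obtain ⟨k1, _, k2, _, rfl⟩ := (memW x).1 hx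
    rw [Ideal.mem_span_pair]
    exact ⟨k1, k2, by ring⟩
  have e3 : rl S ⊤ = rl W (Ideal.span {a, b}) := by
    apply le_antisymm
    · refine rl_le_of_map g (fun x _ => hgab x) hgS ?_
      rintro ⟨x, y⟩ - hxy
      obtain ⟨k1, hk1, k2, hk2, hk⟩ := (memW _).1 hxy
      obtain ⟨z, hz1, hz2⟩ := h.syz (x - k1) (y - k2) (by
        simp [g] at hk; linear_combination -hk)
      refine Submodule.mem_sup.2 ⟨(k1, k2), ⟨hk1, hk2⟩, f z, ⟨z, rfl⟩, ?_⟩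
      rw [Prod.ext_iff]
      simp only [f, LinearMap.prod_apply, Function.prod, LinearMap.lsmul_apply, smul_eq_mul,
        LinearMap.neg_apply, Prod.mk_add_mk]
      exact ⟨by linear_combination -hz1, by linear_combination -hz2⟩
    · refine rl_ge_of_map g (fun x _ => hgab x) hgS ?_
      intro y hy
      obtain ⟨p, q, hpq⟩ := Ideal.mem_span_pair.1 hy
      refine ⟨(p, q), trivial, ?_⟩
      have : y - g (p, q) = 0 := by simp [g]; linear_combination -hpq
      rw [this]; exact W.zero_mem
  have e4 := len_add hWab
  rw [e4, ← hPlen, e1, e2, e3]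
  ring

end regpair

section mk
variable {R : Type*} [CommRing R]

/-- `u` is a nonzerodivisor and `v` is a nonzerodivisor modulo `u`. -/
def WReg (u v : R) : Prop := (∀ x, u * x = 0 → x = 0) ∧ ∀ x y, v * x = u * y → ∃ z, x = u * z

theorem WReg.pow {u v : R} (h : WReg u v) (n : ℕ) : WReg (u ^ n) (v ^ n) := by
  have h1 : ∀ m x, u ^ m * x = 0 → x = 0 := by
    intro m
    induction m with
    | zero => intro x hx; simpa using hx
    | succ m ih => intro x hx; exact ih x (h.1 _ (by rw [← hx]; ring))
  have h2 : ∀ m x y, v * x = u ^ m * y → ∃ z, x = u ^ m * z := by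
    intro m
    induction m with
    | zero => intro x y _; exact ⟨x, by simp⟩
    | succ m ih =>
      intro x y hxy
      obtain ⟨z, rfl⟩ := h.2 x (u ^ m * y) (by rw [hxy]; ring)
      obtain ⟨z', rfl⟩ := ih z y (by
        have := h.1 (v * z - u ^ m * y) (by linear_combination hxy)
        linear_combination this)
      exact ⟨z', by ring⟩
  refine ⟨h1 n, ?_⟩
  have h3 : ∀ k x y, v ^ k * x = u ^ n * y → ∃ z, x = u ^ n * z := by
    intro k
    induction k with
    | zero => intro x y hxy; exact ⟨y, by simpa using hxy⟩
    | succ k ih =>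
      intro x y hxy
      obtain ⟨z, hz⟩ := ih (v * x) y (by rw [← hxy]; ring)
      exact h2 n x z hz
  exact h3 n

/-- In a local ring with a regular sequence `f, g` of length two, any two elements that generate an
ideal of finite colength form a regular pair: powers of `f` and `g` lie in `(a, b)`, so a syzygy of
`(a, b)` can be solved by Cramer elimination. -/
theorem regPair_of_big [IsLocalRing R] [IsNoetherianRing R] {f g : R} (hfg : WReg f g)
    (hf : f ∈ IsLocalRing.maximalIdeal R) (hg : g ∈ IsLocalRing.maximalIdeal R)
    {a b : R} (ha : a ∈ IsLocalRing.maximalIdeal R) (hb : b ∈ IsLocalRing.maximalIdeal R)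
    (h : Big (Ideal.span {a, b})) : RegPair a b := by
  obtain ⟨n, hn⟩ := h
  obtain ⟨α, β, hu⟩ := Ideal.mem_span_pair.1 (hn (Ideal.pow_mem_pow hf n))
  obtain ⟨γ, δ, hv⟩ := Ideal.mem_span_pair.1 (hn (Ideal.pow_mem_pow hg n))
  have hreg := hfg.pow n
  set u := f ^ n
  set v := g ^ n
  have syz : ∀ x y : R, a * x + b * y = 0 → ∃ z, x = b * z ∧ y = -(a * z) := by
    intro x y hxy
    obtain ⟨z, hz⟩ := hreg.2 (-α * y + β * x) (-γ * y + δ * x) (by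
      rw [← hu, ← hv]
      linear_combination (β * γ - α * δ) * hxy)
    refine ⟨z, ?_, ?_⟩
    · have := hreg.1 (x - b * z) (by
        linear_combination (b) * hz - x * hu + α * hxy)
      linear_combination this
    · have := hreg.1 (y + a * z) (by
        linear_combination (-a) * hz - y * hu + β * hxy)
      linear_combination this
  have nz : ∀ a b : R, b ∈ IsLocalRing.maximalIdeal R →
      (∀ x y : R, a * x + b * y = 0 → ∃ z, x = b * z ∧ y = -(a * z)) → ∀ x, a * x = 0 → x = 0 := by
    intro a b hb syz x hx
    have h1 : ∀ k : ℕ, ∀ x, a * x = 0 → x ∈ IsLocalRing.maximalIdeal R ^ k := by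
      intro k
      induction k with
      | zero => intro x _; simp
      | succ k ih =>
        intro x hx
        obtain ⟨z, rfl, hz⟩ := syz x 0 (by linear_combination hx)
        rw [pow_succ']
        exact Ideal.mul_mem_mul hb (ih z (by linear_combination hz))
    have h2 : x ∈ (⨅ k : ℕ, IsLocalRing.maximalIdeal R ^ k) := by
      rw [Ideal.mem_iInf]; exact fun k => h1 k x hx
    rw [Ideal.iInf_pow_eq_bot_of_isLocalRing _ Ideal.IsPrime.ne_top'] at h2
    simpa using h2
  refine ⟨syz, nz a b hb syz, nz b a ha ?_⟩
  intro x y hxy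
  obtain ⟨z, hz1, hz2⟩ := syz y x (by linear_combination hxy)
  exact ⟨-z, by rw [hz2]; ring, by rw [hz1]; ring⟩

end mk
end E2

/-! ### Integral closure and joint reductions -/

namespace E2
open IsLocalRing

section ic
variable {R : Type*} [CommRing R]

/-- The determinant trick: `z N ⊆ M N` for a faithful finitely generated `N` gives integrality over `M`. -/
theorem isIntegralOverIdeal_of_smul [Nontrivial R] {M N : Ideal R} (hN : N.FG) (hfaith : ∀ x : R, (∀ y ∈ N, x * y = 0) → x = 0)
    {z : R} (h : ∀ y ∈ N, z * y ∈ M * N) : IsIntegralOverIdeal M z := by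
  have hfin : Module.Finite R N := Module.Finite.iff_fg.2 hN
  let f : Module.End R N := LinearMap.lsmul R N z
  have hrange : LinearMap.range f ≤ M • (⊤ : Submodule R N) := by
    rintro _ ⟨⟨y, hy⟩, rfl⟩
    have h1 := h y hy
    have h2 : (M • (⊤ : Submodule R N)).map N.subtype = M * N := by
      rw [Submodule.map_smul'', Submodule.map_top, Submodule.range_subtype, smul_eq_mul]
    rw [← h2] at h1
    obtain ⟨w, hw, hw2⟩ := h1
    have : w = f ⟨y, hy⟩ := Subtype.ext hw2
    exact this ▸ hw
  obtain ⟨p, hp, -, hc, h0⟩ :=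
    LinearMap.exists_monic_and_natDegree_eq_and_coeff_mem_pow_and_aeval_eq_zero R f M hrange
  have hz : p.eval z = 0 := by
    apply hfaith
    intro y hy
    have h1 : (Polynomial.aeval f p) ⟨y, hy⟩ = 0 := by rw [h0]; rfl
    have h2 : f = algebraMap R (Module.End R N) z := by ext; rfl
    rw [h2, Polynomial.aeval_algebraMap_apply] at h1
    have h3 := congrArg Subtype.val h1
    simpa using h3
  have hpos : 0 < p.natDegree := by
    rw [Nat.pos_iff_ne_zero]
    intro h0
    rw [Polynomial.eq_one_of_monic_natDegree_zero hp h0] at hz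
    simp at hz
  refine ⟨p.natDegree, hpos, fun i => if i ≤ p.natDegree then p.coeff (p.natDegree - i) else 0, ?_, ?_⟩
  · intro i
    dsimp only
    split_ifs with hi
    · have := hc (p.natDegree - i)
      rwa [Nat.sub_sub_self hi] at this
    · exact zero_mem _
  · rw [Polynomial.eval_eq_sum_range, Finset.sum_range_succ, hp.coeff_natDegree, one_mul] at hz
    rw [add_comm] at hz
    refine Eq.trans ?_ hz
    congr 1
    rw [← Finset.sum_range_reflect]
    apply Finset.sum_congr rfl
    intro i hi
    rw [Finset.mem_range] at hi
    dsimp only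
    rw [if_pos (by omega)]
    congr 2 <;> congr 1 <;> omega

theorem integral_exists_pow {M : Ideal R} {z : R} (h : IsIntegralOverIdeal M z) :
    ∃ m : ℕ, ∀ y ∈ (M ⊔ Ideal.span {z}) ^ m, z * y ∈ M * (M ⊔ Ideal.span {z}) ^ m := by
  obtain ⟨n, hn, c, hc, heq⟩ := h
  obtain ⟨m, rfl⟩ : ∃ m, n = m + 1 := ⟨n - 1, by omega⟩
  set Z := Ideal.span {z}
  have h1 : ∀ k, (M ⊔ Z) ^ (k + 1) ≤ M * (M ⊔ Z) ^ k ⊔ Z ^ (k + 1) := by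
    intro k
    induction k with
    | zero => simp
    | succ k ih =>
      calc (M ⊔ Z) ^ (k + 1 + 1) = M * (M ⊔ Z) ^ (k+1) ⊔ Z * (M ⊔ Z) ^ (k+1) := by
            rw [pow_succ' _ (k+1), Ideal.sup_mul]
        _ ≤ M * (M ⊔ Z) ^ (k+1) ⊔ Z * (M * (M ⊔ Z) ^ k ⊔ Z ^ (k + 1)) :=
            sup_le_sup_left (Ideal.mul_mono_right ih) _
        _ ≤ _ := by
            rw [Ideal.mul_sup]
            refine sup_le le_sup_left (sup_le ?_ ?_)
            · refine le_sup_of_le_left ?_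
              rw [mul_left_comm, pow_succ' _ k]
              exact Ideal.mul_mono_right (Ideal.mul_mono_left le_sup_right)
            · rw [← pow_succ']; exact le_sup_right
  have h2 : z ^ (m+1) ∈ M * (M ⊔ Z) ^ m := by
    have : z ^ (m+1) = -∑ i ∈ Finset.range (m+1), c (i + 1) * z ^ (m+1 - (i + 1)) := by
      linear_combination heq
    rw [this]
    refine neg_mem (sum_mem fun i hi => ?_)
    rw [Finset.mem_range] at hi
    have h3 : M * (M ^ i * Z ^ (m - i)) ≤ M * (M ⊔ Z) ^ m := by
      refine Ideal.mul_mono_right ?_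
      calc M ^ i * Z ^ (m - i) ≤ (M ⊔ Z) ^ i * (M ⊔ Z) ^ (m - i) :=
            Ideal.mul_mono (Ideal.pow_right_mono le_sup_left _) (Ideal.pow_right_mono le_sup_right _)
        _ = _ := by rw [← pow_add]; congr 1; omega
    apply h3
    rw [← mul_assoc, ← pow_succ', show m + 1 - (i + 1) = m - i by omega]
    exact Ideal.mul_mem_mul (hc _) (Ideal.pow_mem_pow (Ideal.mem_span_singleton_self z) _)
  have h3 : (M ⊔ Z) ^ (m + 1) ≤ M * (M ⊔ Z) ^ m := by
    refine (h1 m).trans (sup_le le_rfl ?_)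
    rw [Ideal.span_singleton_pow, Ideal.span_singleton_le_iff_mem]
    exact h2
  refine ⟨m, fun y hy => h3 ?_⟩
  rw [pow_succ']
  exact Ideal.mul_mem_mul ((le_sup_right : Z ≤ M ⊔ Z) (Ideal.mem_span_singleton_self z)) hy

theorem smul_pow_mem {M N : Ideal R} {z : R} (h : ∀ y ∈ N, z * y ∈ M * N) (j : ℕ) :
    ∀ y ∈ N, z ^ j * y ∈ M ^ j * N := by
  have h' : Ideal.span {z} * N ≤ M * N := by
    rw [Ideal.span_singleton_mul_le_iff]; exact h
  have : Ideal.span {z} ^ j * N ≤ M ^ j * N := by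
    induction j with
    | zero => simp
    | succ j ih =>
      calc Ideal.span {z} ^ (j+1) * N = Ideal.span {z} ^ j * (Ideal.span {z} * N) := by ring
        _ ≤ Ideal.span {z} ^ j * (M * N) := Ideal.mul_mono_right h'
        _ = M * (Ideal.span {z} ^ j * N) := by ring
        _ ≤ M * (M ^ j * N) := Ideal.mul_mono_right ih
        _ = _ := by ring
  rw [Ideal.span_singleton_pow, Ideal.span_singleton_mul_le_iff] at this
  exact this

/-- If `z` is integral over `M` then high powers of `z` are in powers of `M`, up to a constant shift. -/
theorem integral_pow_mem {M : Ideal R} {z : R} (h : IsIntegralOverIdeal M z) :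
    ∃ m : ℕ, ∀ j, z ^ (j + m) ∈ M ^ j := by
  obtain ⟨m, hm⟩ := integral_exists_pow h
  refine ⟨m, fun j => ?_⟩
  have := smul_pow_mem hm j (z ^ m) (Ideal.pow_mem_pow
    ((le_sup_right : Ideal.span {z} ≤ _) (Ideal.mem_span_singleton_self z)) m)
  rw [← pow_add] at this
  exact Ideal.mul_le_left this

theorem le_intCl (M : Ideal R) : M ≤ intCl M := by
  intro x hx
  refine Ideal.subset_span ⟨1, one_pos, fun i => if i = 1 then -x else 0, fun i => ?_, ?_⟩
  · dsimp only
    split_ifs with h2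
    · rw [h2, pow_one]; exact neg_mem hx
    · exact zero_mem _
  · simp

variable [IsLocalRing R] [IsNoetherianRing R]

theorem Big.faithful {f : R} (hf : f ∈ maximalIdeal R) (hf0 : ∀ x, f * x = 0 → x = 0) {N : Ideal R}
    (hN : Big N) (x : R) (hx : ∀ y ∈ N, x * y = 0) : x = 0 := by
  obtain ⟨n, hn⟩ := hN
  have h1 : ∀ m x, f ^ m * x = 0 → x = 0 := by
    intro m
    induction m with
    | zero => intro x hx; simpa using hx
    | succ m ih => intro x hx; exact ih x (hf0 _ (by rw [← hx]; ring))
  exact h1 n x (by rw [mul_comm]; exact hx _ (hn (Ideal.pow_mem_pow hf n)))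

/-- The determinant-trick description of the integral closure. -/
theorem mem_intCl_iff {f : R} (hf : f ∈ maximalIdeal R) (hf0 : ∀ x, f * x = 0 → x = 0) {M : Ideal R}
    (hM : Big M) {z : R} :
    z ∈ intCl M ↔ ∃ N : Ideal R, Big N ∧ ∀ y ∈ N, z * y ∈ M * N := by
  constructor
  · intro hz
    refine Submodule.span_induction (p := fun z _ => ∃ N : Ideal R, Big N ∧ ∀ y ∈ N, z * y ∈ M * N)
      ?_ ?_ ?_ ?_ hz
    · intro x hx
      obtain ⟨m, hm⟩ := integral_exists_pow hx
      exact ⟨_, (hM.mono le_sup_left).pow m, hm⟩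
    · exact ⟨⊤, big_top, fun y _ => by rw [zero_mul]; exact zero_mem _⟩
    · rintro x y - - ⟨N1, hN1, h1⟩ ⟨N2, hN2, h2⟩
      refine ⟨N1 * N2, hN1.mul hN2, fun w hw => ?_⟩
      rw [add_mul]
      refine add_mem ?_ ?_
      · have : Ideal.span {x} * N1 ≤ M * N1 := by
          rw [Ideal.span_singleton_mul_le_iff]; exact h1
        have h3 : Ideal.span {x} * (N1 * N2) ≤ M * (N1 * N2) := by
          rw [← mul_assoc, ← mul_assoc]; exact Ideal.mul_mono_left this
        exact h3 (Ideal.mul_mem_mul (Ideal.mem_span_singleton_self x) hw)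
      · have : Ideal.span {y} * N2 ≤ M * N2 := by
          rw [Ideal.span_singleton_mul_le_iff]; exact h2
        have h3 : Ideal.span {y} * (N1 * N2) ≤ M * (N1 * N2) := by
          rw [mul_comm N1, ← mul_assoc, ← mul_assoc]; exact Ideal.mul_mono_left this
        exact h3 (Ideal.mul_mem_mul (Ideal.mem_span_singleton_self y) hw)
    · rintro a x - ⟨N, hN, h⟩
      refine ⟨N, hN, fun y hy => ?_⟩
      rw [smul_eq_mul, mul_assoc]
      exact Ideal.mul_mem_left _ _ (h y hy)
  · rintro ⟨N, hN, h⟩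
    exact Ideal.subset_span (isIntegralOverIdeal_of_smul (IsNoetherian.noetherian N)
      (hN.faithful hf hf0) h)

theorem isIntegral_of_mem_intCl {f : R} (hf : f ∈ maximalIdeal R) (hf0 : ∀ x, f * x = 0 → x = 0) {M : Ideal R}
    (hM : Big M) {z : R} (hz : z ∈ intCl M) : IsIntegralOverIdeal M z := by
  obtain ⟨N, hN, h⟩ := (mem_intCl_iff hf hf0 hM).1 hz
  exact isIntegralOverIdeal_of_smul (IsNoetherian.noetherian N) (hN.faithful hf hf0) h

theorem mul_mem_intCl {f : R} (hf : f ∈ maximalIdeal R) (hf0 : ∀ x, f * x = 0 → x = 0) {I M : Ideal R}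
    (hI : Big I) (hM : Big M) {a z : R} (ha : a ∈ I) (hz : z ∈ intCl M) : a * z ∈ intCl (I * M) := by
  rw [mem_intCl_iff hf hf0 hM] at hz
  rw [mem_intCl_iff hf hf0 (hI.mul hM)]
  obtain ⟨N, hN, h⟩ := hz
  refine ⟨N, hN, fun y hy => ?_⟩
  rw [mul_assoc, mul_assoc]
  exact Ideal.mul_mem_mul ha (h y hy)

/-- `(a, b)` is a joint reduction of `(I, J)`: `a ∈ I`, `b ∈ J`, and `aJ + bI` is a reduction of `IJ`,
encoded as `(IJ)^(m+1) ⊆ (aJ + bI)(IJ)^m` for some `m`. -/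
def JR (I J : Ideal R) (a b : R) : Prop :=
  a ∈ I ∧ b ∈ J ∧ ∃ m : ℕ, (I * J) ^ (m + 1) ≤ (Ideal.span {a} * J ⊔ Ideal.span {b} * I) * (I * J) ^ m

/-- Cancellation along a joint reduction: `z` is integral over `M` as soon as `a z` is integral over
`I M` and `b z` is integral over `J M`. -/
theorem JR.cancel {f : R} (hf : f ∈ maximalIdeal R) (hf0 : ∀ x, f * x = 0 → x = 0)
    {I J M : Ideal R} (hI : Big I) (hJ : Big J) (hM : Big M) {a b : R} (h : JR I J a b) {z : R}
    (h1 : a * z ∈ intCl (I * M)) (h2 : b * z ∈ intCl (J * M)) : z ∈ intCl M := by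
  obtain ⟨-, -, m, hm⟩ := h
  rw [mem_intCl_iff hf hf0 (hI.mul hM)] at h1
  rw [mem_intCl_iff hf hf0 (hJ.mul hM)] at h2
  rw [mem_intCl_iff hf hf0 hM]
  obtain ⟨N1, hN1, h1⟩ := h1
  obtain ⟨N2, hN2, h2⟩ := h2
  refine ⟨(I * J) ^ (m+1) * (N1 * N2), ((hI.mul hJ).pow _).mul (hN1.mul hN2), ?_⟩
  rw [← Ideal.span_singleton_mul_le_iff] at h1 h2 ⊢
  rw [← Ideal.span_singleton_mul_span_singleton] at h1 h2
  set Z := Ideal.span {z}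
  set A := Ideal.span {a}
  set B := Ideal.span {b}
  calc Z * ((I * J) ^ (m+1) * (N1 * N2)) ≤ Z * (((A * J ⊔ B * I) * (I * J) ^ m) * (N1 * N2)) :=
        Ideal.mul_mono_right (Ideal.mul_mono_left hm)
    _ = (A * Z * N1) * (J * (I * J) ^ m * N2) ⊔ (B * Z * N2) * (I * (I * J)^ m * N1) := by
        simp only [Ideal.sup_mul, Ideal.mul_sup]
        congr 1 <;> ring
    _ ≤ (I * M * N1) * (J * (I * J) ^ m * N2) ⊔ (J * M * N2) * (I * (I * J)^ m * N1) :=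
        sup_le_sup (Ideal.mul_mono_left h1) (Ideal.mul_mono_left h2)
    _ = M * ((I * J) ^ (m+1) * (N1 * N2)) := by
        rw [show (J * M * N2) * (I * (I * J)^ m * N1) = (I * M * N1) * (J * (I * J) ^ m * N2) by ring,
          sup_idem]
        ring

theorem JR.big {I J : Ideal R} (hI : Big I) (hJ : Big J) {a b : R} (h : JR I J a b) :
    Big (Ideal.span {a, b}) := by
  obtain ⟨-, -, m, hm⟩ := h
  have h1 : Ideal.span {a} * J ⊔ Ideal.span {b} * I ≤ Ideal.span {a, b} :=
    sup_le (Ideal.mul_le_left.trans (Ideal.span_mono (by simp)))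
      (Ideal.mul_le_left.trans (Ideal.span_mono (by simp)))
  exact ((hI.mul hJ).pow (m+1)).mono (hm.trans (Ideal.mul_le_left.trans h1))

end ic
end E2

/-! ### Second differences of colengths -/

namespace E2
open IsLocalRing

section ko
variable {R : Type*} [CommRing R] [IsLocalRing R] [IsNoetherianRing R]

/-- The colength of an ideal as an integer (meaningful when it is finite). -/
noncomputable def lz (K : Ideal R) : ℤ := ((len K).toNat : ℤ)

theorem Big.exists_len {K : Ideal R} (hK : Big K) : ∃ n : ℕ, len K = n ∧ lz K = n := by
  obtain ⟨n, hn⟩ := ENat.ne_top_iff_exists.1 hK.len_ne_top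
  exact ⟨n, hn.symm, by rw [lz, ← hn]; simp⟩

theorem lz_anti {K L : Ideal R} (hK : Big K) (h : K ≤ L) : lz L ≤ lz K := by
  obtain ⟨k, hk, hk'⟩ := hK.exists_len
  obtain ⟨l, hl, hl'⟩ := (hK.mono h).exists_len
  have := len_anti h
  rw [hk, hl, Nat.cast_le] at this
  rw [hk', hl']
  exact_mod_cast this

theorem lz_koszul {a b : R} (h : RegPair a b) {K1 K2 Ks : Ideal R} (h1 : Big K1) (h2 : Big K2)
    (hab : Big (Ideal.span {a, b})) (hs : Big Ks)
    (hKs : ∀ z, z ∈ Ks ↔ b * z ∈ K1 ∧ a * z ∈ K2) :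
    lz (Ideal.span {a} * K1 ⊔ Ideal.span {b} * K2) + lz Ks =
      lz K1 + lz K2 + lz (Ideal.span {a, b}) := by
  have hbig : Big (Ideal.span {a} * K1 ⊔ Ideal.span {b} * K2) := by
    refine (hab.mul (h1.inf h2)).mono ?_
    rw [Ideal.span_insert, Ideal.sup_mul]
    exact sup_le_sup (Ideal.mul_mono_right inf_le_left) (Ideal.mul_mono_right inf_le_right)
  have := koszul h K1 K2 Ks hKs
  obtain ⟨n1, e1, e1'⟩ := h1.exists_len
  obtain ⟨n2, e2, e2'⟩ := h2.exists_len
  obtain ⟨n3, e3, e3'⟩ := hab.exists_len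
  obtain ⟨n4, e4, e4'⟩ := hs.exists_len
  obtain ⟨n5, e5, e5'⟩ := hbig.exists_len
  rw [e1, e2, e3, e4, e5] at this
  rw [e1', e2', e3', e4', e5']
  exact_mod_cast this

/-- The mixed second difference of normal colengths is at most the colength of a joint reduction. -/
theorem upper {f : R} (hf : f ∈ maximalIdeal R) (hf0 : ∀ x, f * x = 0 → x = 0)
    {I J M : Ideal R} (hI : Big I) (hJ : Big J) (hM : Big M) {a b : R} (h : JR I J a b)
    (hreg : RegPair a b) :
    lz (intCl (I * J * M)) + lz (intCl M) ≤
      lz (intCl (I * M)) + lz (intCl (J * M)) + lz (Ideal.span {a, b}) := by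
  have hIJM := ((hI.mul hJ).mul hM).mono (le_intCl _)
  have key := lz_koszul hreg (K1 := intCl (J * M)) (K2 := intCl (I * M)) (Ks := intCl M)
    ((hJ.mul hM).mono (le_intCl _)) ((hI.mul hM).mono (le_intCl _)) (h.big hI hJ)
    (hM.mono (le_intCl _)) (fun z => ⟨fun hz => ⟨mul_mem_intCl hf hf0 hJ hM h.2.1 hz,
      mul_mem_intCl hf hf0 hI hM h.1 hz⟩, fun hz => h.cancel hf hf0 hI hJ hM hz.2 hz.1⟩)
  have hle : Ideal.span {a} * intCl (J * M) ⊔ Ideal.span {b} * intCl (I * M) ≤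
      intCl (I * J * M) := by
    refine sup_le ?_ ?_
    · rw [Ideal.span_singleton_mul_le_iff]
      intro z hz
      rw [mul_assoc]
      exact mul_mem_intCl hf hf0 hI (hJ.mul hM) h.1 hz
    · rw [Ideal.span_singleton_mul_le_iff]
      intro z hz
      rw [mul_comm I J, mul_assoc]
      exact mul_mem_intCl hf hf0 hJ (hI.mul hM) h.2.1 hz
  have hbig : Big (Ideal.span {a} * intCl (J * M) ⊔ Ideal.span {b} * intCl (I * M)) := by
    refine ((h.big hI hJ).mul ((hJ.mul hM).inf (hI.mul hM))).mono ?_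
    rw [Ideal.span_insert, Ideal.sup_mul]
    exact sup_le_sup (Ideal.mul_mono_right (inf_le_left.trans (le_intCl _)))
      (Ideal.mul_mono_right (inf_le_right.trans (le_intCl _)))
  have := lz_anti hbig hle
  linarith

/-- For ordinary powers far enough out, the mixed second difference of colengths is at least the
colength of a joint reduction. -/
theorem lower {I J M : Ideal R} (hI : Big I) (hJ : Big J) (hM : Big M) {a b : R} (h : JR I J a b)
    (hreg : RegPair a b)
    (hM' : I * J * M ≤ (Ideal.span {a} * J ⊔ Ideal.span {b} * I) * M) :
    lz (I * M) + lz (J * M) + lz (Ideal.span {a, b}) ≤ lz (I * J * M) + lz M := by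
  let Ks : Ideal R := Submodule.comap (LinearMap.lsmul R R b) (J * M) ⊓
    Submodule.comap (LinearMap.lsmul R R a) (I * M)
  have hMK : M ≤ Ks := by
    intro z hz
    exact ⟨Ideal.mul_mem_mul h.2.1 hz, Ideal.mul_mem_mul h.1 hz⟩
  have key := lz_koszul hreg (K1 := J * M) (K2 := I * M) (Ks := Ks)
    (hJ.mul hM) (hI.mul hM) (h.big hI hJ) (hM.mono hMK) (fun z => Iff.rfl)
  have h1 := lz_anti hM hMK
  have h2 : I * J * M = Ideal.span {a} * (J * M) ⊔ Ideal.span {b} * (I * M) := by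
    rw [← mul_assoc, ← mul_assoc, ← Ideal.sup_mul]
    refine le_antisymm hM' (Ideal.mul_mono_left (sup_le ?_ ?_))
    · exact Ideal.mul_mono_left ((Ideal.span_singleton_le_iff_mem _).2 h.1)
    · rw [mul_comm I J]
      exact Ideal.mul_mono_left ((Ideal.span_singleton_le_iff_mem _).2 h.2.1)
  rw [h2]
  linarith

/-- The diagonal `λ(R/IⁿJⁿ)` eventually has second difference at least `A + B + 2 * C`,
where `A`, `B`, `C` are the colengths of joint reductions of `(I, I)`, `(J, J)`, `(I, J)`. -/
theorem diag_lower {I J : Ideal R} (hI : Big I) (hJ : Big J) {a a' b b' c c' : R}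
    (hA : JR I I a a') (rA : RegPair a a') (hB : JR J J b b') (rB : RegPair b b')
    (hC : JR I J c c') (rC : RegPair c c') :
    ∃ N : ℕ, ∀ n, N ≤ n →
      lz (Ideal.span {a, a'}) + lz (Ideal.span {b, b'}) + 2 * lz (Ideal.span {c, c'}) ≤
        lz (I ^ (n+2) * J ^ (n+2)) + lz (I ^ n * J ^ n) - 2 * lz (I ^ (n+1) * J ^ (n+1)) := by
  have gen : ∀ {I J K : Ideal R} {a b : R} {m : ℕ},
      (I * J) ^ (m + 1) ≤ (Ideal.span {a} * J ⊔ Ideal.span {b} * I) * (I * J) ^ m →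
      I * J * ((I * J) ^ m * K) ≤ (Ideal.span {a} * J ⊔ Ideal.span {b} * I) * ((I * J) ^ m * K) := by
    intro I J K a b m h
    rw [← mul_assoc, ← mul_assoc, ← pow_succ']
    exact Ideal.mul_mono_left h
  obtain ⟨m1, h1⟩ := hA.2.2
  obtain ⟨m2, h2⟩ := hB.2.2
  obtain ⟨m3, h3⟩ := hC.2.2
  refine ⟨2 * m1 + 2 * m2 + m3, fun n hn => ?_⟩
  have e1 := lower hI hI (M := I ^ n * J ^ (n+2)) ((hI.pow _).mul (hJ.pow _)) hA rA (by
    have e : I ^ n * J ^ (n+2) = (I * I) ^ m1 * (I ^ (n - 2 * m1) * J ^ (n+2)) := by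
      rw [← mul_assoc, ← pow_two, ← pow_mul, ← pow_add]; congr 2; omega
    rw [e]; exact gen h1)
  have e2 := lower hJ hJ (M := I ^ n * J ^ n) ((hI.pow _).mul (hJ.pow _)) hB rB (by
    have e : I ^ n * J ^ n = (J * J) ^ m2 * (I ^ n * J ^ (n - 2 * m2)) := by
      rw [mul_left_comm, ← pow_two, ← pow_mul, ← pow_add]; congr 2; omega
    rw [e]; exact gen h2)
  have e3 := lower hI hJ (M := I ^ n * J ^ (n+1)) ((hI.pow _).mul (hJ.pow _)) hC rC (by
    have e : I ^ n * J ^ (n+1) = (I * J) ^ m3 * (I ^ (n - m3) * J ^ (n + 1 - m3)) := by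
      rw [mul_pow, mul_mul_mul_comm, ← pow_add, ← pow_add]; congr 2 <;> omega
    rw [e]; exact gen h3)
  rw [show I * I * (I ^ n * J ^ (n+2)) = I ^ (n+2) * J ^ (n+2) by ring,
    show I * (I ^ n * J ^ (n+2)) = I ^ (n+1) * J ^ (n+2) by ring] at e1
  rw [show J * J * (I ^ n * J ^ n) = I ^ n * J ^ (n+2) by ring,
    show J * (I ^ n * J ^ n) = I ^ n * J ^ (n+1) by ring] at e2
  rw [show I * J * (I ^ n * J ^ (n+1)) = I ^ (n+1) * J ^ (n+2) by ring,
    show I * (I ^ n * J ^ (n+1)) = I ^ (n+1) * J ^ (n+1) by ring,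
    show J * (I ^ n * J ^ (n+1)) = I ^ n * J ^ (n+2) by ring] at e3
  linarith

end ko

/-- A function with second differences at least `T` that is bounded by a shift of a quadratic
polynomial forces the leading coefficient of the latter to be at least `T`. -/
theorem diag_growth (G Fd : ℕ → ℤ) (T E ε c : ℤ) (N n0 : ℕ)
    (h : ∀ n, N ≤ n → T ≤ G (n+2) + G n - 2 * G (n+1))
    (hE : ∀ n : ℕ, N ≤ n → 2 * Fd n = E * n^2 + ε * n + 2 * c)
    (hle : ∀ n, G n ≤ Fd (n + n0)) : T ≤ E := by
  have h1 : ∀ k : ℕ, G (N+1) - G N + T * k ≤ G (N+k+1) - G (N+k) := by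
    intro k
    induction k with
    | zero => simp
    | succ k ih =>
      have := h (N+k) (by omega)
      push_cast
      rw [show N + (k+1) + 1 = N + k + 2 by ring, show N + (k+1) = N + k + 1 by ring]
      linarith
  have h2 : ∀ k : ℕ, 2 * G N + 2 * k * (G (N+1) - G N) + T * (k^2 - k) ≤ 2 * G (N+k) := by
    intro k
    induction k with
    | zero => simp
    | succ k ih =>
      have := h1 k
      push_cast
      rw [show N + (k+1) = N + k + 1 by ring]
      linarith
  have := quad_growth (T - E) (2 * E * (N + n0) + ε - 2 * (G (N+1) - G N) + T)
    (E * (N+n0)^2 + ε * (N+n0) + 2 * c - 2 * G N) 0 (by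
      intro k _
      have e1 := h2 k
      have e2 := hle (N+k)
      have e3 := hE (N+k+n0) (by omega)
      push_cast at e3
      nlinarith)
  linarith

end E2

/-! ### Forms with respect to a regular pair, and asymptotic order -/

namespace E2

section ra
variable {R : Type*} [CommRing R] {a b : R}

theorem RegPair.pow_cancel (h : RegPair a b) (k : ℕ) : ∀ c y, b ^ k * c = a * y → ∃ z, c = a * z := by
  induction k with
  | zero => intro c y hc; exact ⟨y, by simpa using hc⟩
  | succ k ih =>
    intro c y hc
    obtain ⟨z, hz⟩ := ih (b * c) y (by rw [← hc]; ring)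
    obtain ⟨w, -, hw⟩ := h.syz z (-c) (by linear_combination -hz)
    exact ⟨w, by linear_combination -hw⟩

theorem span_pow_succ (a b : R) (l : ℕ) (x : R) (hx : x ∈ Ideal.span {a, b} ^ (l + 1)) :
    ∃ q ∈ Ideal.span {a, b} ^ l, ∃ c, x = a * q + b ^ (l + 1) * c := by
  induction l generalizing x with
  | zero =>
    rw [zero_add, pow_one, Ideal.mem_span_pair] at hx
    obtain ⟨p, q, rfl⟩ := hx
    exact ⟨p, by simp, q, by ring⟩
  | succ l ih =>
    rw [pow_succ'] at hx
    refine Submodule.mul_induction_on hx ?_ ?_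
    · intro m hm n hn
      obtain ⟨p, q, rfl⟩ := Ideal.mem_span_pair.1 hm
      obtain ⟨r, hr, c, hc⟩ := ih n hn
      refine ⟨p * n + b * (q * r), add_mem (Ideal.mul_mem_left _ _ hn) ?_, q * c, ?_⟩
      · rw [pow_succ']
        exact Ideal.mul_mem_mul (Ideal.subset_span (by simp)) (Ideal.mul_mem_left _ _ hr)
      · rw [add_mul, mul_assoc q b n, hc]; ring
    · rintro x y ⟨q, hq, c, rfl⟩ ⟨q₂, hq₂, c₂, rfl⟩
      exact ⟨q + q₂, add_mem hq hq₂, c + c₂, by ring⟩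

/-- Multiplication by `a` is injective on the associated graded ring of `(a, b)`. -/
theorem RegPair.colon (h : RegPair a b) (l : ℕ) (x : R) (hx : a * x ∈ Ideal.span {a, b} ^ (l + 1)) :
    x ∈ Ideal.span {a, b} ^ l := by
  obtain ⟨q, hq, c, hc⟩ := span_pow_succ a b l _ hx
  obtain ⟨z, rfl⟩ := h.pow_cancel (l+1) c (x - q) (by linear_combination -hc)
  have h1 : x = q + b ^ (l+1) * z := by
    have := h.nzl (x - q - b ^ (l+1) * z) (by linear_combination hc)
    linear_combination this
  rw [h1]
  refine add_mem hq (Ideal.mul_mem_right _ _ ?_)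
  rw [pow_succ]
  exact Ideal.mul_mem_right _ _ (Ideal.pow_mem_pow (Ideal.subset_span (by simp)) _)

theorem RegPair.colon_pow (h : RegPair a b) (i l : ℕ) : ∀ (x : R),
    a ^ i * x ∈ Ideal.span {a, b} ^ (l + i) → x ∈ Ideal.span {a, b} ^ l := by
  induction i with
  | zero => intro x hx; simpa using hx
  | succ i ih =>
    intro x hx
    apply ih
    apply h.colon
    rw [← mul_assoc, ← pow_succ']
    exact hx

/-- If `bˢw` is congruent to a multiple of `aᵗ` modulo `Q^(D+s+1)` with `t > D` and `w ∈ Q^D`, then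
`w ∈ Q^(D+1)`: the degree-`D` form of `w` would otherwise be divisible by a too high power of `a`. -/
theorem RegPair.raise (h : RegPair a b) (D : ℕ) : ∀ (s t : ℕ) (w r : R), D < t →
    w ∈ Ideal.span {a, b} ^ D → b ^ s * w - a ^ t * r ∈ Ideal.span {a, b} ^ (D + s + 1) →
    w ∈ Ideal.span {a, b} ^ (D + 1) := by
  have ha : a ∈ Ideal.span {a, b} := Ideal.subset_span (by simp)
  have hb : b ∈ Ideal.span {a, b} := Ideal.subset_span (by simp)
  induction D with
  | zero =>
    intro s t w r ht _ hs
    obtain ⟨t, rfl⟩ : ∃ t', t = t' + 1 := ⟨t - 1, by omega⟩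
    rw [zero_add] at hs
    obtain ⟨q, hq, c, hc⟩ := span_pow_succ a b s _ hs
    obtain ⟨z, hz⟩ := h.pow_cancel s (w - b * c) (q + a ^ t * r) (by
      linear_combination hc)
    rw [zero_add, pow_one, Ideal.mem_span_pair]
    exact ⟨z, c, by linear_combination -hz⟩
  | succ D ih =>
    intro s t w r ht hw hs
    obtain ⟨t, rfl⟩ : ∃ t', t = t' + 1 := ⟨t - 1, by omega⟩
    obtain ⟨w', hw', c, rfl⟩ := span_pow_succ a b D w hw
    obtain ⟨q, hq, e, he⟩ := span_pow_succ a b (D + 1 + s) _ hs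
    obtain ⟨z, hz⟩ := h.pow_cancel (s + D + 1) (c - b * e) (q + a ^ t * r - b ^ s * w') (by
      have e1 : b ^ (D + 1 + s + 1) = b ^ (s + D + 1) * b := by ring
      rw [e1] at he
      linear_combination he)
    have hc : c ∈ Ideal.span {a, b} := by
      rw [Ideal.mem_span_pair]
      exact ⟨z, e, by linear_combination -hz⟩
    have hbc : b ^ (D + 1) * c ∈ Ideal.span {a, b} ^ (D + 1 + 1) := by
      rw [pow_succ _ (D+1)]
      exact Ideal.mul_mem_mul (Ideal.pow_mem_pow hb _) hc
    refine add_mem ?_ hbc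
    rw [pow_succ']
    refine Ideal.mul_mem_mul ha ?_
    refine ih s t w' r (by omega) hw' ?_
    apply h.colon
    have e1 : a * (b ^ s * w' - a ^ t * r) =
        (b ^ s * (a * w' + b ^ (D+1) * c) - a ^ (t+1) * r) - b ^ s * (b ^ (D + 1) * c) := by ring
    rw [e1]
    refine sub_mem (by convert hs using 2; ring) ?_
    have e2 : D + s + 1 + 1 = s + (D + 1 + 1) := by ring
    rw [e2, pow_add]
    exact Ideal.mul_mem_mul (Ideal.pow_mem_pow hb _) hbc

/-- `x` has asymptotic `Q`-adic order at least `q`: for every `κ > 0` there is `K` such that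
`x ^ j ∈ Q ^ ⌊(q - κ) j - K⌋` for all `j` (a negative exponent is read as `0`). -/
def Ge (Q : Ideal R) (x : R) (q : ℝ) : Prop :=
  ∀ κ : ℝ, 0 < κ → ∃ K : ℝ, ∀ j : ℕ, x ^ j ∈ Q ^ ⌊(q - κ) * j - K⌋₊

theorem pow_floor_mul {Q : Ideal R} {x y : R} {s t u : ℝ} (hx : x ∈ Q ^ ⌊s⌋₊) (hy : y ∈ Q ^ ⌊t⌋₊)
    (h : u ≤ s + t - 1) : x * y ∈ Q ^ ⌊u⌋₊ := by
  have h1 : ⌊u⌋₊ ≤ ⌊s⌋₊ + ⌊t⌋₊ := by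
    rcases le_or_gt u 0 with hu | hu
    · rw [Nat.floor_of_nonpos hu]; omega
    have a1 := Nat.lt_floor_add_one s
    have a2 := Nat.lt_floor_add_one t
    have a3 := Nat.floor_le hu.le
    have : (⌊u⌋₊ : ℝ) < ⌊s⌋₊ + ⌊t⌋₊ + 1 := by linarith
    have : ⌊u⌋₊ < ⌊s⌋₊ + ⌊t⌋₊ + 1 := by exact_mod_cast this
    omega
  have := Ideal.mul_mem_mul hx hy
  rw [← pow_add] at this
  exact Ideal.pow_le_pow_right h1 this

theorem Ge.mono {Q : Ideal R} {x : R} {p q : ℝ} (h : Ge Q x q) (hpq : p ≤ q) : Ge Q x p := by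
  intro κ hκ
  obtain ⟨K, hK⟩ := h κ hκ
  refine ⟨K, fun j => Ideal.pow_le_pow_right (Nat.floor_mono ?_) (hK j)⟩
  have : (0:ℝ) ≤ j := by positivity
  nlinarith

theorem Ge.closed {Q : Ideal R} {x : R} {q : ℝ} (h : ∀ p < q, Ge Q x p) : Ge Q x q := by
  intro κ hκ
  obtain ⟨K, hK⟩ := h (q - κ/2) (by linarith) (κ/2) (by linarith)
  refine ⟨K, fun j => ?_⟩
  have := hK j
  rwa [show q - κ/2 - κ/2 = q - κ by ring] at this

theorem Ge.mul {Q : Ideal R} {x y : R} {p q : ℝ} (hx : Ge Q x p) (hy : Ge Q y q) :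
    Ge Q (x * y) (p + q) := by
  intro κ hκ
  obtain ⟨K, hK⟩ := hx (κ/2) (by linarith)
  obtain ⟨K', hK'⟩ := hy (κ/2) (by linarith)
  refine ⟨K + K' + 1, fun j => ?_⟩
  rw [mul_pow]
  exact pow_floor_mul (hK j) (hK' j) (by linarith)

theorem Ge.add {Q : Ideal R} {x y : R} {q : ℝ} (hx : Ge Q x q) (hy : Ge Q y q) :
    Ge Q (x + y) q := by
  intro κ hκ
  obtain ⟨K, hK⟩ := hx κ hκ
  obtain ⟨K', hK'⟩ := hy κ hκ
  refine ⟨K + K' + 1, fun j => ?_⟩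
  rw [add_pow]
  refine sum_mem fun i hi => Ideal.mul_mem_right _ _ ?_
  rw [Finset.mem_range] at hi
  refine pow_floor_mul (hK i) (hK' (j - i)) ?_
  rw [Nat.cast_sub (by omega)]
  linarith

theorem Ge.of_mem {Q : Ideal R} {x : R} {n : ℕ} (h : x ∈ Q ^ n) : Ge Q x n := by
  intro κ hκ
  refine ⟨0, fun j => ?_⟩
  have := Ideal.pow_mem_pow h j
  rw [← pow_mul] at this
  refine Ideal.pow_le_pow_right ?_ this
  refine Nat.floor_le_of_le ?_
  push_cast
  have : (0:ℝ) ≤ j := by positivity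
  nlinarith

theorem Ge.smul {Q : Ideal R} {x : R} {q : ℝ} (r : R) (hx : Ge Q x q) : Ge Q (r * x) q := by
  have := (Ge.of_mem (Q := Q) (x := r) (n := 0) (by simp)).mul hx
  simpa using this

theorem Ge.neg {Q : Ideal R} {x : R} {q : ℝ} (hx : Ge Q x q) : Ge Q (-x) q := by
  have := hx.smul (-1)
  simpa using this

theorem Ge.sub {Q : Ideal R} {x y : R} {q : ℝ} (hx : Ge Q x q) (hy : Ge Q y q) :
    Ge Q (x - y) q := by
  rw [sub_eq_add_neg]; exact hx.add hy.neg

theorem RegPair.ge_cancel (h : RegPair a b) {x : R} {q : ℝ} (i : ℕ)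
    (hx : Ge (Ideal.span {a, b}) (a ^ i * x) (q + i)) : Ge (Ideal.span {a, b}) x q := by
  intro κ hκ
  obtain ⟨K, hK⟩ := hx κ hκ
  refine ⟨K, fun j => ?_⟩
  rcases le_or_gt ((q - κ) * j - K) 0 with h0 | h0
  · rw [Nat.floor_of_nonpos h0]; simp
  apply h.colon_pow (i * j)
  have := hK j
  rw [mul_pow, ← pow_mul] at this
  refine Ideal.pow_le_pow_right ?_ this
  rw [← Nat.floor_add_natCast h0.le]
  apply Nat.floor_mono
  push_cast
  linarith

end ra
end E2

/-! ### Congruences `bⁱ x ≡ aⁱ y` and asymptotic order -/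

namespace E2
section rb
variable {R : Type*} [CommRing R] {a b : R}

set_option maxHeartbeats 1000000 in
/-- If `bⁱ x = aⁱ y + ε` with `y` of asymptotic order at least `q` and `ε` of asymptotic order at least
`q + η + i`, where `q + η ≤ i`, then the order of `x` is at least `q + κ` for an explicit `κ > 0`.

Expand `b^(ij) x^j = (aⁱ y + ε)^j`. The terms with at least `r0` factors `ε` lie deep in the `Q`-adic
filtration, and the others are divisible by a high power of `a`; if `D` is the largest exponent with
`x^j ∈ Q^D` and `D` were small, `RegPair.raise` would show `x^j ∈ Q^(D+1)`. -/
theorem RegPair.ge_succ_aux (h : RegPair a b) {x y ε : R} {i : ℕ} {q η κ : ℝ} (hq : 0 ≤ q)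
    (hη : 0 < η) (hη1 : η ≤ 1) (hκ : 0 < κ) (hκe : 4 * (i + 1) * κ = η ^ 2) (hqi : q + η ≤ i)
    (hy : Ge (Ideal.span {a, b}) y q) (hε : Ge (Ideal.span {a, b}) ε (q + η + i))
    (hxy : b ^ i * x = a ^ i * y + ε) : Ge (Ideal.span {a, b}) x (q + κ) := by
  set Q := Ideal.span {a, b} with hQ
  have ha : a ∈ Q := Ideal.subset_span (by simp)
  have hb : b ∈ Q := Ideal.subset_span (by simp)
  intro κ' hκ'
  obtain ⟨K1, hK1⟩ := hy κ hκ
  obtain ⟨K2, hK2⟩ := hε κ hκ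
  set K := |K1| + |K2| with hK
  have hK0 : 0 ≤ K := by positivity
  have hK1' : K1 ≤ |K1| := le_abs_self _
  have hK2' : K2 ≤ |K2| := le_abs_self _
  obtain ⟨B, hB⟩ : ∃ B : ℝ, B = i * ((K + 2) / η + 1) := ⟨_, rfl⟩
  have hB0 : 0 ≤ B := by rw [hB]; positivity
  refine ⟨(q + κ) * (4 * B / η + 1), fun j => ?_⟩
  by_contra hx
  set m0 := ⌊(q + κ - κ') * j - (q + κ) * (4 * B / η + 1)⌋₊ with hm0
  have hj0 : (0:ℝ) ≤ j := by positivity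
  have hm1 : m0 ≠ 0 := by
    intro h0
    rw [h0] at hx
    simp at hx
  have hm2 : (m0:ℝ) ≤ (q + κ - κ') * j - (q + κ) * (4 * B / η + 1) := by
    refine Nat.floor_le (le_of_not_gt fun hlt => hm1 ?_)
    exact Nat.floor_of_nonpos hlt.le
  have hm3 : (1:ℝ) ≤ m0 := by exact_mod_cast Nat.one_le_iff_ne_zero.2 hm1
  have hBη : 0 ≤ 4 * B / η := by positivity
  have hm4 : (m0:ℝ) ≤ (q + κ) * j := by nlinarith
  have hjB : 4 * B / η + 1 < j := by
    by_contra hle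
    push Not at hle
    have : (q + κ) * j ≤ (q + κ) * (4 * B / η + 1) := by gcongr
    nlinarith
  have hjB' : 4 * B < η * j := by
    have : 4 * B / η < j := by linarith
    rw [div_lt_iff₀ hη] at this
    linarith
  -- the largest exponent `D` with `x ^ j ∈ Q ^ D`
  obtain ⟨D, hD, hD', hDm⟩ : ∃ D, x ^ j ∈ Q ^ D ∧ x ^ j ∉ Q ^ (D + 1) ∧ D + 1 ≤ m0 := by
    classical
    have hex : ∃ m, x ^ j ∉ Q ^ m := ⟨m0, hx⟩
    have hpos : Nat.find hex ≠ 0 := by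
      intro h0
      have := Nat.find_spec hex
      rw [h0] at this
      simp at this
    refine ⟨Nat.find hex - 1, ?_, ?_, ?_⟩
    · by_contra hc
      have := Nat.find_min' hex hc
      omega
    · rw [Nat.sub_add_cancel (by omega)]
      exact Nat.find_spec hex
    · rw [Nat.sub_add_cancel (by omega)]
      exact Nat.find_min' hex hx
  have hDr : (D:ℝ) + 1 ≤ (q + κ) * j := by
    refine le_trans ?_ hm4
    exact_mod_cast hDm
  set r0 := ⌈(2 * κ * j + K + 2) / η⌉₊ with hr0
  have hr0l : 2 * κ * j + K + 2 ≤ η * r0 := by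
    have := Nat.le_ceil ((2 * κ * j + K + 2) / η)
    rw [div_le_iff₀ hη] at this
    linarith
  have hr0u : (r0:ℝ) < (2 * κ * j + K + 2) / η + 1 := Nat.ceil_lt_add_one (by positivity)
  have hterm : ∀ r ∈ Finset.range (j + 1), r0 ≤ r →
      (a ^ i * y) ^ (j - r) * ε ^ r ∈ Q ^ (D + i * j + 1) := by
    intro r hr hr'
    rw [Finset.mem_range] at hr
    have hr'' : (r0:ℝ) ≤ r := by exact_mod_cast hr'
    have e1 : (a ^ i) ^ (j - r) ∈ Q ^ ⌊((i * (j - r) : ℕ) : ℝ)⌋₊ := by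
      rw [Nat.floor_natCast, ← pow_mul]
      exact Ideal.pow_mem_pow ha _
    have e2 := pow_floor_mul (pow_floor_mul e1 (hK1 (j - r)) le_rfl) (hK2 r) le_rfl
    rw [mul_pow]
    refine Ideal.pow_le_pow_right (Nat.le_floor ?_) e2
    push_cast [Nat.cast_sub (show r ≤ j by omega)]
    nlinarith
  have hlow : ∀ r ∈ Finset.range (j + 1), r < r0 →
      a ^ (i * (j - r0)) ∣ (a ^ i * y) ^ (j - r) * ε ^ r * (j.choose r : R) := by
    intro r _ hr'
    rw [mul_pow, ← pow_mul]
    refine dvd_mul_of_dvd_left (dvd_mul_of_dvd_left (dvd_mul_of_dvd_left ?_ _) _) _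
    exact pow_dvd_pow _ (Nat.mul_le_mul_left _ (by omega))
  have hsum : ∃ r, b ^ (i * j) * x ^ j - a ^ (i * (j - r0)) * r ∈ Q ^ (D + i * j + 1) := by
    have e : b ^ (i * j) * x ^ j = ∑ r ∈ Finset.range (j + 1), (a ^ i * y) ^ (j - r) * ε ^ r * (j.choose r : R) := by
      rw [pow_mul, ← mul_pow, hxy, add_comm, add_pow]
      exact Finset.sum_congr rfl fun r _ => by ring
    obtain ⟨r, hr⟩ : a ^ (i * (j - r0)) ∣ ∑ r ∈ (Finset.range (j + 1)).filter (· < r0),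
        (a ^ i * y) ^ (j - r) * ε ^ r * (j.choose r : R) :=
      Finset.dvd_sum fun r hr => by
        rw [Finset.mem_filter] at hr
        exact hlow r hr.1 hr.2
    refine ⟨r, ?_⟩
    rw [← hr, e, ← Finset.sum_filter_add_sum_filter_not (Finset.range (j + 1)) (· < r0),
      add_sub_cancel_left]
    refine sum_mem fun r hr => ?_
    rw [Finset.mem_filter] at hr
    exact Ideal.mul_mem_right _ _ (hterm r hr.1 (by omega))
  obtain ⟨r, hr⟩ := hsum
  have hle : i * (j - r0) ≤ D := by
    by_contra hlt
    push Not at hlt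
    exact hD' (h.raise D (i * j) _ _ r hlt hD hr)
  have hle' : (i:ℝ) * j - i * r0 ≤ D := by
    have h1 : i * j ≤ D + i * r0 := by
      have : i * j ≤ i * (j - r0) + i * r0 := by
        rw [← Nat.mul_add]; exact Nat.mul_le_mul_left _ (by omega)
      omega
    have : ((i * j : ℕ):ℝ) ≤ ((D + i * r0 : ℕ):ℝ) := by exact_mod_cast h1
    push_cast at this
    linarith
  have hi0 : (0:ℝ) ≤ i := by positivity
  have h3 : (i:ℝ) * r0 ≤ i * (2 * κ * j) / η + B := by
    rw [hB]
    calc (i:ℝ) * r0 ≤ i * ((2 * κ * j + K + 2) / η + 1) := by gcongr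
      _ = _ := by ring
  have h4 : (i:ℝ) * (2 * κ * j) / η ≤ η / 2 * j := by
    rw [div_le_iff₀ hη]
    have : 4 * i * κ ≤ η ^ 2 := by nlinarith
    nlinarith
  have h5 : κ ≤ η / 4 := by nlinarith
  have h6 : κ * j ≤ η / 4 * j := by gcongr
  have h7 : (q + η) * j ≤ i * j := by gcongr
  nlinarith

/-- A congruence `bⁱ x ≡ aⁱ y` modulo elements of asymptotic order `n + i + 1`, with `i > n`, raises the
asymptotic order of `x` from `n` to `n + 1`: the supremum `q` of the orders of `x` is attained, and
`RegPair.ge_succ_aux` with `η = n + 1 - q` would improve it if it were less than `n + 1`. -/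
theorem RegPair.ge_succ (h : RegPair a b) {x y : R} {n i : ℕ} (hi : n + 1 ≤ i)
    (hx : Ge (Ideal.span {a, b}) x n) 
    (hε : Ge (Ideal.span {a, b}) (b ^ i * x - a ^ i * y) (n + i + 1)) :
    Ge (Ideal.span {a, b}) x (n + 1) := by
  by_contra hcon
  set Q := Ideal.span {a, b} with hQ
  have hb : b ∈ Q := Ideal.subset_span (by simp)
  set S := {q : ℝ | Ge Q x q} with hS
  have hbd : BddAbove S := ⟨n + 1, fun q hq => le_of_not_gt fun hlt => hcon (Ge.mono hq hlt.le)⟩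
  have hne : S.Nonempty := ⟨n, hx⟩
  obtain ⟨q, hqd⟩ : ∃ q, q = sSup S := ⟨_, rfl⟩
  have hq : Ge Q x q := by
    refine Ge.closed fun p hp => ?_
    rw [hqd] at hp
    obtain ⟨p', hp', hpp⟩ := exists_lt_of_lt_csSup hne hp
    exact Ge.mono hp' hpp.le
  have hqn : (n:ℝ) ≤ q := by rw [hqd]; exact le_csSup hbd hx
  have hqn1 : q < n + 1 := lt_of_not_ge fun hge => hcon (hq.mono hge)
  have hn0 : (0:ℝ) ≤ n := by positivity
  have hi' : (n:ℝ) + 1 ≤ i := by exact_mod_cast hi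
  have hy : Ge Q y q := by
    apply h.ge_cancel i
    have e : a ^ i * y = b ^ i * x - (b ^ i * x - a ^ i * y) := by ring
    rw [← hQ, e]
    refine Ge.sub ?_ (hε.mono (by linarith))
    rw [add_comm]
    exact (Ge.of_mem (Ideal.pow_mem_pow hb i)).mul hq
  have hκ : 0 < (n + 1 - q) ^ 2 / (4 * (i + 1)) := by
    have : 0 < (n:ℝ) + 1 - q := by linarith
    positivity
  have := h.ge_succ_aux (x := x) (i := i) (q := q) (η := n + 1 - q)
    (κ := (n + 1 - q) ^ 2 / (4 * (i + 1))) (by linarith) (by linarith) (by linarith) hκ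
    (by field_simp) (by linarith) hy (ε := b ^ i * x - a ^ i * y) (by convert hε using 1; ring) (by ring)
  have h2 : q + (n + 1 - q) ^ 2 / (4 * (i + 1)) ≤ q := by
    have h3 := le_csSup hbd this
    rwa [← hqd] at h3
  linarith

end rb
end E2

/-! ### The asymptotic order filtration -/

namespace E2
section rc
variable {R : Type*} [CommRing R]

/-- The ideal of elements of asymptotic `Q`-adic order at least `n`. -/
def FI (Q : Ideal R) (n : ℕ) : Ideal R where
  carrier := {x | Ge Q x n}
  add_mem' := fun hx hy => Ge.add hx hy
  zero_mem' := by
    have : Ge Q (0:R) n := Ge.of_mem (zero_mem _)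
    exact this
  smul_mem' := fun c _ hx => Ge.smul c hx

theorem mem_FI {Q : Ideal R} {n : ℕ} {x : R} : x ∈ FI Q n ↔ Ge Q x n := Iff.rfl

theorem pow_le_FI (Q : Ideal R) (n : ℕ) : Q ^ n ≤ FI Q n := fun _ hx => Ge.of_mem hx

theorem FI_zero (Q : Ideal R) : FI Q 0 = ⊤ := by
  rw [eq_top_iff]; simpa using pow_le_FI Q 0

theorem FI_anti (Q : Ideal R) {m n : ℕ} (h : m ≤ n) : FI Q n ≤ FI Q m :=
  fun _ hx => Ge.mono (mem_FI.1 hx) (by exact_mod_cast h)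

theorem mul_mem_FI {Q : Ideal R} {x y : R} {m n : ℕ} (hx : x ∈ FI Q m) (hy : y ∈ FI Q n) :
    x * y ∈ FI Q (m + n) := by
  have := Ge.mul (mem_FI.1 hx) (mem_FI.1 hy)
  rw [mem_FI]; push_cast; exact this

theorem RegPair.FI_cancel {a b : R} (h : RegPair a b) {x : R} {n i : ℕ}
    (hx : a ^ i * x ∈ FI (Ideal.span {a, b}) (n + i)) : x ∈ FI (Ideal.span {a, b}) n := by
  rw [mem_FI] at hx ⊢
  push_cast at hx
  exact h.ge_cancel i hx

/-- `λ(R/Qⁿ) = λ(R/Q) · n(n+1)/2` for an ideal `Q` generated by a regular pair. -/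
theorem RegPair.len_pow [IsLocalRing R] [IsNoetherianRing R] {a b : R} (h : RegPair a b)
    (hQ : Big (Ideal.span {a, b})) : ∃ lam : ℕ, ∀ n : ℕ, ∃ d : ℕ,
      len (Ideal.span {a, b} ^ n) = d ∧ 2 * d = n * (n + 1) * lam := by
  set Q := Ideal.span {a, b} with hQd
  have ha : a ∈ Q := Ideal.subset_span (by simp)
  have hb : b ∈ Q := Ideal.subset_span (by simp)
  have hfin : ∀ n, ∃ d : ℕ, len (Q ^ n) = d := fun n =>
    ⟨_, (ENat.natCast_toNat (hQ.pow n).len_ne_top).symm⟩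
  choose d hd using hfin
  have d0 : d 0 = 0 := by
    have := hd 0
    rw [pow_zero, Ideal.one_eq_top, len_eq_rl, rl_self] at this
    exact_mod_cast this.symm
  have hrec : ∀ n, d (n + 2) + d n = 2 * d (n + 1) + d 1 := by
    intro n
    have := koszul h (Q ^ (n + 1)) (Q ^ (n + 1)) (Q ^ n) (fun z => ⟨fun hz => ?_, fun hz => ?_⟩)
    · have e : Ideal.span {a} * Q ^ (n + 1) ⊔ Ideal.span {b} * Q ^ (n + 1) = Q ^ (n + 2) := by
        rw [← Ideal.add_eq_sup, ← add_mul, Ideal.add_eq_sup, ← Ideal.span_union,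
          Set.singleton_union, ← hQd, ← pow_succ']
      rw [e, ← hQd] at this
      have hd1 : len Q = d 1 := by rw [← hd, pow_one]
      rw [hd, hd, hd, hd1] at this
      have h2 : d (n + 2) + d n = d (n + 1) + d (n + 1) + d 1 := by exact_mod_cast this
      omega
    · rw [pow_succ']
      exact ⟨Ideal.mul_mem_mul hb hz, Ideal.mul_mem_mul ha hz⟩
    · exact h.colon n z hz.2
  refine ⟨d 1, fun n => ⟨d n, hd n, ?_⟩⟩
  induction n using Nat.twoStepInduction with
  | zero => simp [d0]
  | one => ring
  | more n h1 h2 =>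
    have := hrec n
    zify at *
    linear_combination 2 * this - h1 + 2 * h2

/-- The graded pieces of the asymptotic order filtration have linearly bounded length: multiplication
by `a` is injective on them, so their lengths are monotone, and the sum of the first `n` of them is at
most `λ(R/Qⁿ)`, which is quadratic in `n`. -/
theorem RegPair.FI_growth [IsLocalRing R] [IsNoetherianRing R] {a b : R} (h : RegPair a b)
    (hQ : Big (Ideal.span {a, b})) : ∃ α : ℕ, ∀ n : ℕ,
      rl (FI (Ideal.span {a, b}) (n + 1)) (FI (Ideal.span {a, b}) n) ≤ (α * (n + 1) : ℕ) := by
  obtain ⟨lam, hlam⟩ := h.len_pow hQ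
  set Q := Ideal.span {a, b} with hQd
  have ha : a ∈ Q := Ideal.subset_span (by simp)
  have hsum : ∀ n, len (FI Q (n + 1)) = rl (FI Q (n + 1)) (FI Q n) + len (FI Q n) := fun n =>
    len_add (FI_anti Q (by omega))
  have hle : ∀ n, len (FI Q n) ≤ len (Q ^ n) := fun n => len_anti (pow_le_FI Q n)
  have hfin : ∀ n, ∃ d : ℕ, len (FI Q n) = d := fun n =>
    ⟨_, (ENat.natCast_toNat (((hQ.pow n).mono (pow_le_FI Q n)).len_ne_top)).symm⟩
  choose d hd using hfin
  have hfin2 : ∀ n, ∃ d : ℕ, rl (FI Q (n + 1)) (FI Q n) = d := fun n => by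
    refine ⟨_, (ENat.natCast_toNat ?_).symm⟩
    intro htop
    have := hsum n
    rw [htop, hd] at this
    simp at this
  choose H hH using hfin2
  have hs : ∀ n, d (n + 1) = H n + d n := fun n => by
    have := hsum n
    rw [hd, hd, hH] at this
    exact_mod_cast this
  have hmono : Monotone H := by
    refine monotone_nat_of_le_succ fun n => ?_
    have : rl (FI Q (n + 1)) (FI Q n) ≤ rl (FI Q (n + 1 + 1)) (FI Q (n + 1)) := by
      refine rl_le_of_map (LinearMap.mulLeft R a) ?_ ?_ ?_
      · intro x hx
        rw [LinearMap.mulLeft_apply, add_comm n]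
        exact mul_mem_FI (pow_le_FI Q 1 (by simpa using ha)) hx
      · intro x hx
        rw [LinearMap.mulLeft_apply, add_comm (n+1)]
        exact mul_mem_FI (pow_le_FI Q 1 (by simpa using ha)) hx
      · intro x _ hx
        exact h.FI_cancel (i := 1) (by simpa using hx)
    rw [hH, hH] at this
    exact_mod_cast this
  have key : ∀ n k, k * H n ≤ d (n + k) := by
    intro n k
    induction k with
    | zero => simp
    | succ k ih =>
      have h1 := hs (n + k)
      have h2 : H n ≤ H (n + k) := hmono (by omega)
      rw [← add_assoc, h1, add_mul]
      omega
  refine ⟨2 * lam, fun n => ?_⟩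
  rw [hH]
  obtain ⟨D, hD1, hD2⟩ := hlam (n + (n + 1))
  have h1 := key n (n + 1)
  have h2 : d (n + (n + 1)) ≤ D := by
    have := hle (n + (n + 1))
    rw [hd, hD1] at this
    exact_mod_cast this
  have h3 : (n + 1) * H n ≤ (n + 1) * (2 * lam * (n + 1)) := by nlinarith
  exact_mod_cast Nat.le_of_mul_le_mul_left h3 (by omega)

end rc
end E2

/-! ### Filtrations with linear length growth -/

namespace E2
section ab
variable {R : Type*} [CommRing R] {V : Type*} [AddCommGroup V] [Module R V]

theorem rl_sup_right (K L : Submodule R V) : rl K (K ⊔ L) = rl K L := by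
  apply le_antisymm
  · refine rl_ge_of_map LinearMap.id (fun x hx => (le_sup_right : L ≤ K ⊔ L) hx) (fun x hx => hx) ?_
    intro y hy
    obtain ⟨k, hk, l, hl, rfl⟩ := Submodule.mem_sup.1 hy
    exact ⟨l, hl, by simpa using hk⟩
  · exact rl_mono_right le_sup_right

/-- A filtration `C` of a module with an operator `t` raising degrees by one, such that the degree-`n`
piece has length at most `α (n + 1)`, and such that no nonzero `z ∈ C n` satisfies
`t ^ (n + 1) z ∈ C n`. -/
structure TFilt (t : V →ₗ[R] V) (C : ℕ → Submodule R V) (α : ℕ) : Prop where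
  mono : Monotone C
  map : ∀ n z, z ∈ C n → t z ∈ C (n + 1)
  len : ∀ n, rl ⊥ (C n) ≤ (α * (n + 1) : ℕ)
  van : ∀ n z, z ∈ C n → (t ^ (n + 1)) z ∈ C n → z = 0

variable {t : V →ₗ[R] V} {C : ℕ → Submodule R V} {α : ℕ}

theorem TFilt.pow (h : TFilt t C α) (j : ℕ) : ∀ n z, z ∈ C n → (t ^ j) z ∈ C (n + j) := by
  induction j with
  | zero => intro n z hz; simpa using hz
  | succ j ih =>
    intro n z hz
    rw [pow_succ', Module.End.mul_apply, ← add_assoc]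
    exact h.map _ _ (ih n z hz)

theorem TFilt.lift (h : TFilt t C α) {n i k : ℕ} {z : V} (h1 : z ∈ C (n + i))
    (h2 : (t ^ (i + 1)) z ∈ C (n + i)) (hk : i ≤ k) :
    z ∈ C (n + k) ∧ (t ^ (k + 1)) z ∈ C (n + k) := by
  obtain ⟨d, rfl⟩ := Nat.exists_eq_add_of_le hk
  refine ⟨h.mono (by omega) h1, ?_⟩
  have := h.pow d _ _ h2
  rw [← Module.End.mul_apply, ← pow_add] at this
  rwa [show d + (i + 1) = i + d + 1 by ring, add_assoc] at this

/-- The elements `z` such that `z` and `t ^ (i + 1) z` both lie in `C (n + i)` for some `i`. They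
satisfy `C n ⊆ E (n + 1)` and the cancellation property `TFilt.E_inj`. -/
def TFilt.E (h : TFilt t C α) (n : ℕ) : Submodule R V where
  carrier := {z | ∃ i, z ∈ C (n + i) ∧ (t ^ (i + 1)) z ∈ C (n + i)}
  add_mem' := by
    rintro x y ⟨i, hi1, hi2⟩ ⟨k, hk1, hk2⟩
    obtain ⟨p1, p2⟩ := h.lift hi1 hi2 (le_max_left i k)
    obtain ⟨q1, q2⟩ := h.lift hk1 hk2 (le_max_right i k)
    exact ⟨max i k, add_mem p1 q1, by rw [map_add]; exact add_mem p2 q2⟩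
  zero_mem' := ⟨0, by simp, by simp⟩
  smul_mem' := by
    rintro c x ⟨i, hi1, hi2⟩
    exact ⟨i, Submodule.smul_mem _ _ hi1, by rw [map_smul]; exact Submodule.smul_mem _ _ hi2⟩

theorem TFilt.E_zero (h : TFilt t C α) : h.E 0 = ⊥ := by
  rw [eq_bot_iff]
  rintro z ⟨i, h1, h2⟩
  rw [zero_add] at h1 h2
  exact h.van i z h1 h2

theorem TFilt.E_mono (h : TFilt t C α) : Monotone h.E := by
  refine monotone_nat_of_le_succ fun n => ?_
  rintro z ⟨i, h1, h2⟩
  exact ⟨i, h.mono (by omega) h1, h.mono (by omega) h2⟩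

theorem TFilt.E_map (h : TFilt t C α) {n : ℕ} {z : V} (hz : z ∈ h.E n) : t z ∈ h.E (n + 1) := by
  obtain ⟨i, h1, h2⟩ := hz
  refine ⟨i, ?_, ?_⟩
  · have := h.map _ _ h1
    rwa [show n + 1 + i = n + i + 1 by ring]
  · have := h.map _ _ h2
    rw [← Module.End.mul_apply, ← pow_succ'] at this
    rw [← Module.End.mul_apply, ← pow_succ, show n + 1 + i = n + i + 1 by ring]
    exact this

theorem TFilt.le_E (h : TFilt t C α) (n : ℕ) : C n ≤ h.E (n + 1) := by
  intro z hz
  exact ⟨0, h.mono (by omega) hz, by simpa using h.map _ _ hz⟩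

theorem TFilt.E_inj (h : TFilt t C α) {n : ℕ} {z : V} (h1 : z ∈ h.E (n + 1))
    (h2 : t z ∈ h.E (n + 1)) : z ∈ h.E n := by
  obtain ⟨i, hi1, hi2⟩ := h1
  obtain ⟨k, hk1, hk2⟩ := h2
  obtain ⟨p1, -⟩ := h.lift hi1 hi2 (le_max_left i k)
  obtain ⟨-, q2⟩ := h.lift hk1 hk2 (le_max_right i k)
  rw [← Module.End.mul_apply, ← pow_succ] at q2
  refine ⟨max i k + 1, ?_, ?_⟩
  · rwa [show n + (max i k + 1) = n + 1 + max i k by ring]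
  · rwa [show n + (max i k + 1) = n + 1 + max i k by ring]

theorem TFilt.E_pow (h : TFilt t C α) (D : ℕ) : ∀ {n : ℕ} {z : V}, z ∈ h.E n →
    (t ^ D) z ∈ h.E (n + D) := by
  induction D with
  | zero => intro n z hz; simpa using hz
  | succ D ih =>
    intro n z hz
    rw [pow_succ', Module.End.mul_apply, ← add_assoc]
    exact h.E_map (ih hz)

theorem TFilt.E_inj_pow (h : TFilt t C α) (D : ℕ) : ∀ {n : ℕ} {z : V}, z ∈ h.E (n + 1) →
    (t ^ D) z ∈ h.E (n + D) → z ∈ h.E n := by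
  induction D with
  | zero => intro n z _ hz; simpa using hz
  | succ D ih =>
    intro n z hz hz2
    rw [pow_succ, Module.End.mul_apply] at hz2
    refine h.E_inj hz (ih (n := n + 1) (h.E_map hz) ?_)
    rwa [show n + 1 + D = n + (D + 1) by ring]

/-- `Z + tZ + ⋯ + t ^ (k - 1) Z`. -/
def TT (t : V →ₗ[R] V) (Z : Submodule R V) : ℕ → Submodule R V
  | 0 => ⊥
  | k + 1 => TT t Z k ⊔ Z.map (t ^ k)

theorem TT_le {Z W : Submodule R V} {k : ℕ} (h : ∀ j < k, ∀ z ∈ Z, (t ^ j) z ∈ W) :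
    TT t Z k ≤ W := by
  induction k with
  | zero => exact bot_le
  | succ k ih =>
    refine sup_le (ih fun j hj => h j (by omega)) ?_
    rintro _ ⟨z, hz, rfl⟩
    exact h k (by omega) z hz

theorem mem_TT {Z : Submodule R V} {j : ℕ} {z : V} (hz : z ∈ Z) : ∀ {k : ℕ}, j < k →
    (t ^ j) z ∈ TT t Z k := by
  intro k
  induction k with
  | zero => intro h; omega
  | succ k ih =>
    intro hj
    rcases Nat.lt_succ_iff_lt_or_eq.1 hj with h | rfl
    · exact (le_sup_left : TT t Z k ≤ _) (ih h)
    · exact (le_sup_right : Z.map (t ^ j) ≤ _) ⟨z, hz, rfl⟩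

theorem TFilt.common (h : TFilt t C α) {n : ℕ} {Z : Submodule R V} (hfg : Z.FG) (hZ : Z ≤ h.E n) :
    ∃ i, ∀ z ∈ Z, z ∈ C (n + i) ∧ (t ^ (i + 1)) z ∈ C (n + i) := by
  revert hZ
  refine Submodule.fg_induction (motive := fun Z _ => Z ≤ h.E n →
    ∃ i, ∀ z ∈ Z, z ∈ C (n + i) ∧ (t ^ (i + 1)) z ∈ C (n + i)) ?_ ?_ Z hfg
  · intro x hx
    obtain ⟨i, h1, h2⟩ := hx (Submodule.mem_span_singleton_self x)
    refine ⟨i, fun z hz => ?_⟩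
    obtain ⟨c, rfl⟩ := Submodule.mem_span_singleton.1 hz
    exact ⟨Submodule.smul_mem _ _ h1, by rw [map_smul]; exact Submodule.smul_mem _ _ h2⟩
  · intro M N _ _ hM hN hMN
    obtain ⟨i, hi⟩ := hM (le_sup_left.trans hMN)
    obtain ⟨k, hk⟩ := hN (le_sup_right.trans hMN)
    refine ⟨max i k, fun z hz => ?_⟩
    obtain ⟨x, hx, y, hy, rfl⟩ := Submodule.mem_sup.1 hz
    obtain ⟨p1, p2⟩ := h.lift (hi x hx).1 (hi x hx).2 (le_max_left i k)
    obtain ⟨q1, q2⟩ := h.lift (hk y hy).1 (hk y hy).2 (le_max_right i k)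
    exact ⟨add_mem p1 q1, by rw [map_add]; exact add_mem p2 q2⟩

theorem TFilt.TT_le_C (h : TFilt t C α) {n : ℕ} {Z : Submodule R V} (hfg : Z.FG)
    (hZ : Z ≤ h.E (n + 1)) : ∃ k0, ∀ k ≥ k0, TT t Z (k + 1) ≤ C (n + k) := by
  obtain ⟨i, hi⟩ := h.common hfg hZ
  refine ⟨2 * i + 1, fun k hk => TT_le fun j hj z hz => ?_⟩
  rcases Nat.lt_or_ge i j with hij | hij
  · obtain ⟨d, rfl⟩ := Nat.exists_eq_add_of_le (show i + 1 ≤ j from hij)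
    rw [add_comm (i + 1) d, pow_add, Module.End.mul_apply]
    exact h.mono (by omega) (h.pow d _ _ (hi z hz).2)
  · exact h.mono (by omega) (h.pow j _ _ (hi z hz).1)

theorem TFilt.le_len_TT (h : TFilt t C α) {n : ℕ} {Z : Submodule R V} 
    (hZ : Z ≤ h.E (n + 1)) (k : ℕ) : k * rl (h.E n) Z ≤ rl ⊥ (TT t Z k) := by
  induction k with
  | zero => simp
  | succ k ih =>
    have h1 : rl ⊥ (TT t Z (k + 1)) = rl ⊥ (TT t Z k) + rl (TT t Z k) (TT t Z (k + 1)) :=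
      rl_add bot_le le_sup_left
    have h2 : TT t Z k ≤ h.E (n + k) := TT_le fun j hj z hz =>
      h.E_mono (by omega) (h.E_pow j (hZ hz))
    have h3 : rl (h.E n) Z ≤ rl (h.E (n + k)) (TT t Z (k + 1)) :=
      rl_le_of_map (t ^ k) (fun x hx => mem_TT hx (by omega)) (fun x hx => h.E_pow k hx)
        (fun x hx hx' => h.E_inj_pow k (hZ hx) hx')
    rw [h1]
    push_cast
    rw [add_mul, one_mul]
    exact add_le_add ih (h3.trans (rl_anti_left h2))

/-- The quotients `E (n + 1) / E n` have length at most `α`: if `Z ⊆ E (n + 1)` then the sum of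
`Z, tZ, …, t ^ k Z` has length at least `(k + 1) · λ(Z / Z ∩ E n)` and lies in `C (n + k)` for large
`k`. -/
theorem TFilt.rl_le (h : TFilt t C α) {n : ℕ} {Z : Submodule R V} (hfg : Z.FG)
    (hZ : Z ≤ h.E (n + 1)) : rl (h.E n) Z ≤ α := by
  by_contra hlt
  push Not at hlt
  have hlt : ((α + 1 : ℕ) : ℕ∞) ≤ rl (h.E n) Z := by
    push_cast; exact Order.add_one_le_of_lt hlt
  obtain ⟨k0, hk0⟩ := h.TT_le_C hfg hZ
  have h1 := hk0 (k0 + α * n) (by omega)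
  have h2 := (h.le_len_TT hZ (k0 + α * n + 1)).trans ((rl_mono_right h1).trans (h.len _))
  have h3 : (((k0 + α * n + 1) * (α + 1) : ℕ) : ℕ∞) ≤ (α * (n + (k0 + α * n) + 1) : ℕ) := by
    refine le_trans ?_ h2
    rw [Nat.cast_mul]
    gcongr
  have h4 : (k0 + α * n + 1) * (α + 1) ≤ α * (n + (k0 + α * n) + 1) := by exact_mod_cast h3
  nlinarith

/-- `E (n + 1)` is finitely generated over `E n`: take `Z` for which the length of `Z` modulo `E n`, which
is bounded by `α`, is maximal. -/
theorem TFilt.E_succ (h : TFilt t C α) (n : ℕ) : ∃ Z : Submodule R V, Z.FG ∧ Z ≤ h.E (n + 1) ∧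
    h.E (n + 1) ≤ h.E n ⊔ Z := by
  classical
  let P : ℕ → Prop := fun m => ∃ Z : Submodule R V, Z.FG ∧ Z ≤ h.E (n + 1) ∧ rl (h.E n) Z = m
  have hP0 : P 0 := ⟨⊥, Submodule.fg_bot, bot_le, by
    rw [Nat.cast_zero, rl_eq_zero_iff]; exact bot_le⟩
  have hspec : P (Nat.findGreatest P α) := Nat.findGreatest_spec (Nat.zero_le α) hP0
  obtain ⟨Z, hfg, hZ, hr⟩ := hspec
  refine ⟨Z, hfg, hZ, fun z hz => ?_⟩
  have hfg' : (Z ⊔ R ∙ z).FG := hfg.sup (Submodule.fg_span_singleton z)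
  have hZ' : Z ⊔ R ∙ z ≤ h.E (n + 1) := sup_le hZ (by rwa [Submodule.span_singleton_le_iff_mem])
  have hle := h.rl_le hfg' hZ'
  obtain ⟨m, hm⟩ := ENat.ne_top_iff_exists.1 (ne_top_of_le_ne_top (ENat.natCast_ne_top α) hle)
  rw [← hm] at hle
  have hle' : m ≤ α := by exact_mod_cast hle
  have hmax : m ≤ Nat.findGreatest P α := Nat.le_findGreatest hle' ⟨_, hfg', hZ', hm.symm⟩
  have hadd : rl (h.E n) (h.E n ⊔ (Z ⊔ R ∙ z)) = rl (h.E n) (h.E n ⊔ Z) +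
      rl (h.E n ⊔ Z) (h.E n ⊔ (Z ⊔ R ∙ z)) :=
    rl_add le_sup_left (sup_le_sup_left le_sup_left _)
  rw [rl_sup_right, rl_sup_right, ← hm, hr] at hadd
  have h0 : rl (h.E n ⊔ Z) (h.E n ⊔ (Z ⊔ R ∙ z)) = 0 := by
    by_contra hne
    have h1 : (1 : ℕ∞) ≤ rl (h.E n ⊔ Z) (h.E n ⊔ (Z ⊔ R ∙ z)) := Order.one_le_iff_ne_zero.2 hne
    have h2 : ((Nat.findGreatest P α + 1 : ℕ) : ℕ∞) ≤ (m : ℕ) := by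
      rw [hadd]; push_cast; gcongr
    have h3 : Nat.findGreatest P α + 1 ≤ m := by exact_mod_cast h2
    omega
  rw [rl_eq_zero_iff] at h0
  exact h0 ((le_sup_right : Z ⊔ R ∙ z ≤ _) ((le_sup_right : R ∙ z ≤ _)
    (Submodule.mem_span_singleton_self z)))

theorem TFilt.E_fg (h : TFilt t C α) (n : ℕ) : (h.E n).FG := by
  induction n with
  | zero => rw [h.E_zero]; exact Submodule.fg_bot
  | succ n ih =>
    obtain ⟨Z, hfg, h1, h2⟩ := h.E_succ n
    rw [le_antisymm h2 (sup_le (h.E_mono (by omega)) h1)]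
    exact ih.sup hfg

/-- Linear growth of the lengths forces `C` to be generated by `t` in large degrees: the lengths of
`E (n + 1) / E n` are nondecreasing and bounded, so eventually constant, which makes `E` generated by
`t` from some degree on, and then `E (n + 1) = C n` for large `n`. -/
theorem TFilt.stable (h : TFilt t C α) : ∃ n0, ∀ n ≥ n0, C (n + 1) ≤ C n ⊔ (C n).map t := by
  have hfin : ∀ n, ∃ e : ℕ, rl (h.E n) (h.E (n + 1)) = e ∧ e ≤ α := fun n => by
    have hle := h.rl_le (h.E_fg (n + 1)) le_rfl
    obtain ⟨m, hm⟩ := ENat.ne_top_iff_exists.1 (ne_top_of_le_ne_top (ENat.natCast_ne_top α) hle)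
    rw [← hm] at hle
    exact ⟨m, hm.symm, by exact_mod_cast hle⟩
  choose e he heα using hfin
  have hstep : ∀ n, rl (h.E n) (h.E (n + 1)) ≤ rl (h.E (n + 1)) ((h.E (n + 1)).map t) := fun n =>
    rl_le_of_map t (fun x hx => ⟨x, hx, rfl⟩) (fun x hx => h.E_map hx)
      (fun x hx hx' => h.E_inj hx hx')
  have hmap : ∀ n, (h.E n).map t ≤ h.E (n + 1) := by
    rintro n _ ⟨x, hx, rfl⟩
    exact h.E_map hx
  have hmono : Monotone e := by
    refine monotone_nat_of_le_succ fun n => ?_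
    have := (hstep n).trans (rl_mono_right (hmap (n + 1)))
    rw [he, he] at this
    exact_mod_cast this
  obtain ⟨n1, hn1⟩ : ∃ n1, ∀ n ≥ n1, e n = e n1 := by
    classical
    let P : ℕ → Prop := fun m => ∃ n, e n = m
    obtain ⟨n1, hn1⟩ : P (Nat.findGreatest P α) :=
      Nat.findGreatest_spec (heα 0) ⟨0, rfl⟩
    refine ⟨n1, fun n hn => le_antisymm ?_ (hmono hn)⟩
    rw [hn1]
    exact Nat.le_findGreatest (heα n) ⟨n, rfl⟩
  have hgen : ∀ n ≥ n1, h.E (n + 2) ≤ h.E (n + 1) ⊔ (h.E (n + 1)).map t := by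
    intro n hn
    have hadd : rl (h.E (n + 1)) (h.E (n + 2)) = rl (h.E (n + 1)) (h.E (n + 1) ⊔ (h.E (n + 1)).map t)
        + rl (h.E (n + 1) ⊔ (h.E (n + 1)).map t) (h.E (n + 2)) :=
      rl_add le_sup_left (sup_le (h.E_mono (by omega)) (hmap _))
    rw [rl_sup_right, he] at hadd
    have h1 := hstep n
    rw [he, hn1 n hn, ← hn1 (n + 1) (by omega)] at h1
    rw [← rl_eq_zero_iff]
    by_contra hne
    have h3 := Order.one_le_iff_ne_zero.2 hne
    have h2 : ((e (n + 1) + 1 : ℕ) : ℕ∞) ≤ (e (n + 1) : ℕ) := by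
      calc ((e (n + 1) + 1 : ℕ) : ℕ∞) = (e (n + 1) : ℕ∞) + 1 := by push_cast; rfl
        _ ≤ _ := add_le_add h1 h3
        _ = _ := hadd.symm
    have h4 : e (n + 1) + 1 ≤ e (n + 1) := by exact_mod_cast h2
    omega
  have hTT : ∀ D, h.E (n1 + 1 + D) ≤ TT t (h.E (n1 + 1)) (D + 1) := by
    intro D
    induction D with
    | zero =>
      intro z hz
      exact mem_TT (j := 0) hz (by omega)
    | succ D ih =>
      have h1 := hgen (n1 + D) (by omega)
      rw [show n1 + D + 2 = n1 + 1 + (D + 1) by ring, show n1 + D + 1 = n1 + 1 + D by ring] at h1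
      refine h1.trans (sup_le (ih.trans le_sup_left) ?_)
      refine (Submodule.map_mono ih).trans ?_
      rw [Submodule.map_le_iff_le_comap]
      refine TT_le fun j hj z hz => ?_
      rw [Submodule.mem_comap, ← Module.End.mul_apply, ← pow_succ']
      exact mem_TT hz (by omega)
  obtain ⟨k0, hk0⟩ := h.TT_le_C (h.E_fg (n1 + 1)) le_rfl
  have heq : ∀ D ≥ k0, h.E (n1 + D + 1) = C (n1 + D) := fun D hD =>
    le_antisymm (by
      rw [show n1 + D + 1 = n1 + 1 + D by ring]
      exact (hTT D).trans (hk0 D hD)) (h.le_E _)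
  refine ⟨n1 + k0, fun n hn => ?_⟩
  obtain ⟨D, rfl⟩ := Nat.exists_eq_add_of_le (show n1 ≤ n by omega)
  rw [← heq D (by omega)]
  exact (h.le_E _).trans (hgen (n1 + D) (by omega))

end ab
end E2

/-! ### Generation of the asymptotic order filtration -/

namespace E2
section inst
variable {R : Type*} [CommRing R] {A : Type*} [CommRing A] [Algebra R A]

/-- `x ↦ x / aⁿ`, where `u` is the inverse of `a` in `A`. -/
def phi (R : Type*) [CommRing R] {A : Type*} [CommRing A] [Algebra R A] (u : A) (n : ℕ) : R →ₗ[R] A :=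
  (LinearMap.mulRight R (u ^ n)).comp (Algebra.linearMap R A)

theorem phi_apply (u : A) (n : ℕ) (x : R) : phi R u n x = algebraMap R A x * u ^ n := rfl

theorem phi_add {u : A} {a : R} (hu : algebraMap R A a * u = 1) (n k : ℕ) (x : R) :
    phi R u (n + k) (a ^ k * x) = phi R u n x := by
  rw [phi_apply, phi_apply, map_mul, map_pow, pow_add]
  have : algebraMap R A a ^ k * u ^ k = 1 := by rw [← mul_pow, hu, one_pow]
  linear_combination (algebraMap R A x * u ^ n) * this

theorem phi_add' {u : A} {a : R} (hu : algebraMap R A a * u = 1) (n k : ℕ) (x : R) :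
    phi R u (k + n) (a ^ k * x) = phi R u n x := by
  rw [add_comm, phi_add hu]

theorem phi_inj {u : A} {a : R} (hu : algebraMap R A a * u = 1)
    (hinj : Function.Injective (algebraMap R A)) (n : ℕ) : Function.Injective (phi R u n) := by
  intro x y hxy
  apply hinj
  rw [phi_apply, phi_apply] at hxy
  have : u ^ n * algebraMap R A a ^ n = 1 := by rw [← mul_pow, mul_comm, hu, one_pow]
  linear_combination (algebraMap R A a ^ n) * hxy - (algebraMap R A x - algebraMap R A y) * this

/-- The fractions `x / aⁱ` with `x` of asymptotic order at least `i + 1`. -/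
def PP (R : Type*) [CommRing R] {A : Type*} [CommRing A] [Algebra R A] {u : A} {a : R}
    (hu : algebraMap R A a * u = 1) (Q : Ideal R) (ha : a ∈ Q) : Submodule R A where
  carrier := {v | ∃ i, ∃ x ∈ FI Q (i + 1), phi R u i x = v}
  add_mem' := by
    have ha' : ∀ k, a ^ k ∈ FI Q k := fun k => pow_le_FI Q k (Ideal.pow_mem_pow ha k)
    rintro _ _ ⟨i, x, hx, rfl⟩ ⟨k, y, hy, rfl⟩
    refine ⟨i + k, a ^ k * x + a ^ i * y, add_mem ?_ ?_, ?_⟩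
    · have := mul_mem_FI (ha' k) hx
      rwa [show k + (i + 1) = i + k + 1 by ring] at this
    · have := mul_mem_FI (ha' i) hy
      rwa [show i + (k + 1) = i + k + 1 by ring] at this
    · rw [map_add, phi_add hu, phi_add' hu]
  zero_mem' := ⟨0, 0, zero_mem _, map_zero _⟩
  smul_mem' := by
    rintro c _ ⟨i, x, hx, rfl⟩
    exact ⟨i, c • x, Submodule.smul_mem _ _ hx, map_smul _ _ _⟩

theorem RegPair.phi_mem {a b : R} (h : RegPair a b) {u : A} (hu : algebraMap R A a * u = 1)
    (hinj : Function.Injective (algebraMap R A)) (ha : a ∈ Ideal.span {a, b}) (n : ℕ) (x : R) :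
    phi R u n x ∈ PP R hu (Ideal.span {a, b}) ha ↔ x ∈ FI (Ideal.span {a, b}) (n + 1) := by
  refine ⟨?_, fun hx => ⟨n, x, hx, rfl⟩⟩
  rintro ⟨i, y, hy, hxy⟩
  apply h.FI_cancel (i := i)
  rw [← phi_add hu i n, ← phi_add' hu n i] at hxy
  rw [← phi_inj hu hinj _ hxy]
  have := mul_mem_FI (pow_le_FI (Ideal.span {a, b}) n (Ideal.pow_mem_pow ha n)) hy
  rwa [show n + (i + 1) = n + 1 + i by ring] at this

/-- In large degrees the asymptotic order filtration of `Q = (a, b)` is generated by `Q`, modulo the next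
step. Write `A` for the localization of `R` away from `a` and `P` for the submodule `PP`; then `TFilt`
applies to `V = A / P`, with `t` the multiplication by `b / a` and `C n` the image of the fractions
`x / aⁿ` with `x` of asymptotic order at least `n`, and `RegPair.ge_succ` is its field `van`. -/
theorem RegPair.FI_gen [IsLocalRing R] [IsNoetherianRing R] {a b : R} (h : RegPair a b)
    (hQ : Big (Ideal.span {a, b})) : ∃ n0, ∀ n ≥ n0,
      FI (Ideal.span {a, b}) (n + 1) ≤
        Ideal.span {a, b} * FI (Ideal.span {a, b}) n ⊔ FI (Ideal.span {a, b}) (n + 2) := by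
  obtain ⟨α, hα⟩ := h.FI_growth hQ
  have ha : a ∈ Ideal.span {a, b} := Ideal.subset_span (by simp)
  have hb : b ∈ Ideal.span {a, b} := Ideal.subset_span (by simp)
  set Q := Ideal.span {a, b} with hQd
  have ha1 : ∀ {n x}, x ∈ FI Q n → a * x ∈ FI Q (n + 1) := fun {n x} hx => by
    rw [add_comm]; exact mul_mem_FI (pow_le_FI Q 1 (by simpa using ha)) hx
  have hb1 : ∀ {n x}, x ∈ FI Q n → b * x ∈ FI Q (n + 1) := fun {n x} hx => by
    rw [add_comm]; exact mul_mem_FI (pow_le_FI Q 1 (by simpa using hb)) hx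
  let A := Localization.Away a
  have hinj : Function.Injective (algebraMap R A) := by
    refine IsLocalization.injective A (M := Submonoid.powers a) ?_
    rintro _ ⟨k, rfl⟩
    refine pow_mem ?_ k
    rw [mem_nonZeroDivisors_iff_right]
    intro x hx
    exact h.nzl x (by rw [mul_comm]; exact hx)
  obtain ⟨u, hu⟩ : ∃ u : A, algebraMap R A a * u = 1 :=
    ⟨IsLocalization.Away.invSelf a, IsLocalization.Away.mul_invSelf a⟩
  let P := PP R hu Q ha
  have hP : ∀ n x, phi R u n x ∈ P ↔ x ∈ FI Q (n + 1) := h.phi_mem hu hinj ha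
  let psi : ℕ → R →ₗ[R] (A ⧸ P) := fun n => P.mkQ.comp (phi R u n)
  have hpsi0 : ∀ n x, psi n x = 0 ↔ x ∈ FI Q (n + 1) := fun n x => by
    rw [← hP, ← Submodule.Quotient.mk_eq_zero P]; rfl
  have hpsia : ∀ n k x, psi (n + k) (a ^ k * x) = psi n x := fun n k x => by
    change P.mkQ (phi R u (n + k) (a ^ k * x)) = P.mkQ (phi R u n x)
    rw [phi_add hu]
  let tA : A →ₗ[R] A := LinearMap.mulLeft R (algebraMap R A b * u)
  have htA : ∀ n x, tA (phi R u n x) = phi R u (n + 1) (b * x) := fun n x => by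
    change algebraMap R A b * u * phi R u n x = _
    rw [phi_apply, phi_apply, map_mul]; ring
  let t : (A ⧸ P) →ₗ[R] (A ⧸ P) := P.mapQ P tA (by
    rintro _ ⟨i, x, hx, rfl⟩
    refine ⟨i + 1, b * x, hb1 hx, (htA i x).symm⟩)
  have ht : ∀ n x, t (psi n x) = psi (n + 1) (b * x) := fun n x => by
    change P.mkQ (tA (phi R u n x)) = P.mkQ (phi R u (n + 1) (b * x))
    rw [htA]
  have htp : ∀ k n x, (t ^ k) (psi n x) = psi (n + k) (b ^ k * x) := by
    intro k
    induction k with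
    | zero => intro n x; simp
    | succ k ih =>
      intro n x
      rw [pow_succ', Module.End.mul_apply, ih, ht, ← mul_assoc, ← pow_succ', add_assoc]
  let C : ℕ → Submodule R (A ⧸ P) := fun n => Submodule.map (psi n) (FI Q n)
  have hT : TFilt t C α := by
    refine ⟨monotone_nat_of_le_succ ?_, ?_, ?_, ?_⟩
    · rintro n _ ⟨x, hx, rfl⟩
      exact ⟨a * x, ha1 hx, by simpa using hpsia n 1 x⟩
    · rintro n _ ⟨x, hx, rfl⟩
      exact ⟨b * x, hb1 hx, (ht n x).symm⟩
    · intro n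
      refine le_trans ?_ (hα n)
      refine rl_ge_of_map (psi n) (fun x hx => ⟨x, hx, rfl⟩) (fun x hx => (hpsi0 n x).2 hx) ?_
      rintro _ ⟨x, hx, rfl⟩
      exact ⟨x, hx, by simp⟩
    · rintro n _ ⟨x, hx, rfl⟩ ⟨y, hy, hxy⟩
      rw [htp, ← hpsia n (n + 1) y] at hxy
      have h1 : b ^ (n + 1) * x - a ^ (n + 1) * y ∈ FI Q (n + (n + 1) + 1) := by
        rw [← hpsi0, map_sub, hxy, sub_self]
      rw [mem_FI] at h1
      rw [hpsi0, mem_FI]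
      push_cast
      refine h.ge_succ (y := y) (le_refl (n + 1)) hx ?_
      push_cast at h1 ⊢
      exact h1
  obtain ⟨n0, hn0⟩ := hT.stable
  refine ⟨n0, fun n hn x hx => ?_⟩
  have h1 := hn0 n hn (show psi (n + 1) x ∈ C (n + 1) from ⟨x, hx, rfl⟩)
  obtain ⟨_, ⟨y, hy, rfl⟩, _, ⟨_, ⟨w, hw, rfl⟩, rfl⟩, hs⟩ := Submodule.mem_sup.1 h1
  rw [ht, ← hpsia n 1 y, pow_one, ← map_add] at hs
  have h2 : x - (a * y + b * w) ∈ FI Q (n + 2) := by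
    rw [← hpsi0 (n + 1), map_sub, hs, sub_self]
  refine Submodule.mem_sup.2 ⟨a * y + b * w, add_mem (Ideal.mul_mem_mul ha hy)
    (Ideal.mul_mem_mul hb hw), _, h2, by ring⟩

end inst
end E2

/-! ### Completions -/

namespace E2
section cp
variable {R : Type*} [CommRing R] {S : Type*} [CommRing S] [Algebra R S]

/-- `S` is the completion of `R` for the `I`-adic topology, with `N n` the closure of `I ^ n`. -/
structure Cpl (I : Ideal R) (N : ℕ → Ideal S) : Prop where
  mem_iff : ∀ r n, algebraMap R S r ∈ N n ↔ r ∈ I ^ n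
  dense : ∀ y n, ∃ r, y - algebraMap R S r ∈ N n
  lim : ∀ s : ℕ → S, (∀ n, s (n + 1) - s n ∈ N n) → ∃ l, ∀ n, l - s n ∈ N n
  haus : ∀ y, (∀ n, y ∈ N n) → y = 0
  anti : Antitone N

theorem cpl_adicCompletion (I : Ideal R) :
    Cpl I (fun n => RingHom.ker (AdicCompletion.evalₐ I n).toRingHom) := by
  have key : ∀ y n, y ∈ RingHom.ker (AdicCompletion.evalₐ I n).toRingHom ↔
    AdicCompletion.evalₐ I n y = 0 := fun y n => Iff.rfl
  have hmem : ∀ r n, algebraMap R (AdicCompletion I R) r ∈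
      RingHom.ker (AdicCompletion.evalₐ I n).toRingHom ↔ r ∈ I ^ n := by
    intro r n
    rw [key, AlgHom.commutes, Ideal.Quotient.algebraMap_eq, Ideal.Quotient.eq_zero_iff_mem]
  have hdense : ∀ y n, ∃ r, y - algebraMap R (AdicCompletion I R) r ∈
      RingHom.ker (AdicCompletion.evalₐ I n).toRingHom := by
    intro y n
    obtain ⟨r, hr⟩ := Ideal.Quotient.mk_surjective (AdicCompletion.evalₐ I n y)
    refine ⟨r, ?_⟩
    rw [key, map_sub, AlgHom.commutes, Ideal.Quotient.algebraMap_eq, hr, sub_self]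
  have hanti : Antitone (fun n => RingHom.ker (AdicCompletion.evalₐ I n).toRingHom) := by
    refine antitone_nat_of_succ_le fun n y hy => ?_
    obtain ⟨x, rfl⟩ := AdicCompletion.mk_surjective I R y
    simp only [key, AdicCompletion.evalₐ_mk, Ideal.Quotient.eq_zero_iff_mem] at hy ⊢
    have h1 := x.2 (Nat.le_succ n)
    rw [SModEq.sub_mem, smul_eq_mul, Ideal.mul_top] at h1
    have := add_mem h1 (Ideal.pow_le_pow_right (Nat.le_succ n) hy)
    rwa [sub_add_cancel] at this
  refine ⟨hmem, hdense, ?_, ?_, hanti⟩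
  · intro s hs
    choose r hr using fun n => hdense (s n) n
    have hc : ∀ n, r (n + 1) - r n ∈ I ^ n := by
      intro n
      rw [← hmem, map_sub]
      have h1 := hanti (Nat.le_succ n) (hr (n + 1))
      have := add_mem (sub_mem (hr n) h1) (hs n)
      convert this using 1
      ring
    let x : AdicCompletion.AdicCauchySequence I R := AdicCompletion.AdicCauchySequence.mk I R r (by
      intro n
      rw [SModEq.sub_mem, smul_eq_mul, Ideal.mul_top, ← neg_sub]
      exact neg_mem (hc n))
    refine ⟨AdicCompletion.mk I R x, fun n => ?_⟩
    have h2 : AdicCompletion.mk I R x - algebraMap R _ (r n) ∈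
        RingHom.ker (AdicCompletion.evalₐ I n).toRingHom := by
      rw [key, map_sub, AdicCompletion.evalₐ_mk, AlgHom.commutes, Ideal.Quotient.algebraMap_eq]
      exact sub_self _
    have := sub_mem h2 (hr n)
    rwa [sub_sub_sub_cancel_right] at this
  · intro y hy
    exact AdicCompletion.ext_evalₐ fun n => by rw [map_zero]; exact hy n

variable {I : Ideal R} {N : ℕ → Ideal S}

theorem Cpl.approx (h : Cpl I N) {y : S} {n k : ℕ} (hy : y ∈ N n) (hk : n ≤ k) :
    ∃ r ∈ I ^ n, y - algebraMap R S r ∈ N k := by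
  obtain ⟨r, hr⟩ := h.dense y k
  refine ⟨r, ?_, hr⟩
  rw [← h.mem_iff]
  have := sub_mem hy (h.anti hk hr)
  rwa [sub_sub_cancel] at this

theorem Cpl.top (h : Cpl I N) (y : S) : y ∈ N 0 := by
  obtain ⟨r, hr⟩ := h.dense y 0
  have : algebraMap R S r ∈ N 0 := (h.mem_iff r 0).2 (by simp)
  have := add_mem hr this
  rwa [sub_add_cancel] at this

theorem Cpl.mul (h : Cpl I N) {x y : S} {m n : ℕ} (hx : x ∈ N m) (hy : y ∈ N n) :
    x * y ∈ N (m + n) := by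
  obtain ⟨r, hr, hr'⟩ := h.approx hx (Nat.le_add_right m n)
  obtain ⟨s, hs, hs'⟩ := h.approx hy (Nat.le_add_left n m)
  have e : x * y = (x - algebraMap R S r) * y + algebraMap R S r * (y - algebraMap R S s) +
      algebraMap R S (r * s) := by rw [map_mul]; ring
  rw [e]
  refine add_mem (add_mem (Ideal.mul_mem_right _ _ hr') (Ideal.mul_mem_left _ _ hs')) ?_
  rw [h.mem_iff, pow_add]
  exact Ideal.mul_mem_mul hr hs

theorem Cpl.mul_eq (h : Cpl I N) {x y : S} {m n k : ℕ} (hx : x ∈ N m) (hy : y ∈ N n)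
    (hk : k = m + n) : x * y ∈ N k := by rw [hk]; exact h.mul hx hy

/-- The elements of `I ^ n` that agree with an element of the ideal `z S` modulo `N (n + 1)`. -/
def Cpl.lead (h : Cpl I N) (z : S) : I.Filtration R where
  N n := 
    { carrier := {r | r ∈ I ^ n ∧ ∃ w, z * w - algebraMap R S r ∈ N (n + 1)}
      add_mem' := by
        rintro r s ⟨hr, w, hw⟩ ⟨hs, v, hv⟩
        refine ⟨add_mem hr hs, w + v, ?_⟩
        have := add_mem hw hv
        rw [map_add]
        convert this using 1
        ring
      zero_mem' := ⟨zero_mem _, 0, by simp⟩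
      smul_mem' := by
        rintro c r ⟨hr, w, hw⟩
        refine ⟨Ideal.mul_mem_left _ _ hr, algebraMap R S c * w, ?_⟩
        have := Ideal.mul_mem_left _ (algebraMap R S c) hw
        rw [smul_eq_mul, map_mul]
        convert this using 1
        ring }
  mono i := by
    rintro r ⟨hr, w, hw⟩
    refine ⟨Ideal.pow_le_pow_right (Nat.le_succ i) hr, 0, ?_⟩
    rw [mul_zero, zero_sub]
    exact neg_mem ((h.mem_iff _ _).2 hr)
  smul_le i := by
    rw [Submodule.smul_le]
    rintro c hc r ⟨hr, w, hw⟩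
    refine ⟨by rw [pow_succ']; exact Ideal.mul_mem_mul hc hr, algebraMap R S c * w, ?_⟩
    have hc' : algebraMap R S c ∈ N 1 := (h.mem_iff _ _).2 (by simpa using hc)
    have := h.mul_eq hc' hw (show i + 1 + 1 = 1 + (i + 1) by ring)
    rw [smul_eq_mul, map_mul]
    convert this using 1
    ring

/-- Artin–Rees for principal ideals of the completion. -/
theorem Cpl.artinRees [IsNoetherianRing R] (h : Cpl I N) (z : S) :
    ∃ k, ∀ n ≥ k, ∀ w, z * w ∈ N n → ∃ c ∈ N (n - k), z * w = z * c := by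
  have hst : (h.lead z).Stable := by
    refine (I.stableFiltration_stable (⊤ : Submodule R R)).of_le ?_
    rintro n r ⟨hr, -⟩
    change r ∈ I ^ n • (⊤ : Submodule R R)
    simpa using hr
  obtain ⟨k, hk⟩ := hst.exists_pow_smul_eq_of_ge
  have hstep : ∀ n w, ∃ c, k ≤ n → z * w ∈ N n → c ∈ N (n - k) ∧ z * (w - c) ∈ N (n + 1) := by
    intro n w
    by_cases hn : k ≤ n
    swap
    · exact ⟨0, fun h' => absurd h' hn⟩
    by_cases hw : z * w ∈ N n
    swap
    · exact ⟨0, fun _ h' => absurd h' hw⟩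
    obtain ⟨r, hr, hr'⟩ := h.approx hw (Nat.le_succ n)
    have hrl : r ∈ (h.lead z).N n := ⟨hr, w, hr'⟩
    rw [hk n hn] at hrl
    have : ∃ c ∈ N (n - k), algebraMap R S r - z * c ∈ N (n + 1) := by
      refine Submodule.smul_induction_on hrl ?_ ?_
      · rintro p hp g ⟨-, v, hv⟩
        have hp' : algebraMap R S p ∈ N (n - k) := (h.mem_iff _ _).2 hp
        refine ⟨algebraMap R S p * v, Ideal.mul_mem_right _ _ hp', ?_⟩
        have := neg_mem (h.mul_eq hp' hv (show n + 1 = n - k + (k + 1) by omega))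
        rw [smul_eq_mul, map_mul]
        convert this using 1
        ring
      · rintro x y ⟨c, hc, hc'⟩ ⟨d, hd, hd'⟩
        refine ⟨c + d, add_mem hc hd, ?_⟩
        rw [map_add]
        convert add_mem hc' hd' using 1
        ring
    obtain ⟨c, hc, hc'⟩ := this
    refine ⟨c, fun _ _ => ⟨hc, ?_⟩⟩
    convert add_mem hr' hc' using 1
    ring
  choose c hc using hstep
  refine ⟨k, fun n hn w hw => ?_⟩
  let s : ℕ → S := fun i => Nat.rec 0 (fun i s => s + c (n + i) (w - s)) i
  have hs0 : s 0 = 0 := rfl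
  have hs1 : ∀ i, s (i + 1) = s i + c (n + i) (w - s i) := fun i => rfl
  have hmem : ∀ i, z * (w - s i) ∈ N (n + i) := by
    intro i
    induction i with
    | zero => simpa [hs0] using hw
    | succ i ih =>
      have := (hc (n + i) (w - s i) (by omega) ih).2
      rw [hs1, ← sub_sub]
      exact this
  have hdiff : ∀ i, s (i + 1) - s i ∈ N (n - k + i) := by
    intro i
    rw [hs1, add_sub_cancel_left]
    have := (hc (n + i) (w - s i) (by omega) (hmem i)).1
    rwa [show n + i - k = n - k + i by omega] at this
  have hsi : ∀ i, s i ∈ N (n - k) := by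
    intro i
    induction i with
    | zero => rw [hs0]; exact zero_mem _
    | succ i ih =>
      have := add_mem (h.anti (by omega) (hdiff i)) ih
      rwa [sub_add_cancel] at this
  obtain ⟨l, hl⟩ := h.lim s fun i => h.anti (by omega) (hdiff i)
  refine ⟨l, ?_, ?_⟩
  · have := add_mem (hl (n - k)) (hsi (n - k))
    rwa [sub_add_cancel] at this
  · rw [← sub_eq_zero]
    refine h.haus _ fun i => ?_
    have := sub_mem (h.anti (by omega : i ≤ n + i) (hmem i)) (Ideal.mul_mem_left _ z (hl i))
    convert this using 1
    ring

/-- In a reduced completion the order of `x ^ j` grows at most linearly in `j`: `x² w ∈ N n` implies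
`x w ∈ N (n - k)` by Artin–Rees, since `x² w = x² c` and reducedness give `x w = x c`. -/
theorem Cpl.reduced_step [IsNoetherianRing R] [IsReduced S] (h : Cpl I N) (x : S) :
    ∃ k, ∀ j n, x ^ (j + 1) ∈ N n → x ∈ N (n - j * k) := by
  obtain ⟨k, hk⟩ := h.artinRees (x ^ 2)
  have h1 : ∀ n w, x ^ 2 * w ∈ N n → x * w ∈ N (n - k) := by
    intro n w hw
    rcases le_or_gt k n with hn | hn
    · obtain ⟨c, hc, he⟩ := hk n hn w hw
      have h0 : x * (w - c) = 0 := by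
        have : (x * (w - c)) ^ 2 = 0 := by linear_combination (w - c) * he
        exact pow_eq_zero_iff (two_ne_zero) |>.1 this
      have : x * w = x * c := by linear_combination h0
      rw [this]
      exact Ideal.mul_mem_left _ _ hc
    · rw [Nat.sub_eq_zero_of_le hn.le]
      exact h.top _
  refine ⟨k, fun j => ?_⟩
  induction j with
  | zero => intro n hn; simpa using hn
  | succ j ih =>
    intro n hn
    have := ih (n - k) (by
      have := h1 n (x ^ j) (by rw [← pow_add, add_comm]; exact hn)
      rwa [← pow_succ'] at this)
    rwa [show n - (j + 1) * k = n - k - j * k by rw [add_mul]; omega]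

/-- Chevalley-type argument: if a decreasing sequence of ideals is not eventually inside `I ^ l`, then
some nonzero element of the completion is a limit of elements of each of them. -/
theorem Cpl.chevalley [IsNoetherianRing R] (h : Cpl I N) (hart : ∀ k, IsArtinian R (R ⧸ I ^ k))
    {F : ℕ → Ideal R} (hF : Antitone F) {l : ℕ} (hl : ∀ m, ¬ F m ≤ I ^ l) :
    ∃ x : S, x ≠ 0 ∧ ∀ m k, ∃ f ∈ F m, x - algebraMap R S f ∈ N k := by
  have hstab : ∀ k, ∃ m0, ∀ m, F m0 ≤ F m ⊔ I ^ k := by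
    intro k
    have := hart k
    let f : ℕ →o (Submodule R (R ⧸ I ^ k))ᵒᵈ :=
      ⟨fun m => OrderDual.toDual (Submodule.map (I ^ k).mkQ (F m)), fun m n hmn =>
        Submodule.map_mono (hF hmn)⟩
    obtain ⟨m0, hm0⟩ := IsArtinian.monotone_stabilizes f
    refine ⟨m0, fun m => ?_⟩
    rcases le_total m m0 with hm | hm
    · exact (hF hm).trans le_sup_left
    · have h1 : Submodule.map (I ^ k).mkQ (F m0) = Submodule.map (I ^ k).mkQ (F m) := hm0 m hm
      have h2 := Submodule.comap_map_mkQ (I ^ k) (F m)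
      intro x hx
      have : x ∈ Submodule.comap (I ^ k).mkQ (Submodule.map (I ^ k).mkQ (F m)) := by
        rw [← h1]; exact ⟨x, hx, rfl⟩
      rw [h2] at this
      rwa [sup_comm]
  choose M hM using hstab
  have hstep : ∀ k x, ∃ y, x ∈ F (M k) → y ∈ F (M (k + 1)) ∧ y - x ∈ I ^ k := by
    intro k x
    by_cases hx : x ∈ F (M k)
    · obtain ⟨f, hf, p, hp, rfl⟩ := Submodule.mem_sup.1 (hM k (M (k + 1)) hx)
      exact ⟨f, fun _ => ⟨hf, by simpa using hp⟩⟩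
    · exact ⟨0, fun h' => absurd h' hx⟩
  choose c hc using hstep
  obtain ⟨x0, hx0, hx0'⟩ := Set.not_subset.1 (hl (M l))
  let s : ℕ → R := fun i => Nat.rec x0 (fun i s => c (l + i) s) i
  have hs : ∀ i, s i ∈ F (M (l + i)) := by
    intro i
    induction i with
    | zero => exact hx0
    | succ i ih => exact (hc (l + i) (s i) ih).1
  have hd : ∀ i, s (i + 1) - s i ∈ I ^ (l + i) := fun i => (hc (l + i) (s i) (hs i)).2
  obtain ⟨x, hx⟩ := h.lim (fun i => algebraMap R S (s i)) fun i => by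
    rw [← map_sub, h.mem_iff]
    exact Ideal.pow_le_pow_right (by omega) (hd i)
  refine ⟨x, ?_, fun m k => ?_⟩
  · rintro rfl
    have h1 := hx l
    rw [zero_sub, neg_mem_iff, h.mem_iff] at h1
    have h2 : ∀ i, s i - s 0 ∈ I ^ l := by
      intro i
      induction i with
      | zero => simp
      | succ i ih =>
        have := add_mem (Ideal.pow_le_pow_right (by omega) (hd i)) ih
        rwa [sub_add_sub_cancel] at this
    have := sub_mem h1 (h2 l)
    rw [sub_sub_cancel] at this
    exact hx0' this
  · obtain ⟨f, hf, p, hp, he⟩ := Submodule.mem_sup.1 (hM (l + k) m (hs k))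
    refine ⟨f, hf, ?_⟩
    have hp' : algebraMap R S p ∈ N k := (h.mem_iff _ _).2 (Ideal.pow_le_pow_right (by omega) hp)
    have := add_mem (hx k) hp'
    rw [← he, map_add] at this
    convert this using 1
    ring

end cp
end E2

/-! ### Normal powers and ordinary powers -/

namespace E2
section fn
variable {R : Type*} [CommRing R]

theorem pow_floor_mul_le {Q A B : Ideal R} {s t u : ℝ} (hx : A ≤ Q ^ ⌊s⌋₊) (hy : B ≤ Q ^ ⌊t⌋₊)
    (h : u ≤ s + t - 1) : A * B ≤ Q ^ ⌊u⌋₊ :=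
  Ideal.mul_le.2 fun _ ha _ hb => pow_floor_mul (hx ha) (hy hb) h

/-- The asymptotic order bound is uniform on finitely generated ideals. -/
theorem Ge.ideal [IsNoetherianRing R] {Q M : Ideal R} {q : ℝ} (h : ∀ x ∈ M, Ge Q x q) :
    ∀ κ : ℝ, 0 < κ → ∃ K : ℝ, ∀ j : ℕ, M ^ j ≤ Q ^ ⌊(q - κ) * j - K⌋₊ := by
  intro κ hκ
  have hM : M.FG := IsNoetherian.noetherian M
  induction M, hM using Submodule.fg_induction with
  | singleton x =>
    obtain ⟨K, hK⟩ := h x (Submodule.mem_span_singleton_self x) κ hκ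
    refine ⟨K, fun j => ?_⟩
    change (Ideal.span {x}) ^ j ≤ _
    rw [Ideal.span_singleton_pow, Ideal.span_singleton_le_iff_mem]
    exact hK j
  | sup M₁ M₂ hM₁ hM₂ h1 h2 =>
    obtain ⟨K, hK⟩ := h1 fun x hx => h x ((le_sup_left : M₁ ≤ M₁ ⊔ M₂) hx)
    obtain ⟨K', hK'⟩ := h2 fun x hx => h x ((le_sup_right : M₂ ≤ M₁ ⊔ M₂) hx)
    refine ⟨K + K' + 1, fun j => ?_⟩
    have e : (M₁ ⊔ M₂ : Ideal R) = M₁ + M₂ := rfl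
    rw [e, add_pow, Ideal.sum_eq_sup]
    refine Finset.sup_le fun i hi => Ideal.mul_le_left.trans ?_
    rw [Finset.mem_range] at hi
    refine pow_floor_mul_le (hK i) (hK' (j - i)) ?_
    rw [Nat.cast_sub (by omega)]
    linarith

variable [IsLocalRing R] [IsNoetherianRing R]
open IsLocalRing

/-- The asymptotic order filtration is cofinal in the `𝔪`-adic one: otherwise some nonzero `x` of the
completion is a limit of elements of each `FI Q m`, so that the powers of `x` have too large order for
a reduced ring. -/
theorem FI_le_pow (hur : AnalyticallyUnramified R) {Q : Ideal R} (hQ : Q ≤ maximalIdeal R)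
    (l : ℕ) : ∃ m, FI Q m ≤ maximalIdeal R ^ l := by
  by_contra! hl
  have : IsReduced (AdicCompletion (maximalIdeal R) R) := hur
  have h := cpl_adicCompletion (maximalIdeal R)
  obtain ⟨x, hx0, hx⟩ := h.chevalley
    (fun k => Big.isArtinian (⟨k, le_rfl⟩ : Big (maximalIdeal R ^ k)))
    (F := FI Q) (fun m n hmn => FI_anti Q hmn) hl
  obtain ⟨k, hk⟩ := h.reduced_step x
  obtain ⟨K, hK⟩ := Ge.ideal (fun y (hy : y ∈ FI Q (k + 2)) => mem_FI.1 hy) 1 one_pos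
  refine hx0 (h.haus x fun n => ?_)
  set j := n + ⌈|K|⌉₊ with hj
  set p := ⌊(((k + 2 : ℕ) : ℝ) - 1) * ((j + 1 : ℕ) : ℝ) - K⌋₊ with hp
  obtain ⟨f, hf, hxf⟩ := hx (k + 2) p
  have h1 := (h.mem_iff _ _).2 (Ideal.pow_right_mono hQ p (hK (j + 1) (Ideal.pow_mem_pow hf _)))
  rw [map_pow] at h1
  have h2 := Ideal.mem_of_dvd _ (sub_dvd_pow_sub_pow x _ (j + 1)) hxf
  have h3 := add_mem h2 h1
  rw [sub_add_cancel] at h3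
  refine h.anti ?_ (hk j p h3)
  have h4 : n + j * k ≤ p := by
    refine Nat.le_floor ?_
    have h5 := Nat.le_ceil |K|
    have h6 := le_abs_self K
    have h7 : (j : ℝ) = n + ⌈|K|⌉₊ := by rw [hj]; push_cast; ring
    push_cast
    have : (0:ℝ) ≤ k := by positivity
    nlinarith
  omega

/-- Generation modulo deeper steps, together with cofinality in the `𝔪`-adic filtration, gives
`FI Q (n + 1) ⊆ Q · FI Q n` for large `n`. -/
theorem RegPair.FI_le_pow {a b : R} (h : RegPair a b) (hur : AnalyticallyUnramified R)
    (hQ : Big (Ideal.span {a, b})) (hQm : Ideal.span {a, b} ≤ maximalIdeal R) :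
    ∃ n0, ∀ j, FI (Ideal.span {a, b}) (j + n0) ≤ Ideal.span {a, b} ^ j := by
  obtain ⟨n0, hn0⟩ := h.FI_gen hQ
  set Q := Ideal.span {a, b} with hQd
  have h1 : ∀ n ≥ n0, ∀ i, FI Q (n + 1) ≤ Q * FI Q n ⊔ FI Q (n + 2 + i) := by
    intro n hn i
    induction i with
    | zero => exact hn0 n hn
    | succ i ih =>
      refine ih.trans (sup_le le_sup_left ?_)
      have := hn0 (n + 1 + i) (by omega)
      rw [show n + 1 + i + 1 = n + 2 + i by ring, show n + 1 + i + 2 = n + 2 + (i + 1) by ring]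
        at this
      exact this.trans (sup_le_sup_right (Ideal.mul_mono_right (FI_anti Q (by omega))) _)
  have h2 : ∀ n ≥ n0, FI Q (n + 1) ≤ Q * FI Q n := by
    intro n hn
    obtain ⟨t, ht⟩ := hQ.pow (n + 1)
    obtain ⟨m, hm⟩ := E2.FI_le_pow hur hQm t
    refine (h1 n hn m).trans (sup_le le_rfl ?_)
    refine (FI_anti Q (by omega)).trans (hm.trans (ht.trans ?_))
    rw [pow_succ']
    exact Ideal.mul_mono_right (pow_le_FI Q n)
  refine ⟨n0, fun j => ?_⟩
  induction j with
  | zero => simp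
  | succ j ih =>
    rw [pow_succ', show j + 1 + n0 = j + n0 + 1 by ring]
    exact (h2 _ (by omega)).trans (Ideal.mul_mono_right ih)

theorem red_pow {L Q : Ideal R} {N : ℕ} (h : L ^ (N + 1) ≤ Q * L ^ N) (i : ℕ) :
    L ^ (N + i) ≤ Q ^ i * L ^ N := by
  induction i with
  | zero => simp
  | succ i ih =>
    calc L ^ (N + (i + 1)) = L * L ^ (N + i) := by ring
      _ ≤ L * (Q ^ i * L ^ N) := Ideal.mul_mono_right ih
      _ = Q ^ i * L ^ (N + 1) := by ring
      _ ≤ Q ^ i * (Q * L ^ N) := Ideal.mul_mono_right h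
      _ = Q ^ (i + 1) * L ^ N := by ring

theorem intCl_le_FI {L Q : Ideal R} {N : ℕ} (h : L ^ (N + 1) ≤ Q * L ^ N) (n : ℕ) :
    intCl (L ^ n) ≤ FI Q n := by
  refine Ideal.span_le.2 fun x hx => ?_
  obtain ⟨m, hm⟩ := integral_pow_mem hx
  have h1 : ∀ t, L ^ t ≤ Q ^ (t - N) := by
    intro t
    rcases le_or_gt N t with ht | ht
    · have := red_pow h (t - N)
      rw [Nat.add_sub_cancel' ht] at this
      exact this.trans Ideal.mul_le_left
    · rw [Nat.sub_eq_zero_of_le ht.le]; simp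
  intro κ hκ
  refine ⟨n * m + N, fun j => ?_⟩
  have hj0 : (0:ℝ) ≤ κ * j := by positivity
  rcases le_or_gt m j with hj | hj
  · have h2 := hm (j - m)
    rw [Nat.sub_add_cancel hj, ← pow_mul] at h2
    refine Ideal.pow_le_pow_right ?_ (h1 _ h2)
    refine Nat.floor_le_of_le ?_
    have h3 : n * j ≤ n * (j - m) - N + n * m + N := by
      rw [Nat.mul_sub]; omega
    have h4 : (n * j : ℝ) ≤ ((n * (j - m) - N : ℕ) : ℝ) + n * m + N := by exact_mod_cast h3
    linarith
  · have : ((n:ℝ) - κ) * j - (n * m + N) ≤ 0 := by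
      have h5 : (n * j : ℝ) ≤ n * m := by exact_mod_cast Nat.mul_le_mul_left n hj.le
      have : (0:ℝ) ≤ N := by positivity
      linarith
    rw [Nat.floor_of_nonpos this]; simp

/-- Uniform comparison of the normal filtration of `L` with the powers of a two-generated reduction.
Analytic unramifiedness enters the theorem through this lemma. -/
theorem RegPair.intCl_le {a b : R} (h : RegPair a b) (hur : AnalyticallyUnramified R)
    (hQ : Big (Ideal.span {a, b})) (hQm : Ideal.span {a, b} ≤ maximalIdeal R)
    {L : Ideal R} {N : ℕ} (hL : L ^ (N + 1) ≤ Ideal.span {a, b} * L ^ N) :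
    ∃ n0, ∀ n, intCl (L ^ (n + n0)) ≤ Ideal.span {a, b} ^ n := by
  obtain ⟨n0, hn0⟩ := h.FI_le_pow hur hQ hQm
  exact ⟨n0, fun n => (intCl_le_FI hL _).trans (hn0 n)⟩

end fn
end E2

/-! ### Graded primes of the Rees algebra -/

namespace E2
section ja
variable {R : Type*} [CommRing R]

/-- A graded prime `(P n)` of the Rees algebra `⨁ L ^ n t ^ n`, given by its graded pieces
(the ideals `P n` need not lie in `L ^ n`; only their traces on `L ^ n` matter), which is relevant:
it does not contain all forms of degree one. -/
structure GP (L : Ideal R) (P : ℕ → Ideal R) : Prop where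
  mul : ∀ {m n x y}, x ∈ P m → y ∈ L ^ n → x * y ∈ P (m + n)
  prime : ∀ {m n x y}, x ∈ L ^ m → y ∈ L ^ n → x * y ∈ P (m + n) → x ∈ P m ∨ y ∈ P n
  rel : ∃ x ∈ L, x ∉ P 1

variable {L : Ideal R} {P : ℕ → Ideal R}

theorem GP.one (h : GP L P) : (1 : R) ∉ P 0 := by
  intro h1
  obtain ⟨x, hx, hx'⟩ := h.rel
  have := h.mul h1 (show x ∈ L ^ 1 by simpa using hx)
  exact hx' (by simpa using this)

theorem GP.pow_notMem (h : GP L P) {k : ℕ} {x : R} (hx : x ∈ L ^ k) (hx' : x ∉ P k) (p : ℕ) :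
    x ^ p ∉ P (k * p) := by
  induction p with
  | zero => simpa using h.one
  | succ p ih =>
    intro hc
    rw [pow_succ, mul_add, mul_one] at hc
    have hxp := Ideal.pow_mem_pow hx p
    rw [← pow_mul] at hxp
    exact (h.prime hxp hx hc).elim ih hx'

theorem GP.pow_mem (h : GP L P) {k : ℕ} {x : R} (hx : x ∈ L ^ k) (hx' : x ∈ P k) {p : ℕ}
    (hp : 0 < p) : x ^ p ∈ P (k * p) := by
  obtain ⟨p, rfl⟩ := Nat.exists_eq_succ_of_ne_zero hp.ne'
  have hxp := Ideal.pow_mem_pow hx p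
  rw [← pow_mul] at hxp
  have := h.mul hx' hxp
  rwa [← pow_succ', show k + k * p = k * p.succ by rw [Nat.succ_eq_add_one]; ring] at this

/-- Homogeneous prime avoidance in the Rees algebra of `L`. -/
theorem gp_avoid {ι : Type*} (L : Ideal R) (B : ι → ℕ → Ideal R) (s : Finset ι)
    (hB : ∀ i ∈ s, GP L (B i)) :
    ∃ k, 0 < k ∧ ∃ x ∈ L ^ k, ∀ i ∈ s, x ∉ B i k := by
  classical
  induction hc : s.card using Nat.strong_induction_on generalizing s with
  | _ c IH =>
  rcases s.eq_empty_or_nonempty with rfl | ⟨i0, hi0⟩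
  · exact ⟨1, one_pos, 0, zero_mem _, by simp⟩
  by_cases hdom : ∃ i ∈ s, ∃ j ∈ s, i ≠ j ∧ ∀ n, ∀ x ∈ L ^ n, x ∈ B j n → x ∈ B i n
  · obtain ⟨i, hi, j, hj, hij, hd⟩ := hdom
    obtain ⟨k, hk, x, hx, hx'⟩ := IH (s.erase j).card
      (by rw [← hc]; exact Finset.card_erase_lt_of_mem hj) (s.erase j)
      (fun l hl => hB l (Finset.mem_of_mem_erase hl)) rfl
    refine ⟨k, hk, x, hx, fun l hl => ?_⟩
    by_cases hlj : l = j
    · subst hlj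
      exact fun h => hx' i (Finset.mem_erase.2 ⟨hij, hi⟩) (hd k x hx h)
    · exact hx' l (Finset.mem_erase.2 ⟨hlj, hl⟩)
  push Not at hdom
  obtain ⟨k, hk, x, hx, hx'⟩ := IH (s.erase i0).card
    (by rw [← hc]; exact Finset.card_erase_lt_of_mem hi0) (s.erase i0)
    (fun l hl => hB l (Finset.mem_of_mem_erase hl)) rfl
  by_cases hx0 : x ∈ B i0 k
  swap
  · refine ⟨k, hk, x, hx, fun l hl => ?_⟩
    by_cases hl0 : l = i0
    · rw [hl0]; exact hx0
    · exact hx' l (Finset.mem_erase.2 ⟨hl0, hl⟩)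
  -- an element of positive degree in all `B j`, `j ≠ i0`, but not in `B i0`
  have hg : ∀ t ⊆ s.erase i0, ∃ m, 0 < m ∧ ∃ g ∈ L ^ m, g ∉ B i0 m ∧ ∀ j ∈ t, g ∈ B j m := by
    intro t
    induction t using Finset.induction_on with
    | empty =>
      intro _
      obtain ⟨g, hg, hg'⟩ := (hB i0 hi0).rel
      exact ⟨1, one_pos, g, by simpa using hg, hg', by simp⟩
    | insert j t hj ih =>
      intro ht
      obtain ⟨m, hm, g, hg, hg0, hgt⟩ := ih ((Finset.subset_insert j t).trans ht)
      have hjs := Finset.mem_erase.1 (ht (Finset.mem_insert_self j t))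
      obtain ⟨n, y, hy, hyj, hy0⟩ := hdom i0 hi0 j hjs.2 (Ne.symm hjs.1)
      refine ⟨m + n, by omega, g * y, by rw [pow_add]; exact Ideal.mul_mem_mul hg hy, ?_, ?_⟩
      · exact fun h => ((hB i0 hi0).prime hg hy h).elim hg0 hy0
      · intro l hl
        rcases Finset.mem_insert.1 hl with rfl | hl
        · rw [mul_comm, add_comm]
          exact (hB l hjs.2).mul hyj hg
        · exact (hB l (Finset.mem_erase.1 (ht (Finset.mem_insert_of_mem hl))).2).mul (hgt l hl) hy
  obtain ⟨m, hm, g, hgL, hg0, hgt⟩ := hg _ subset_rfl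
  have hxm := Ideal.pow_mem_pow hx m
  have hgk := Ideal.pow_mem_pow hgL k
  rw [← pow_mul] at hxm hgk
  rw [mul_comm m k] at hgk
  refine ⟨k * m, Nat.mul_pos hk hm, x ^ m + g ^ k, add_mem hxm hgk, fun l hl => ?_⟩
  by_cases hl0 : l = i0
  · subst hl0
    rw [Submodule.add_mem_iff_right _ ((hB l hl).pow_mem hx hx0 hm), mul_comm]
    exact (hB l hl).pow_notMem hgL hg0 k
  · have hl' := Finset.mem_erase.2 ⟨hl0, hl⟩
    have h1 := (hB l hl).pow_mem hgL (hgt l hl') hk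
    rw [mul_comm] at h1
    rw [Submodule.add_mem_iff_left _ h1]
    exact (hB l hl).pow_notMem hx (hx' l hl') m

/-- The elements `b` with `b I ^ k ⊆ P k`. -/
def bad (I : Ideal R) (P : ℕ → Ideal R) (k : ℕ) : Ideal R where
  carrier := {b | ∀ i ∈ I ^ k, b * i ∈ P k}
  add_mem' := fun hx hy i hi => by rw [add_mul]; exact add_mem (hx i hi) (hy i hi)
  zero_mem' := fun i _ => by rw [zero_mul]; exact zero_mem _
  smul_mem' := fun c x hx i hi => by
    rw [smul_eq_mul, mul_assoc]; exact Ideal.mul_mem_left _ _ (hx i hi)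

theorem mem_bad {I : Ideal R} {P : ℕ → Ideal R} {k : ℕ} {b : R} :
    b ∈ bad I P k ↔ ∀ i ∈ I ^ k, b * i ∈ P k := Iff.rfl

/-- A relevant graded prime of the Rees algebra of `IJ` induces one of the Rees algebra of `J`, so
prime avoidance can be carried out with elements of powers of `J` alone. -/
theorem GP.bad {I J : Ideal R} (h : GP (I * J) P) : GP J (bad I P) where
  mul := by
    intro m n x y hx hy i hi
    rw [pow_add] at hi
    refine Submodule.mul_induction_on hi (fun i hi j hj => ?_) fun u v hu hv => ?_
    · rw [show x * y * (i * j) = x * i * (j * y) by ring]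
      exact h.mul (hx i hi) (by rw [mul_pow]; exact Ideal.mul_mem_mul hj hy)
    · rw [mul_add]; exact add_mem hu hv
  prime := by
    intro m n x y hx hy hxy
    by_contra! hc
    simp only [mem_bad, not_forall] at hc
    obtain ⟨⟨i, hi, hi'⟩, j, hj, hj'⟩ := hc
    have := hxy (i * j) (by rw [pow_add]; exact Ideal.mul_mem_mul hi hj)
    rw [show x * y * (i * j) = x * i * (y * j) by ring] at this
    refine (h.prime ?_ ?_ this).elim hi' hj'
    · rw [mul_pow, mul_comm x]; exact Ideal.mul_mem_mul hi hx
    · rw [mul_pow, mul_comm y]; exact Ideal.mul_mem_mul hj hy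
  rel := by
    by_contra! hc
    obtain ⟨x, hx, hx'⟩ := h.rel
    refine hx' ?_
    refine Submodule.mul_induction_on hx (fun i hi j hj => ?_) fun u v hu hv => add_mem hu hv
    rw [mul_comm]
    exact hc j hj i (by simpa using hi)

variable [IsLocalRing R] [IsNoetherianRing R]
open IsLocalRing

/-- Passing to a strictly smaller graded prime raises the order of growth of the length function:
multiplication by `x ∈ q ∖ P` embeds the quotient by `P` into `q / P`, shifted by the degree `d` of `x`. -/
theorem GP.rl_ge (h : GP L P) {q : ℕ → Ideal R} (hq : GP L q) (hPq : ∀ n, P n ≤ q n)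
    (hqL : ∀ n, q n ≤ L ^ n) {d : ℕ} {x : R} (hx : x ∈ q d) (hx' : x ∉ P d) (n : ℕ) :
    rl (q (n + d)) (L ^ (n + d)) + rl (P n) (L ^ n) ≤ rl (P (n + d)) (L ^ (n + d)) := by
  have h1 : rl (P n) (L ^ n) ≤ rl (P (n + d)) (q (n + d)) := by
    refine rl_le_of_map (LinearMap.mulLeft R x) ?_ ?_ ?_
    · intro y hy
      rw [LinearMap.mulLeft_apply, add_comm n]
      exact hq.mul hx hy
    · intro y hy
      rw [LinearMap.mulLeft_apply, mul_comm]
      exact h.mul hy (hqL d hx)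
    · intro y hy hxy
      rw [LinearMap.mulLeft_apply, mul_comm] at hxy
      exact (h.prime hy (hqL d hx) hxy).resolve_right hx'
  rw [rl_add (hPq (n + d)) (hqL (n + d)), add_comm]
  exact add_le_add_left h1 _

theorem six_choose (j : ℕ) : 6 * (j + 3).choose 3 = (j + 3) * (j + 2) * (j + 1) := by
  have h2 : ∀ j, 2 * (j + 2).choose 2 = (j + 2) * (j + 1) := by
    intro j
    induction j with
    | zero => rfl
    | succ j ih =>
      rw [Nat.choose_succ_succ' (j + 2) 1, Nat.choose_one_right, mul_add, ih]; ring
  induction j with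
  | zero => rfl
  | succ j ih =>
    have := h2 (j + 1)
    rw [Nat.choose_succ_succ' (j + 3) 2, mul_add, ih]
    linear_combination 3 * this

/-- The fiber cone of `L` has dimension at most two when `L` contains an ideal generated by a regular
sequence of length two with finite colength: a chain of three relevant graded primes would give
cubic growth of the length of `R ⧸ L ^ n`. -/
theorem no_chain {P p q : ℕ → Ideal R} (hP : GP L P) (hp : GP L p) (hq : GP L q)
    (hPL : ∀ n, P n ≤ L ^ n) (hpP : ∀ n, p n ≤ P n) (hqp : ∀ n, q n ≤ p n)
    (hLm : L ≤ maximalIdeal R) (hm : ∀ n, maximalIdeal R * L ^ n ≤ q n)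
    {d e : ℕ} (hd : 0 < d) (he : 0 < e) {x y : R} (hx : x ∈ P d) (hx' : x ∉ p d)
    (hy : y ∈ p e) (hy' : y ∉ q e) {a b : R} (hab : RegPair a b) (hQ : Big (Ideal.span {a, b}))
    (hQL : Ideal.span {a, b} ≤ L) : False := by
  have hpL : ∀ n, p n ≤ L ^ n := fun n => (hpP n).trans (hPL n)
  obtain ⟨D, hD⟩ : ∃ D, D = d * e := ⟨_, rfl⟩
  have hD0 : 0 < D := by rw [hD]; positivity
  have hx1 : x ^ e ∈ P D := by rw [hD]; exact hP.pow_mem (hPL _ hx) hx he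
  have hx2 : x ^ e ∉ p D := by rw [hD]; exact hp.pow_notMem (hPL _ hx) hx' e
  have hy1 : y ^ d ∈ p D := by rw [hD, mul_comm]; exact hp.pow_mem (hpL _ hy) hy hd
  have hy2 : y ^ d ∉ q D := by rw [hD, mul_comm]; exact hq.pow_notMem (hpL _ hy) hy' d
  have h0 : ∀ n, 1 ≤ rl (P n) (L ^ n) := by
    intro n
    rw [Order.one_le_iff_ne_zero, Ne, rl_eq_zero_iff]
    intro hle
    obtain ⟨l, hl, hl'⟩ := hP.rel
    have := hP.pow_notMem (k := 1) (by simpa using hl) hl' n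
    rw [one_mul] at this
    exact this (hle (Ideal.pow_mem_pow hl n))
  have h1 : ∀ j : ℕ, (j : ℕ∞) ≤ rl (p (D * j)) (L ^ (D * j)) := by
    intro j
    induction j with
    | zero => simp
    | succ j ih =>
      have := hp.rl_ge hP hpP hPL hx1 hx2 (D * j)
      rw [mul_add, mul_one]
      refine le_trans ?_ this
      push_cast
      rw [add_comm]
      exact add_le_add (h0 _) ih
  have h2 : ∀ j : ℕ, (((j + 1).choose 2 : ℕ) : ℕ∞) ≤ rl (q (D * j)) (L ^ (D * j)) := by
    intro j
    induction j with
    | zero => simp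
    | succ j ih =>
      have := hq.rl_ge hp hqp hpL hy1 hy2 (D * j)
      rw [Nat.choose_succ_succ' (j + 1) 1, Nat.choose_one_right, Nat.cast_add]
      refine (add_le_add (h1 (j + 1)) ih).trans ?_
      rwa [mul_add, mul_one]
  have h3 : ∀ j : ℕ, (((j + 1).choose 3 : ℕ) : ℕ∞) ≤ len (L ^ (D * j)) := by
    intro j
    induction j with
    | zero => simp [Nat.choose_eq_zero_of_lt]
    | succ j ih =>
      rw [Nat.choose_succ_succ' (j + 1) 2, Nat.cast_add,
        len_add (Ideal.pow_le_pow_right (show D * j ≤ D * (j + 1) by rw [mul_add]; omega))]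
      refine add_le_add ((h2 j).trans (rl_anti_left ?_)) ih
      refine le_trans ?_ (hm _)
      refine (Ideal.pow_le_pow_right (show D * j + 1 ≤ D * (j + 1) by rw [mul_add]; omega)).trans ?_
      rw [pow_succ']
      exact Ideal.mul_mono_left hLm
  obtain ⟨lam, hlam⟩ := hab.len_pow hQ
  obtain ⟨c, hc1, hc2⟩ := hlam (D * (3 * D ^ 2 * lam + 2))
  have h4 := (h3 (3 * D ^ 2 * lam + 2)).trans (len_anti (Ideal.pow_right_mono hQL _))
  rw [hc1, Nat.cast_le] at h4
  have h5 := six_choose (3 * D ^ 2 * lam)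
  set t := 3 * D ^ 2 * lam with ht
  have h6 : D * (t + 2) * (D * (t + 2) + 1) * lam * 3 ≤ (t + 3) * (t + 2) * t := by
    rw [ht]
    have : D * (t + 2) + 1 ≤ D * (t + 3) := by nlinarith
    calc _ ≤ D * (t + 2) * (D * (t + 3)) * lam * 3 := by gcongr
      _ = _ := by rw [ht]; ring
  nlinarith

end ja
end E2

/-! ### Existence of joint reductions -/

namespace E2
section jb
open Polynomial
variable {R : Type*} [CommRing R] {L : Ideal R}

/-- The ideal `⨁ D n t ^ n` of the Rees algebra of `L`. -/
def gi (L : Ideal R) (D : ℕ → Ideal R) (hD : ∀ m n, L ^ m * D n ≤ D (m + n)) :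
    Ideal (reesAlgebra L) where
  carrier := {t | ∀ n, (t : R[X]).coeff n ∈ D n}
  add_mem' := fun hx hy n => by
    rw [Subalgebra.coe_add, coeff_add]; exact add_mem (hx n) (hy n)
  zero_mem' := fun n => by simp
  smul_mem' := fun c x hx n => by
    rw [smul_eq_mul, Subalgebra.coe_mul, coeff_mul]
    refine sum_mem fun ij hij => ?_
    rw [← Finset.HasAntidiagonal.mem_antidiagonal.1 hij]
    exact hD _ _ (Ideal.mul_mem_mul ((mem_reesAlgebra_iff L _).1 c.2 _) (hx _))

/-- The graded pieces of an ideal of the Rees algebra. -/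
def dg (𝔓 : Ideal (reesAlgebra L)) (n : ℕ) : Ideal R where
  carrier := {x | ∃ t ∈ 𝔓, (t : R[X]) = monomial n x}
  add_mem' := by
    rintro x y ⟨s, hs, hs'⟩ ⟨t, ht, ht'⟩
    exact ⟨s + t, add_mem hs ht, by rw [Subalgebra.coe_add, hs', ht', map_add]⟩
  zero_mem' := ⟨0, zero_mem _, by simp⟩
  smul_mem' := by
    rintro c x ⟨t, ht, ht'⟩
    refine ⟨algebraMap R _ c * t, Ideal.mul_mem_left _ _ ht, ?_⟩
    rw [Subalgebra.coe_mul, ht', Subalgebra.coe_algebraMap, Polynomial.algebraMap_eq,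
      C_mul_monomial, smul_eq_mul]

theorem dg_le (𝔓 : Ideal (reesAlgebra L)) (n : ℕ) : dg 𝔓 n ≤ L ^ n := by
  rintro x ⟨t, -, ht⟩
  exact reesAlgebra.monomial_mem.1 (ht ▸ t.2)

theorem mem_dg {𝔓 : Ideal (reesAlgebra L)} {n : ℕ} {x : R} (hx : x ∈ L ^ n) :
    x ∈ dg 𝔓 n ↔ (⟨monomial n x, reesAlgebra.monomial_mem.2 hx⟩ : reesAlgebra L) ∈ 𝔓 := by
  constructor
  · rintro ⟨t, ht, ht'⟩
    convert ht
    exact ht'.symm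
  · intro h
    exact ⟨_, h, rfl⟩

theorem gi_le {D : ℕ → Ideal R} {hD : ∀ m n, L ^ m * D n ≤ D (m + n)}
    {𝔓 : Ideal (reesAlgebra L)} (h : ∀ n, D n ≤ dg 𝔓 n) : gi L D hD ≤ 𝔓 := by
  intro t ht
  have hc : ∀ i, (t : R[X]).coeff i ∈ L ^ i := (mem_reesAlgebra_iff L _).1 t.2
  have e : t = ∑ i ∈ (t : R[X]).support,
      (⟨monomial i ((t : R[X]).coeff i), reesAlgebra.monomial_mem.2 (hc i)⟩ : reesAlgebra L) := by
    apply Subtype.ext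
    rw [AddSubmonoidClass.coe_finsetSum]
    exact (t : R[X]).as_sum_support
  rw [e]
  exact sum_mem fun i _ => (mem_dg (hc i)).1 (h i (ht i))

theorem le_dg {D : ℕ → Ideal R} {hD : ∀ m n, L ^ m * D n ≤ D (m + n)} (hDL : ∀ n, D n ≤ L ^ n)
    {𝔓 : Ideal (reesAlgebra L)} (h : gi L D hD ≤ 𝔓) (n : ℕ) : D n ≤ dg 𝔓 n := by
  intro x hx
  refine (mem_dg (hDL n hx)).2 (h fun i => ?_)
  change (monomial n x).coeff i ∈ D i
  rw [coeff_monomial]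
  split_ifs with hi
  · rw [← hi]; exact hx
  · exact zero_mem _

theorem gp_dg (𝔓 : Ideal (reesAlgebra L)) [h𝔓 : 𝔓.IsPrime] (h : ¬ L ≤ dg 𝔓 1) : GP L (dg 𝔓) where
  mul := by
    rintro m n x y ⟨t, ht, ht'⟩ hy
    refine ⟨t * ⟨monomial n y, reesAlgebra.monomial_mem.2 hy⟩, Ideal.mul_mem_right _ _ ht, ?_⟩
    rw [Subalgebra.coe_mul, ht', monomial_mul_monomial]
  prime := by
    intro m n x y hx hy hxy
    rw [mem_dg hx, mem_dg hy]
    refine h𝔓.mem_or_mem ?_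
    obtain ⟨t, ht, ht'⟩ := hxy
    convert ht
    apply Subtype.ext
    rw [Subalgebra.coe_mul, ht', monomial_mul_monomial]
  rel := Set.not_subset.1 h

/-- The sequence of graded pieces of a relevant prime of the Rees algebra. -/
def IsDg (L : Ideal R) (P : ℕ → Ideal R) : Prop :=
  ∃ 𝔓 : Ideal (reesAlgebra L), 𝔓.IsPrime ∧ ¬ L ≤ dg 𝔓 1 ∧ P = dg 𝔓

theorem IsDg.gp {P : ℕ → Ideal R} (h : IsDg L P) : GP L P := by
  obtain ⟨𝔓, h1, h2, rfl⟩ := h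
  exact gp_dg 𝔓 h2

theorem IsDg.le {P : ℕ → Ideal R} (h : IsDg L P) (n : ℕ) : P n ≤ L ^ n := by
  obtain ⟨𝔓, h1, h2, rfl⟩ := h
  exact dg_le 𝔓 n

/-- Finitely many relevant primes suffice to bound from below all relevant primes over a graded ideal. -/
theorem exists_min [IsNoetherianRing R] (D : ℕ → Ideal R) (hD : ∀ m n, L ^ m * D n ≤ D (m + n))
    (hDL : ∀ n, D n ≤ L ^ n) :
    ∃ s : Finset (ℕ → Ideal R), (∀ q ∈ s, IsDg L q ∧ ∀ n, D n ≤ q n) ∧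
      ∀ P, IsDg L P → (∀ n, D n ≤ P n) → ∃ q ∈ s, ∀ n, q n ≤ P n := by
  classical
  have hfin := (gi L D hD).finite_minimalPrimes_of_isNoetherianRing
  refine ⟨(hfin.toFinset.filter fun 𝔓 => ¬ L ≤ dg 𝔓 1).image dg, ?_, ?_⟩
  · intro q hq
    obtain ⟨𝔓, h𝔓, rfl⟩ := Finset.mem_image.1 hq
    obtain ⟨h1, h2⟩ := Finset.mem_filter.1 h𝔓
    rw [Set.Finite.mem_toFinset] at h1
    exact ⟨⟨𝔓, h1.1.1, h2, rfl⟩, le_dg hDL h1.1.2⟩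
  · rintro P ⟨𝔓, h1, h2, rfl⟩ hDP
    obtain ⟨𝔮, hq, hle⟩ := Ideal.exists_minimalPrimes_le (gi_le (hD := hD) hDP)
    have hle' : ∀ n, dg 𝔮 n ≤ dg 𝔓 n := fun n x ⟨t, ht, ht'⟩ => ⟨t, hle ht, ht'⟩
    refine ⟨dg 𝔮, Finset.mem_image_of_mem _ (Finset.mem_filter.2
      ⟨hfin.mem_toFinset.2 hq, fun hc => h2 (hc.trans (hle' 1))⟩), hle'⟩

/-- A graded ideal contained in no relevant prime contains all forms of large degree. -/
theorem exists_pow_le [IsNoetherianRing R] (D : ℕ → Ideal R)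
    (hD : ∀ m n, L ^ m * D n ≤ D (m + n)) (hDL : ∀ n, D n ≤ L ^ n)
    (h : ∀ P, IsDg L P → ¬ ∀ n, D n ≤ P n) : ∃ N, ∀ n ≥ N, L ^ n ≤ D n := by
  obtain ⟨N, hN⟩ := (gi L D hD).exists_radical_pow_le_of_fg (IsNoetherian.noetherian _)
  have h1 : ∀ x (hx : x ∈ L ^ 1), (⟨monomial 1 x, reesAlgebra.monomial_mem.2 hx⟩ :
      reesAlgebra L) ∈ (gi L D hD).radical := by
    intro x hx
    rw [Ideal.radical_eq_sInf, Ideal.mem_sInf]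
    rintro 𝔓 ⟨hle, hp⟩
    rw [← mem_dg hx]
    by_contra hc
    exact h (dg 𝔓) ⟨𝔓, hp, fun h' => hc (h' (by simpa using hx)), rfl⟩ (le_dg hDL hle)
  have h2 : L ^ N ≤ D N := by
    have h3 : ∀ n, ∀ x (hx : x ∈ L ^ n), (⟨monomial n x, reesAlgebra.monomial_mem.2 hx⟩ :
      reesAlgebra L) ∈ (gi L D hD).radical ^ n := by
      intro n
      induction n with
      | zero => intro x hx; simp
      | succ n ih =>
        intro x hx
        have hx2 := hx
        rw [pow_succ] at hx2
        have : ∃ t ∈ (gi L D hD).radical ^ (n + 1), (t : R[X]) = monomial (n + 1) x := by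
          refine Submodule.mul_induction_on hx2 ?_ ?_
          · intro y hy z hz
            refine ⟨_, by rw [pow_succ]; exact Ideal.mul_mem_mul (ih y hy) (h1 z (by simpa using hz)),
              ?_⟩
            rw [Subalgebra.coe_mul, monomial_mul_monomial]
          · rintro y z ⟨s, hs, hs'⟩ ⟨t, ht, ht'⟩
            exact ⟨s + t, add_mem hs ht, by rw [Subalgebra.coe_add, hs', ht', map_add]⟩
        obtain ⟨t, ht, ht'⟩ := this
        convert ht
        exact ht'.symm
    intro x hx
    have h4 : (monomial N x).coeff N ∈ D N := hN (h3 N x hx) N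
    rwa [coeff_monomial, if_pos rfl] at h4
  refine ⟨N, fun n hn => ?_⟩
  obtain ⟨i, rfl⟩ := Nat.exists_eq_add_of_le' hn
  rw [pow_add]
  exact (Ideal.mul_mono_right h2).trans (hD i N)

/-- The graded ideal of the Rees algebra of `L` generated by the forms `c t ^ k`, `c ∈ C`. -/
def sh (L : Ideal R) (k : ℕ) (C : Ideal R) (n : ℕ) : Ideal R :=
  if k ≤ n then C * L ^ (n - k) else ⊥

theorem sh_mul (k : ℕ) (C : Ideal R) (m n : ℕ) : L ^ m * sh L k C n ≤ sh L k C (m + n) := by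
  unfold sh
  split_ifs with h1 h2
  · rw [show m + n - k = m + (n - k) by omega, pow_add]
    exact le_of_eq (by ring)
  · omega
  all_goals simp

theorem sh_le {k : ℕ} {C : Ideal R} (hC : C ≤ L ^ k) (n : ℕ) : sh L k C n ≤ L ^ n := by
  unfold sh
  split_ifs with h1
  · calc C * L ^ (n - k) ≤ L ^ k * L ^ (n - k) := Ideal.mul_mono_left hC
      _ = L ^ n := by rw [← pow_add, Nat.add_sub_cancel' h1]
  · simp

theorem sh_self (k : ℕ) (C : Ideal R) : sh L k C k = C := by simp [sh]

theorem GP.sh_le {P : ℕ → Ideal R} (h : GP L P) {k : ℕ} {C : Ideal R} (hC : C ≤ P k) (n : ℕ) :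
    sh L k C n ≤ P n := by
  unfold sh
  split_ifs with h1
  · refine Ideal.mul_le.2 fun x hx y hy => ?_
    have := h.mul (hC hx) hy
    rwa [Nat.add_sub_cancel' h1] at this
  · simp

variable [IsLocalRing R] [IsNoetherianRing R]
open IsLocalRing

theorem span_le_of_bad {I : Ideal R} {P : ℕ → Ideal R} {k : ℕ} {b : R} (h : b ∈ bad I P k) :
    Ideal.span {b} * I ^ k ≤ P k := by
  rw [Ideal.span_singleton_mul_le_iff]
  exact fun i hi => h i hi

theorem bad_of_span_le {I : Ideal R} {P : ℕ → Ideal R} {k : ℕ} {b : R}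
    (h : Ideal.span {b} * I ^ k ≤ P k) : b ∈ bad I P k :=
  fun _ hi => h (Ideal.mul_mem_mul (Ideal.mem_span_singleton_self b) hi)

/-- Joint reductions exist for suitable powers of `I` and `J`. Choose `b` outside the minimal relevant
primes over `𝔪`, then `a` outside the minimal relevant primes over `𝔪` and `b Iᵏ`, in the Rees algebra
of `L = IJ`. A relevant prime `P` containing `𝔪` and both forms would sit on top of a chain
`q < p < P`, contrary to `no_chain`; hence `L ^ n ⊆ 𝔪 L ^ n + (the two forms)` for large `n`, and
the Nakayama lemma finishes. Working with powers avoids an assumption on the residue field. -/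
theorem exists_jr {I J : Ideal R} (hI : I ≤ maximalIdeal R) {u v : R} (huv : RegPair u v)
    (hQ : Big (Ideal.span {u, v})) (hQL : Ideal.span {u, v} ≤ I * J) :
    ∃ k, 0 < k ∧ ∃ a b, JR (I ^ k) (J ^ k) a b := by
  obtain ⟨L, hL⟩ : ∃ L, L = I * J := ⟨_, rfl⟩
  have hLm : L ≤ maximalIdeal R := by rw [hL]; exact Ideal.mul_le_left.trans hI
  rw [← hL] at hQL
  have hIJ : ∀ k b, b ∈ J ^ k → Ideal.span {b} * I ^ k ≤ L ^ k := by
    intro k b hb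
    rw [hL, mul_pow, mul_comm]
    exact Ideal.mul_mono_right ((Ideal.span_singleton_le_iff_mem _).2 hb)
  have hJI : ∀ k a, a ∈ I ^ k → Ideal.span {a} * J ^ k ≤ L ^ k := by
    intro k a ha
    rw [hL, mul_pow]
    exact Ideal.mul_mono_left ((Ideal.span_singleton_le_iff_mem _).2 ha)
  have hbadI : ∀ P, IsDg L P → GP J (bad I P) := by
    intro P hP
    have := hP.gp
    rw [hL] at this
    exact this.bad
  have hbadJ : ∀ P, IsDg L P → GP I (bad J P) := by
    intro P hP
    have := hP.gp
    rw [hL, mul_comm] at this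
    exact this.bad
  obtain ⟨D0, hD0⟩ : ∃ D0 : ℕ → Ideal R, D0 = fun n => maximalIdeal R * L ^ n := ⟨_, rfl⟩
  have hD0m : ∀ m n, L ^ m * D0 n ≤ D0 (m + n) := by
    intro m n
    simp only [hD0]
    rw [pow_add]
    exact le_of_eq (by ring)
  have hD0L : ∀ n, D0 n ≤ L ^ n := by
    intro n
    simp only [hD0]
    exact Ideal.mul_le_right
  have hsup : ∀ k C m n, L ^ m * (D0 n ⊔ sh L k C n) ≤ D0 (m + n) ⊔ sh L k C (m + n) := by
    intro k C m n
    rw [Ideal.mul_sup]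
    exact sup_le_sup (hD0m m n) (sh_mul k C m n)
  obtain ⟨s0, hs0, hs0'⟩ := exists_min D0 hD0m hD0L
  obtain ⟨k, hk, b, hb, hb'⟩ := gp_avoid J (fun q => bad I q) s0 fun q hq => hbadI q (hs0 q hq).1
  obtain ⟨s1, hs1, hs1'⟩ := exists_min (fun n => D0 n ⊔ sh L k (Ideal.span {b} * I ^ k) n)
    (hsup _ _) fun n => sup_le (hD0L n) (sh_le (hIJ k b hb) n)
  obtain ⟨k', hk', a, ha, ha'⟩ := gp_avoid I (fun q => bad J q) s1 fun q hq => hbadJ q (hs1 q hq).1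
  have hbp := Ideal.pow_mem_pow hb k'
  have hap := Ideal.pow_mem_pow ha k
  rw [← pow_mul] at hbp hap
  rw [mul_comm k'] at hap
  set C := Ideal.span {a ^ k} * J ^ (k * k') ⊔ Ideal.span {b ^ k'} * I ^ (k * k') with hC
  have hCL : C ≤ L ^ (k * k') := sup_le (hJI _ _ hap) (hIJ _ _ hbp)
  have hK : 0 < k * k' := Nat.mul_pos hk hk'
  obtain ⟨N, hN⟩ := exists_pow_le (fun n => D0 n ⊔ sh L (k * k') C n) (hsup _ _)
    (fun n => sup_le (hD0L n) (sh_le hCL n)) (by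
      intro P hP hDP
      have hCP : C ≤ P (k * k') := by
        have := le_sup_right.trans (hDP (k * k'))
        rwa [sh_self] at this
      -- some power of `a` (of `b`) is bad for `P`, hence so is `a` (and `b`)
      have hbP : b ∈ bad I P k := by
        by_contra hc
        exact (hbadI P hP).pow_notMem hb hc k' (bad_of_span_le (le_sup_right.trans hCP))
      have haP : a ∈ bad J P k' := by
        by_contra hc
        refine (hbadJ P hP).pow_notMem ha hc k ?_
        rw [mul_comm]
        exact bad_of_span_le (le_sup_left.trans hCP)
      obtain ⟨p, hp, hpP⟩ := hs1' P hP fun n => sup_le (le_sup_left.trans (hDP n))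
        (hP.gp.sh_le (span_le_of_bad hbP) n)
      obtain ⟨q, hq, hqp⟩ := hs0' p (hs1 p hp).1 fun n => le_sup_left.trans ((hs1 p hp).2 n)
      have hbp' : Ideal.span {b} * I ^ k ≤ p k := by
        have := le_sup_right.trans ((hs1 p hp).2 k)
        rwa [sh_self] at this
      have h1 := ha' p hp
      have h2 := hb' q hq
      simp only [mem_bad, not_forall] at h1 h2
      obtain ⟨i, hi, hi'⟩ := h1
      obtain ⟨j, hj, hj'⟩ := h2
      exact no_chain hP.gp (hs1 p hp).1.gp (hs0 q hq).1.gp hP.le hpP hqp hLm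
        (fun n => by have := (hs0 q hq).2 n; simpa only [hD0] using this) hk' hk
        (haP i hi) hi' (hbp' (Ideal.mul_mem_mul (Ideal.mem_span_singleton_self b) hj)) hj'
        huv hQ hQL)
  refine ⟨k * k', hK, a ^ k, b ^ k', hap, hbp, N, ?_⟩
  rw [← mul_pow, ← hL, ← pow_mul, ← pow_mul]
  have h1 := hN (k * k' * (N + 1)) (by nlinarith)
  simp only [hD0, sh] at h1
  rw [if_pos (by nlinarith), show k * k' * (N + 1) - k * k' = k * k' * N by
    rw [mul_add, mul_one, Nat.add_sub_cancel], sup_comm] at h1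
  exact Submodule.le_of_le_smul_of_le_jacobson_bot (IsNoetherian.noetherian _)
    (IsLocalRing.maximalIdeal_le_jacobson _) h1

theorem JR.powers {I J : Ideal R} {a b : R} (h : JR I J a b) {p : ℕ} (hp : 0 < p) :
    JR (I ^ p) (J ^ p) (a ^ p) (b ^ p) := by
  obtain ⟨ha, hb, m, hm⟩ := h
  refine ⟨Ideal.pow_mem_pow ha p, Ideal.pow_mem_pow hb p, m + 1, ?_⟩
  have haI : Ideal.span {a} ≤ I := (Ideal.span_singleton_le_iff_mem _).2 ha
  have hbJ : Ideal.span {b} ≤ J := (Ideal.span_singleton_le_iff_mem _).2 hb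
  rw [← Ideal.span_singleton_pow, ← Ideal.span_singleton_pow]
  generalize Ideal.span {a} = A at *
  generalize Ideal.span {b} = B at *
  have h1 : ∀ i, (I * J) ^ (m + i) ≤ (A * J ⊔ B * I) ^ i * (I * J) ^ m := by
    intro i
    induction i with
    | zero => simp
    | succ i ih =>
      calc (I * J) ^ (m + (i + 1)) = (I * J) * (I * J) ^ (m + i) := by ring
        _ ≤ (I * J) * ((A * J ⊔ B * I) ^ i * (I * J) ^ m) := Ideal.mul_mono_right ih
        _ = (A * J ⊔ B * I) ^ i * (I * J) ^ (m + 1) := by ring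
        _ ≤ (A * J ⊔ B * I) ^ i * ((A * J ⊔ B * I) * (I * J) ^ m) := Ideal.mul_mono_right hm
        _ = (A * J ⊔ B * I) ^ (i + 1) * (I * J) ^ m := by ring
  have hX : A * J ≤ I * J := Ideal.mul_mono_left haI
  have hY : B * I ≤ I * J := by rw [mul_comm I]; exact Ideal.mul_mono_left hbJ
  have h2 : (A * J ⊔ B * I) ^ (2 * p) ≤ (A ^ p * J ^ p ⊔ B ^ p * I ^ p) * (I * J) ^ p := by
    rw [← Ideal.add_eq_sup (I := A * J), add_pow, Ideal.sum_eq_sup]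
    refine Finset.sup_le fun i hi => Ideal.mul_le_left.trans ?_
    rw [Finset.mem_range] at hi
    rcases le_total p i with hpi | hpi
    · calc (A * J) ^ i * (B * I) ^ (2 * p - i)
          = (A * J) ^ p * ((A * J) ^ (i - p) * (B * I) ^ (2 * p - i)) := by
            rw [← mul_assoc, ← pow_add, Nat.add_sub_cancel' hpi]
        _ ≤ (A * J) ^ p * ((I * J) ^ (i - p) * (I * J) ^ (2 * p - i)) :=
            Ideal.mul_mono_right (Ideal.mul_mono (Ideal.pow_right_mono hX _)
              (Ideal.pow_right_mono hY _))
        _ = A ^ p * J ^ p * (I * J) ^ p := by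
            rw [← pow_add, mul_pow, show i - p + (2 * p - i) = p by omega]
        _ ≤ _ := Ideal.mul_mono_left le_sup_left
    · calc (A * J) ^ i * (B * I) ^ (2 * p - i)
          = (B * I) ^ p * ((A * J) ^ i * (B * I) ^ (p - i)) := by
            rw [show 2 * p - i = p + (p - i) by omega, pow_add]; ring
        _ ≤ (B * I) ^ p * ((I * J) ^ i * (I * J) ^ (p - i)) :=
            Ideal.mul_mono_right (Ideal.mul_mono (Ideal.pow_right_mono hX _)
              (Ideal.pow_right_mono hY _))
        _ = B ^ p * I ^ p * (I * J) ^ p := by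
            rw [← pow_add, mul_pow, show i + (p - i) = p by omega]
        _ ≤ _ := Ideal.mul_mono_left le_sup_right
  obtain ⟨r, hr⟩ : ∃ r, p * m = m + r := ⟨p * m - m, by
    have := Nat.mul_le_mul_right m hp; omega⟩
  calc (I ^ p * J ^ p) ^ (m + 1 + 1) = (I * J) ^ r * (I * J) ^ (m + 2 * p) := by
        rw [← mul_pow, ← pow_mul, ← pow_add]; congr 1; linarith
    _ ≤ (I * J) ^ r * ((A * J ⊔ B * I) ^ (2 * p) * (I * J) ^ m) := Ideal.mul_mono_right (h1 _)
    _ ≤ (I * J) ^ r * (((A ^ p * J ^ p ⊔ B ^ p * I ^ p) * (I * J) ^ p) * (I * J) ^ m) :=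
        Ideal.mul_mono_right (Ideal.mul_mono_left h2)
    _ = (A ^ p * J ^ p ⊔ B ^ p * I ^ p) * (I * J) ^ (m + r + p) := by ring
    _ = (A ^ p * J ^ p ⊔ B ^ p * I ^ p) * (I ^ p * J ^ p) ^ (m + 1) := by
        rw [← mul_pow I J p, ← pow_mul, ← hr]; congr 2

end jb
end E2

/-! ### The Cohen–Macaulay input and the main inequality -/

namespace E2
section cm
variable {R : Type*} [CommRing R] [IsLocalRing R] [IsNoetherianRing R]
open IsLocalRing

/-- A two-dimensional Cohen–Macaulay local ring has a regular sequence of length two in its maximal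
ideal, and the ideal it generates contains a power of the maximal ideal. -/
theorem cm_pair (hCM : IsCMLocalRing R) (hdim : ringKrullDim R = 2) :
    ∃ f g : R, f ∈ maximalIdeal R ∧ g ∈ maximalIdeal R ∧ WReg f g ∧ Big (Ideal.span {f, g}) := by
  obtain ⟨n, F, hF, ⟨hreg, -⟩, hn⟩ := hCM
  rw [hdim] at hn
  have hn2 : n = 2 := by exact_mod_cast hn
  subst hn2
  have e0 : Ideal.span (F '' {j | j < 0}) • (⊤ : Submodule R R) = ⊥ := by simp
  have e1 : Ideal.span (F '' {j | j < 1}) • (⊤ : Submodule R R) = Ideal.span {F 0} := by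
    have : {j : Fin 2 | j < 1} = {0} := by ext j; fin_cases j <;> simp
    rw [this, Set.image_singleton, smul_eq_mul, Ideal.mul_top]
  have h0 := hreg 0
  have h1 := hreg 1
  rw [e0] at h0
  rw [e1] at h1
  have hm : Ideal.span {F 0, F 1} ≤ maximalIdeal R := by
    rw [Ideal.span_le]
    rintro x (rfl | rfl) <;> exact hF _
  refine ⟨F 0, F 1, hF 0, hF 1, ⟨fun x hx => by simpa using h0 x (by simpa using hx), ?_⟩, ?_⟩
  · intro x y hxy
    have := h1 x (by rw [smul_eq_mul, hxy]; exact Ideal.mem_span_singleton.2 ⟨y, rfl⟩)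
    exact Ideal.mem_span_singleton.1 this
  · have hlist : Ideal.ofList [F 0, F 1] = Ideal.span {F 0, F 1} := by
      rw [Ideal.ofList]; congr 1; ext x; simp
    have hR : RingTheory.Sequence.IsRegular R [F 0, F 1] := by
      refine ⟨⟨fun i hi => ?_⟩, ?_⟩
      · rw [isSMulRegular_quotient_iff_mem_of_smul_mem]
        have hi2 : i = 0 ∨ i = 1 := by simp at hi; omega
        rcases hi2 with rfl | rfl
        · intro x hx
          have := h0 x (by simpa using hx)
          simpa using this
        · intro x hx
          have := h1 x (by simpa [Ideal.ofList] using hx)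
          simpa [Ideal.ofList] using this
      · rw [hlist, smul_eq_mul, Ideal.mul_top]
        exact fun h => (Ideal.IsPrime.ne_top inferInstance) (top_le_iff.1 (h.le.trans hm))
    have hd := ringKrullDim_add_length_eq_ringKrullDim_of_isRegular [F 0, F 1] hR
    rw [hdim, hlist, List.length_cons, List.length_cons, List.length_nil] at hd
    have hd0 : ringKrullDim (R ⧸ Ideal.span {F 0, F 1}) ≤ 0 := by
      generalize ringKrullDim (R ⧸ Ideal.span {F 0, F 1}) = d at hd
      cases d with
      | bot => simp
      | coe d =>
        cases d with
        | top =>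
          have h2 : (⊤ : ℕ∞) + 2 = 2 := WithBot.coe_injective hd
          rw [top_add] at h2
          exact absurd h2 (by simp)
        | coe d =>
          have h2 : (d : ℕ∞) + 2 = 2 := WithBot.coe_injective hd
          have : d + 2 = 2 := by exact_mod_cast h2
          have : d = 0 := by omega
          subst this; simp
    have hd1 : Ring.KrullDimLE 0 (R ⧸ Ideal.span {F 0, F 1}) :=
      Ring.krullDimLE_iff.2 (by simpa using hd0)
    refine big_of_radical ?_
    rw [Ideal.radical_eq_sInf]
    refine le_sInf fun P ⟨hP, hPp⟩ => ?_
    have h2 : (P.map (Ideal.Quotient.mk (Ideal.span {F 0, F 1}))).IsPrime :=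
      Ideal.map_isPrime_of_surjective Ideal.Quotient.mk_surjective (by simpa using hP)
    have h3 := Ring.krullDimLE_zero_iff.1 hd1 _ h2
    have h4 := Ideal.comap_isMaximal_of_surjective _ Ideal.Quotient.mk_surjective (K := _) (H := h3)
    rw [Ideal.comap_map_of_surjective _ Ideal.Quotient.mk_surjective, ← RingHom.ker_eq_comap_bot,
      Ideal.mk_ker, sup_eq_left.2 hP] at h4
    rw [IsLocalRing.eq_maximalIdeal h4]

theorem big_span_pow {f g : R} (h : Big (Ideal.span {f, g})) (n : ℕ) :
    Big (Ideal.span {f ^ n, g ^ n}) := by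
  obtain ⟨t, ht⟩ := h
  refine big_of_radical ?_
  have h1 : Ideal.span {f, g} ≤ (Ideal.span {f ^ n, g ^ n}).radical := by
    rw [Ideal.span_le]
    rintro x (rfl | rfl)
    · exact ⟨n, Ideal.subset_span (by simp)⟩
    · exact ⟨n, Ideal.subset_span (by simp)⟩
  intro x hx
  have := h1 (ht (Ideal.pow_mem_pow hx t))
  exact (Ideal.radical_isRadical _) ⟨t, this⟩

/-- The normal Hilbert polynomial of `Iᵏ`, doubled: replacing `I` by `Iᵏ` leaves its constant term
unchanged. -/
theorem quad {l : ℕ → ℤ} {e0 e1 e2 : ℤ} {N k : ℕ} (hk : 0 < k)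
    (h : ∀ n, N ≤ n → l n = e0 * ((n + 1).choose 2 : ℕ) - e1 * n + e2) (n : ℕ) (hn : N ≤ n) :
    2 * l (k * n) = e0 * k ^ 2 * n ^ 2 + (e0 * k - 2 * e1 * k) * n + 2 * e2 := by
  have h1 : ∀ m : ℕ, 2 * (m + 1).choose 2 = (m + 1) * m := by
    intro m
    induction m with
    | zero => rfl
    | succ m ih => rw [Nat.choose_succ_succ' (m + 1) 1, Nat.choose_one_right, mul_add, ih]; ring
  have h2 : (2 * ((k * n + 1).choose 2 : ℕ) : ℤ) = (k * n + 1) * (k * n) := by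
    exact_mod_cast h1 (k * n)
  rw [h (k * n) (by nlinarith)]
  push_cast
  linear_combination e0 * h2

/-- One of the two inequalities: `ē₂(I) ≤ ē₂(IJ)`, applied below to `(I, J)` and to `(J, I)`. -/
theorem core (hur : AnalyticallyUnramified R) {f g : R} (hf : f ∈ maximalIdeal R)
    (hg : g ∈ maximalIdeal R) (hfg : WReg f g) (hbig : Big (Ideal.span {f, g}))
    {I J : Ideal R} (hI : Big I) (hIm : I ≤ maximalIdeal R) (hJ : Big J)
    (hJm : J ≤ maximalIdeal R) {e0I e1I e2I e0J e1J e2J e0 e1 e2 : ℤ} {N : ℕ}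
    (hPI : ∀ n, N ≤ n → lz (intCl (I ^ n)) = e0I * ((n + 1).choose 2 : ℕ) - e1I * n + e2I)
    (hPJ : ∀ n, N ≤ n → lz (intCl (J ^ n)) = e0J * ((n + 1).choose 2 : ℕ) - e1J * n + e2J)
    (hP : ∀ n, N ≤ n → lz (intCl ((I * J) ^ n)) = e0 * ((n + 1).choose 2 : ℕ) - e1 * n + e2) :
    e2I ≤ e2 := by
  have hIJ := hI.mul hJ
  have hIJm : I * J ≤ maximalIdeal R := Ideal.mul_le_left.trans hIm
  obtain ⟨t, ht⟩ := hIJ.mul hIJ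
  have hM : Ideal.span {f ^ t, g ^ t} ≤ (I * J) * (I * J) := by
    refine le_trans ?_ ht
    rw [Ideal.span_le]
    rintro x (rfl | rfl)
    · exact Ideal.pow_mem_pow hf t
    · exact Ideal.pow_mem_pow hg t
  have hMm := hM.trans (Ideal.mul_le_left.trans hIJm)
  have huv : RegPair (f ^ t) (g ^ t) := regPair_of_big hfg hf hg
    (hMm (Ideal.subset_span (by simp))) (hMm (Ideal.subset_span (by simp))) (big_span_pow hbig t)
  have ex : ∀ A B : Ideal R, A ≤ maximalIdeal R → (I * J) * (I * J) ≤ A * B →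
      ∃ k, 0 < k ∧ ∀ K p, 0 < p → K = k * p → ∃ a b, JR (A ^ K) (B ^ K) a b := by
    intro A B hA hAB
    obtain ⟨k, hk, a, b, hab⟩ := exists_jr hA huv (big_span_pow hbig t) (hM.trans hAB)
    refine ⟨k, hk, fun K p hp hK => ⟨a ^ p, b ^ p, ?_⟩⟩
    rw [hK, pow_mul, pow_mul]
    exact hab.powers hp
  obtain ⟨k1, hk1, H1⟩ := ex I I hIm (Ideal.mul_mono Ideal.mul_le_left Ideal.mul_le_left)
  obtain ⟨k2, hk2, H2⟩ := ex J J hJm (Ideal.mul_mono Ideal.mul_le_right Ideal.mul_le_right)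
  obtain ⟨k3, hk3, H3⟩ := ex I J hIm (Ideal.mul_mono Ideal.mul_le_left Ideal.mul_le_right)
  obtain ⟨k4, hk4, H4⟩ := ex (I * J) (I * J) hIJm le_rfl
  obtain ⟨k, hk⟩ : ∃ k, k = k1 * k2 * k3 * k4 := ⟨_, rfl⟩
  have hk0 : 0 < k := by rw [hk]; positivity
  obtain ⟨a, a', hA⟩ := H1 k (k2 * k3 * k4) (by positivity) (by rw [hk]; ring)
  obtain ⟨b, b', hB⟩ := H2 k (k1 * k3 * k4) (by positivity) (by rw [hk]; ring)
  obtain ⟨c, c', hC⟩ := H3 k (k1 * k2 * k4) (by positivity) (by rw [hk]; ring)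
  obtain ⟨d, d', hD⟩ := H4 k (k1 * k2 * k3) (by positivity) (by rw [hk]; ring)
  have hXm : ∀ {A : Ideal R}, A ≤ maximalIdeal R → A ^ k ≤ maximalIdeal R := fun h =>
    (Ideal.pow_le_self hk0.ne').trans h
  have reg : ∀ {A B : Ideal R} {x y : R}, Big A → Big B → A ≤ maximalIdeal R →
      B ≤ maximalIdeal R → JR (A ^ k) (B ^ k) x y → RegPair x y := fun hA hB hAm hBm h =>
    regPair_of_big hfg hf hg (hXm hAm h.1) (hXm hBm h.2.1) (h.big (hA.pow k) (hB.pow k))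
  have rA := reg hI hI hIm hIm hA
  have rB := reg hJ hJ hJm hJm hB
  have rC := reg hI hJ hIm hJm hC
  have rD := reg hIJ hIJ hIJm hIJm hD
  have bD := hD.big (hIJ.pow k) (hIJ.pow k)
  have qI := quad hk0 hPI
  have qJ := quad hk0 hPJ
  have qE := quad hk0 hP
  simp only [pow_mul, mul_pow] at qI qJ qE
  have hX := hI.pow k
  have hY := hJ.pow k
  rw [mul_pow] at hD
  have hZm := hXm hIJm
  rw [mul_pow] at hZm
  generalize I ^ k = X at *
  generalize J ^ k = Y at *
  have hXY : ∀ r s, Big (X ^ r * Y ^ s) := fun r s => (hX.pow r).mul (hY.pow s)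
  -- the diagonal: comparison of the normal and ordinary filtrations of `X * Y`
  have hEge : lz (Ideal.span {a, a'}) + lz (Ideal.span {b, b'}) + 2 * lz (Ideal.span {c, c'}) ≤
      e0 * k ^ 2 := by
    obtain ⟨N1, hN1⟩ := diag_lower hX hY hA rA hB rB hC rC
    have hQZ : Ideal.span {d, d'} ≤ X * Y := by
      rw [Ideal.span_le]
      rintro x (rfl | rfl)
      · exact hD.1
      · exact hD.2.1
    obtain ⟨m, hm⟩ := hD.2.2
    obtain ⟨n0, hn0⟩ := rD.intCl_le hur bD (hQZ.trans hZm) (L := X * Y) (N := 2 * m + 1) (by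
      have e : Ideal.span {d} * (X * Y) ⊔ Ideal.span {d'} * (X * Y) =
          Ideal.span {d, d'} * (X * Y) := by
        rw [← Ideal.sup_mul, ← Ideal.span_union, Set.singleton_union]
      rw [e] at hm
      calc (X * Y) ^ (2 * m + 1 + 1) = (X * Y * (X * Y)) ^ (m + 1) := by ring
        _ ≤ _ := hm
        _ = _ := by ring)
    refine diag_growth (fun n => lz (X ^ n * Y ^ n)) (fun n => lz (intCl (X ^ n * Y ^ n))) _ _ _ _
      (max N N1) n0 (fun n hn => hN1 n (le_of_max_le_right hn))
      (fun n hn => qE n (le_of_max_le_left hn)) (fun n => ?_)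
    refine lz_anti ((hXY _ _).mono (le_intCl _)) ?_
    rw [← mul_pow, ← mul_pow]
    exact (hn0 n).trans (Ideal.pow_right_mono hQZ n)
  refine zlemma (fun r s => lz (intCl (X ^ r * Y ^ s))) _ _ _ _ _ _ _ _ _ e2I e2J e2 N
    (fun r s => ?_) (fun r s => ?_) (fun r s => ?_)
    (fun n hn => by simpa using qI n hn) (fun n hn => by simpa using qJ n hn)
    (fun n hn => qE n hn) hEge
  · have := upper hf hfg.1 hX hX (hXY r s) hA rA
    rw [show X * X * (X ^ r * Y ^ s) = X ^ (r + 2) * Y ^ s by ring,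
      show X * (X ^ r * Y ^ s) = X ^ (r + 1) * Y ^ s by ring] at this
    linarith
  · have := upper hf hfg.1 hY hY (hXY r s) hB rB
    rw [show Y * Y * (X ^ r * Y ^ s) = X ^ r * Y ^ (s + 2) by ring,
      show Y * (X ^ r * Y ^ s) = X ^ r * Y ^ (s + 1) by ring] at this
    linarith
  · have := upper hf hfg.1 hX hY (hXY r s) hC rC
    rw [show X * Y * (X ^ r * Y ^ s) = X ^ (r + 1) * Y ^ (s + 1) by ring,
      show X * (X ^ r * Y ^ s) = X ^ (r + 1) * Y ^ s by ring,
      show Y * (X ^ r * Y ^ s) = X ^ r * Y ^ (s + 1) by ring] at this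
    linarith

theorem lz_eq {K : Ideal R} {l : ℕ} (h : moduleLength R (R ⧸ K) = (l : WithBot ℕ∞)) :
    lz K = l := by
  rw [moduleLength, ← Module.coe_length] at h
  have h1 : len K = (l : ℕ∞) := by exact_mod_cast h
  rw [lz, h1]; simp

end cm
end E2

/-- Rees; Theorem 5.9.  Let `(R,𝔪)` be an analytically unramified
Cohen-Macaulay local ring of dimension `2` and `I, J` `𝔪`-primary ideals.  Then
`ē₂(IJ) ≥ max (ē₂(I), ē₂(J))`. -/
theorem e2_mul_ge_max
    {R : Type*} [CommRing R] [IsLocalRing R] [IsNoetherianRing R]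
    (hur : AnalyticallyUnramified R) (hCM : IsCMLocalRing R)
    (hdim : ringKrullDim R = 2)
    (I J : Ideal R) (hI : IsMPrimary I) (hJ : IsMPrimary J)
    -- normal Hilbert functions and coefficients of `I`, `J` and `IJ`
    (LI LJ LIJ : ℕ → ℕ)
    (hLI : ∀ n : ℕ, moduleLength R (R ⧸ intCl (I ^ n)) = (LI n : WithBot ℕ∞))
    (hLJ : ∀ n : ℕ, moduleLength R (R ⧸ intCl (J ^ n)) = (LJ n : WithBot ℕ∞))
    (hLIJ : ∀ n : ℕ, moduleLength R (R ⧸ intCl ((I * J) ^ n)) = (LIJ n : WithBot ℕ∞))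
    (e0I e1I e2I e0J e1J e2J e0IJ e1IJ e2IJ : ℤ)
    (hPI : ∃ N : ℕ, ∀ n : ℕ, N ≤ n →
      (LI n : ℤ) = e0I * ((n + 1).choose 2 : ℕ) - e1I * n + e2I)
    (hPJ : ∃ N : ℕ, ∀ n : ℕ, N ≤ n →
      (LJ n : ℤ) = e0J * ((n + 1).choose 2 : ℕ) - e1J * n + e2J)
    (hPIJ : ∃ N : ℕ, ∀ n : ℕ, N ≤ n →
      (LIJ n : ℤ) = e0IJ * ((n + 1).choose 2 : ℕ) - e1IJ * n + e2IJ) :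
    max e2I e2J ≤ e2IJ := by
  obtain ⟨f, g, hf, hg, hfg, hbig⟩ := E2.cm_pair hCM hdim
  obtain ⟨N1, h1⟩ := hPI
  obtain ⟨N2, h2⟩ := hPJ
  obtain ⟨N3, h3⟩ := hPIJ
  have bI := E2.big_of_radical hI.ge
  have bJ := E2.big_of_radical hJ.ge
  have mI : I ≤ IsLocalRing.maximalIdeal R := Ideal.le_radical.trans hI.le
  have mJ : J ≤ IsLocalRing.maximalIdeal R := Ideal.le_radical.trans hJ.le
  have pI : ∀ n, N1 + N2 + N3 ≤ n →
      E2.lz (intCl (I ^ n)) = e0I * ((n + 1).choose 2 : ℕ) - e1I * n + e2I := fun n hn => by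
    rw [E2.lz_eq (hLI n), h1 n (by omega)]
  have pJ : ∀ n, N1 + N2 + N3 ≤ n →
      E2.lz (intCl (J ^ n)) = e0J * ((n + 1).choose 2 : ℕ) - e1J * n + e2J := fun n hn => by
    rw [E2.lz_eq (hLJ n), h2 n (by omega)]
  have pIJ : ∀ n, N1 + N2 + N3 ≤ n →
      E2.lz (intCl ((I * J) ^ n)) = e0IJ * ((n + 1).choose 2 : ℕ) - e1IJ * n + e2IJ :=
    fun n hn => by rw [E2.lz_eq (hLIJ n), h3 n (by omega)]
  exact max_le (E2.core hur hf hg hfg hbig bI mI bJ mJ pI pJ pIJ)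
    (E2.core hur hf hg hfg hbig bJ mJ bI mI pJ pI (by simpa only [mul_comm J I] using pIJ))
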